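/- arXiv:1605.00818 — 3 statements merged into one kernel-verified Lean document; each statement's English description precedes it below -/
import Mathlib

section
/- For every odd integer k ≥ 11 and every integer t ≥ 1 with t ≠ 2, there exists a k-ARCS(2kt+1), i.e. an almost resolvable k-cycle system of order 2kt+1. -/
open SimpleGraph

/-- `F` is a `C_k`-factor of `H`: a spanning subgraph of `H` that is 2-regular
and each of whose connected components has exactly `k` vertices. -/
def IsCycleFactor {V : Type*} (H F : SimpleGraph V) (k : ℕ) : Prop :=
  F ≤ H ∧ (∀ v, (F.neighborSet v).ncard = 2) ∧
    ∀ v : V, {w | F.Reachable v w}.ncard = k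

/-- The family of graphs `F` partitions the edge set of `H`. -/
def IsDecomp {V ι : Type*} (H : SimpleGraph V) (F : ι → SimpleGraph V) : Prop :=
  (Pairwise fun i j => Disjoint (F i).edgeSet (F j).edgeSet) ∧
  ∀ e, e ∈ H.edgeSet ↔ ∃ i, e ∈ (F i).edgeSet

/-- `HW H m n α β`: the edge set of `H` can be partitioned into
`α` `C_m`-factors and `β` `C_n`-factors. -/
def HW {V : Type*} (H : SimpleGraph V) (m n α β : ℕ) : Prop :=
  ∃ F : Fin α ⊕ Fin β → SimpleGraph V,
    (∀ i, IsCycleFactor H (F (Sum.inl i)) m) ∧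
    (∀ j, IsCycleFactor H (F (Sum.inr j)) n) ∧
    IsDecomp H F

/-- `(α, β) ∈ HWP(v; m, n)` for odd `v`: `K_v` has a 2-factorization into
`α` `C_m`-factors and `β` `C_n`-factors. -/
def HWPodd (v m n α β : ℕ) : Prop := HW (⊤ : SimpleGraph (Fin v)) m n α β

/-- `F ≤ H` is a vertex-disjoint union of `c` cycles of length `k`:
2-regular on its support, every component has `k` vertices, and the support
has `k * c` vertices. -/
def IsCycleClass {V : Type*} (H F : SimpleGraph V) (k c : ℕ) : Prop :=
  F ≤ H ∧ (∀ v ∈ F.support, (F.neighborSet v).ncard = 2) ∧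
  (∀ v ∈ F.support, {w | F.Reachable v w}.ncard = k) ∧
  F.support.ncard = k * c

/-- An almost resolvable `k`-cycle system of order `v`: a partition of the
edges of `K_v` into `(v-1)/2` almost parallel classes (each a vertex-disjoint
union of `(v-1)/k` `k`-cycles) together with one half-parallel class
(a vertex-disjoint union of `(v-1)/(2k)` `k`-cycles). -/
def IsARCS (k v : ℕ) : Prop :=
  ∃ F : Fin ((v - 1) / 2) ⊕ Unit → SimpleGraph (Fin v),
    (∀ i, IsCycleClass ⊤ (F (Sum.inl i)) k ((v - 1) / k)) ∧
    (∀ j, IsCycleClass ⊤ (F (Sum.inr j)) k ((v - 1) / (2 * k))) ∧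
    IsDecomp (⊤ : SimpleGraph (Fin v)) F

/-- The lexicographic product `C_m[n]` of the cycle `C_m` with the empty graph
on `n` vertices, on vertex set `ZMod m × ZMod n`. -/
def lexCycle (m n : ℕ) : SimpleGraph (ZMod m × ZMod n) :=
  SimpleGraph.fromRel (fun a b => a.1 - b.1 = 1)

/-- The Cayley graph of an additive group with connection set `S`. -/
def cayley {Γ : Type*} [AddGroup Γ] (S : Set Γ) : SimpleGraph Γ :=
  SimpleGraph.fromRel (fun a b => a - b ∈ S)


open Function

/-- `f` is a union of directed `k`-cycles on `S` and the identity off `S`. -/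
def Cl {V : Type*} (k : ℕ) (S : Set V) (f : V → V) : Prop :=
  (∀ x ∈ S, minimalPeriod f x = k) ∧ ∀ x, x ∉ S → f x = x

theorem mp_eq {α β : Type*} {f : α → α} {g : β → β} {x : α} {y : β}
    (h : ∀ n, f^[n] x = x ↔ g^[n] y = y) : minimalPeriod f x = minimalPeriod g y :=
  minimalPeriod_eq_minimalPeriod_iff.2 h

theorem mp_semi {α β : Type*} {f : α → α} {g : β → β} {e : β → α} (he : Injective e)
    (h : ∀ y, f (e y) = e (g y)) (y : β) : minimalPeriod f (e y) = minimalPeriod g y := by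
  apply mp_eq
  intro n
  have : f^[n] (e y) = e (g^[n] y) := by
    induction n generalizing y with
    | zero => rfl
    | succ n ih => simp only [iterate_succ, comp_apply, h, ih]
  rw [this]
  exact he.eq_iff

theorem mp_glue {α ι : Type*} (b : α → ι) (g : ι → α → α)
    (hb : ∀ x, b (g (b x) x) = b x) (x : α) :
    minimalPeriod (fun x => g (b x) x) x = minimalPeriod (g (b x)) x := by
  apply mp_eq
  intro n
  have : ∀ n, (fun x => g (b x) x)^[n] x = (g (b x))^[n] x ∧
      b ((fun x => g (b x) x)^[n] x) = b x := by
    intro n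
    induction n with
    | zero => exact ⟨rfl, rfl⟩
    | succ n ih =>
      rw [iterate_succ_apply', iterate_succ_apply', ← ih.1]
      refine ⟨?_, ?_⟩
      · simp only [ih.2]
      · rw [← ih.2]; simp only [hb]
  rw [(this n).1]

theorem Cl.conj {V W : Type*} {k : ℕ} {S : Set V} {f : V → V} (h : Cl k S f) (e : V ≃ W) :
    Cl k {w | e.symm w ∈ S} (fun w => e (f (e.symm w))) := by
  refine ⟨fun w hw => ?_, fun w hw => ?_⟩
  · have := mp_semi (f := fun w => e (f (e.symm w))) (g := f) e.injective (by simp) (e.symm w)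
    rw [← h.1 _ hw, ← this, e.apply_symm_apply]
  · simp only; rw [h.2 _ hw]; simp

def gr {V : Type*} (f : V → V) : SimpleGraph V := SimpleGraph.fromRel (fun x y => f x = y)

theorem gr_adj {V : Type*} (f : V → V) (x y : V) :
    (gr f).Adj x y ↔ x ≠ y ∧ (f x = y ∨ f y = x) := SimpleGraph.fromRel_adj _ _ _

section
variable {V : Type*} {k : ℕ} {S : Set V} {f : V → V}

theorem Cl.ne (h : Cl k S f) (hk : 3 ≤ k) {x : V} (hx : x ∈ S) : f x ≠ x := by
  intro e
  have h1 := h.1 x hx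
  have : minimalPeriod f x ∣ 1 := IsPeriodicPt.minimalPeriod_dvd (by simpa [IsPeriodicPt, IsFixedPt])
  rw [h1] at this
  have := Nat.le_of_dvd one_pos this
  omega

theorem Cl.per (h : Cl k S f) {x : V} (hx : x ∈ S) : f^[k] x = x := by
  have := isPeriodicPt_minimalPeriod f x
  rwa [h.1 x hx] at this

theorem Cl.mem (h : Cl k S f) (hk : 3 ≤ k) {x : V} (hx : x ∈ S) : f x ∈ S := by
  by_contra hn
  have h2 := h.2 _ hn
  have : ∀ n, f^[n+1] x = f x := by
    intro n
    induction n with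
    | zero => rfl
    | succ n ih => rw [iterate_succ_apply', ih, h2]
  have h3 := this (k-1)
  rw [Nat.sub_add_cancel (by omega), h.per hx] at h3
  exact h.ne hk hx h3.symm

theorem Cl.mem_it (h : Cl k S f) (hk : 3 ≤ k) {x : V} (hx : x ∈ S) (n : ℕ) : f^[n] x ∈ S := by
  induction n with
  | zero => exact hx
  | succ n ih => rw [iterate_succ_apply']; exact h.mem hk ih

theorem Cl.adj (h : Cl k S f) (hk : 3 ≤ k) {x y : V} :
    (gr f).Adj x y ↔ x ∈ S ∧ (y = f x ∨ y = f^[k-1] x) := by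
  rw [gr_adj]
  have key : ∀ {x}, x ∈ S → f (f^[k-1] x) = x := by
    intro x hx
    rw [← iterate_succ_apply' f, Nat.succ_eq_add_one, Nat.sub_add_cancel (by omega), h.per hx]
  constructor
  · rintro ⟨hne, rfl | h1⟩
    · refine ⟨by_contra fun hn => hne (h.2 _ hn).symm, Or.inl rfl⟩
    · have hy : y ∈ S := by_contra fun hn => hne (by rw [← h1, h.2 _ hn])
      subst h1
      refine ⟨h.mem hk hy, Or.inr ?_⟩
      rw [← iterate_succ_apply, Nat.succ_eq_add_one, Nat.sub_add_cancel (by omega), h.per hy]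
  · rintro ⟨hx, rfl | rfl⟩
    · exact ⟨(h.ne hk hx).symm, Or.inl rfl⟩
    · refine ⟨fun e => ?_, Or.inr (key hx)⟩
      have := key hx
      rw [← e] at this
      exact h.ne hk hx this

theorem Cl.ne2 (h : Cl k S f) (hk : 3 ≤ k) {x : V} (hx : x ∈ S) : f x ≠ f^[k-1] x := by
  intro e
  have := iterate_injOn_Iio_minimalPeriod (f := f) (x := x)
  rw [h.1 x hx] at this
  have := @this 1 (by simp; omega) (k-1) (by simp; omega) e
  omega

theorem Cl.nbr (h : Cl k S f) (hk : 3 ≤ k) {x : V} (hx : x ∈ S) :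
    (gr f).neighborSet x = {f x, f^[k-1] x} := by
  ext y
  simp [SimpleGraph.mem_neighborSet, h.adj hk, hx]

theorem Cl.nbr0 (h : Cl k S f) (hk : 3 ≤ k) {x : V} (hx : x ∉ S) :
    (gr f).neighborSet x = ∅ := by
  ext y
  simp [SimpleGraph.mem_neighborSet, h.adj hk, hx]

theorem Cl.supp (h : Cl k S f) (hk : 3 ≤ k) : (gr f).support = S := by
  ext x
  rw [SimpleGraph.mem_support]
  constructor
  · rintro ⟨y, hy⟩; exact ((h.adj hk).1 hy).1
  · intro hx; exact ⟨f x, (h.adj hk).2 ⟨hx, Or.inl rfl⟩⟩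

theorem Cl.isCycleClass (h : Cl k S f) (hk : 3 ≤ k) {c : ℕ} (hc : S.ncard = k * c) :
    IsCycleClass ⊤ (gr f) k c := by
  refine ⟨le_top, ?_, ?_, ?_⟩
  · intro x hx
    rw [h.supp hk] at hx
    rw [h.nbr hk hx, Set.ncard_pair (h.ne2 hk hx)]
  · intro x hx
    rw [h.supp hk] at hx
    have e : {w | (gr f).Reachable x w} = (fun n => f^[n] x) '' Set.Iio k := by
      ext w
      simp only [Set.mem_ofPred_eq, Set.mem_image, Set.mem_Iio]
      constructor
      · rintro ⟨p⟩
        have : ∀ u w (p : (gr f).Walk u w) , (∃ n, f^[n] x = u) → ∃ n, f^[n] x = w := by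
          intro u w p
          induction p with
          | nil => exact id
          | cons ha p ih =>
            rintro ⟨n, rfl⟩
            apply ih
            rcases ((h.adj hk).1 ha).2 with h1 | h1
            · exact ⟨n+1, by rw [h1, iterate_succ_apply']⟩
            · exact ⟨k-1+n, by rw [h1, iterate_add_apply]⟩
        obtain ⟨n, hn⟩ := this x w p ⟨0, rfl⟩
        refine ⟨n % k, Nat.mod_lt _ (by omega), ?_⟩
        rw [← hn]
        have := iterate_mod_minimalPeriod_eq (f := f) (x := x) (n := n)
        rwa [h.1 x hx] at this
      · rintro ⟨n, -, rfl⟩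
        induction n with
        | zero => exact SimpleGraph.Reachable.refl _
        | succ n ih =>
          refine ih.trans (SimpleGraph.Adj.reachable ?_)
          rw [iterate_succ_apply']
          exact (h.adj hk).2 ⟨h.mem_it hk hx n, Or.inl rfl⟩
    rw [e, Set.InjOn.ncard_image]
    · rw [← Finset.coe_Iio, Set.ncard_coe_finset]; simp
    · have := iterate_injOn_Iio_minimalPeriod (f := f) (x := x)
      rwa [h.1 x hx] at this
  · rw [h.supp hk, hc]

theorem Cl.edges [Finite V] (h : Cl k S f) (hk : 3 ≤ k) :
    (gr f).edgeSet.ncard = S.ncard := by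
  classical
  have := Fintype.ofFinite V
  have h1 := SimpleGraph.sum_degrees_eq_twice_card_edges (gr f)
  have h2 : ∀ x, (gr f).degree x = if x ∈ S then 2 else 0 := by
    intro x
    rw [← SimpleGraph.card_neighborSet_eq_degree, ← Nat.card_eq_fintype_card, Nat.card_coe_set_eq]
    split_ifs with hx
    · rw [h.nbr hk hx, Set.ncard_pair (h.ne2 hk hx)]
    · rw [h.nbr0 hk hx, Set.ncard_empty]
  simp only [h2] at h1
  rw [Finset.sum_ite, Finset.sum_const_zero, add_zero, Finset.sum_const, smul_eq_mul] at h1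
  have h3 : (gr f).edgeSet.ncard = (gr f).edgeFinset.card := by
    rw [← SimpleGraph.coe_edgeFinset, Set.ncard_coe_finset]
  have h4 : S.ncard = (Finset.univ.filter (· ∈ S)).card := by
    rw [← Set.ncard_coe_finset]; simp
  omega

end

theorem crit0 {k t : ℕ} (hk : 3 ≤ k) {I : Type} [Fintype I] (hI : Fintype.card I = k * t)
    (S : I → Set (Fin (2*k*t+1))) (F : I → Fin (2*k*t+1) → Fin (2*k*t+1))
    (hF : ∀ i, Cl k (S i) (F i)) (hS : ∀ i, (S i).ncard = 2*k*t)
    (H : Fin (2*k*t+1) → Fin (2*k*t+1)) (SH : Set (Fin (2*k*t+1)))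
    (hH : Cl k SH H) (hSH : SH.ncard = k*t)
    (cov : ∀ a b, a ≠ b → (∃ i, F i a = b ∨ F i b = a) ∨ (H a = b ∨ H b = a)) :
    IsARCS k (2*k*t+1) := by
  classical
  have e1 : (2*k*t+1-1)/2 = k*t := by rw [Nat.add_sub_cancel, mul_assoc]; simp
  have e2 : (2*k*t+1-1)/k = 2*t := by
    rw [Nat.add_sub_cancel, show 2*k*t = k*(2*t) by ring, Nat.mul_div_cancel_left _ (by omega)]
  have e3 : (2*k*t+1-1)/(2*k) = t := by
    rw [Nat.add_sub_cancel, Nat.mul_div_cancel_left _ (by omega)]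
  rw [IsARCS, e1, e2, e3]
  let e : Fin (k*t) ≃ I := (Fintype.equivFinOfCardEq hI).symm
  let G : Fin (k*t) ⊕ Unit → SimpleGraph (Fin (2*k*t+1)) :=
    Sum.elim (fun i => gr (F (e i))) (fun _ => gr H)
  have hcov : ∀ x, x ∈ (⊤ : SimpleGraph (Fin (2*k*t+1))).edgeSet ↔ ∃ i, x ∈ (G i).edgeSet := by
    intro x
    constructor
    · induction x with
      | _ a b =>
      intro h
      have hab : a ≠ b := by simpa using h
      rcases cov a b hab with ⟨i, hi⟩ | hi
      · refine ⟨Sum.inl (e.symm i), ?_⟩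
        simp only [G, Sum.elim_inl, e.apply_symm_apply, SimpleGraph.mem_edgeSet, gr_adj]
        exact ⟨hab, hi⟩
      · refine ⟨Sum.inr (), ?_⟩
        simp only [G, Sum.elim_inr, SimpleGraph.mem_edgeSet, gr_adj]
        exact ⟨hab, hi⟩
    · rintro ⟨i, hi⟩
      exact SimpleGraph.edgeSet_mono le_top hi
  refine ⟨G, fun i => (hF _).isCycleClass hk (by rw [hS]; ring),
    fun _ => hH.isCycleClass hk hSH, ?_, hcov⟩
  let φ : (Σ i, (G i).edgeSet) → (⊤ : SimpleGraph (Fin (2*k*t+1))).edgeSet :=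
    fun p => ⟨p.2.1, (hcov _).2 ⟨p.1, p.2.2⟩⟩
  have hs : Surjective φ := by
    rintro ⟨x, hx⟩
    obtain ⟨i, hi⟩ := (hcov x).1 hx
    exact ⟨⟨i, x, hi⟩, rfl⟩
  have hcard : Nat.card (Σ i, (G i).edgeSet) =
      Nat.card (⊤ : SimpleGraph (Fin (2*k*t+1))).edgeSet := by
    rw [Nat.card_sigma, Fintype.sum_sum_type]
    simp only [Nat.card_coe_set_eq, G, Sum.elim_inl, Sum.elim_inr, (hF _).edges hk, hH.edges hk, hS, hSH]
    have : (⊤ : SimpleGraph (Fin (2*k*t+1))).edgeSet.ncard = (2*k*t+1).choose 2 := by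
      rw [← SimpleGraph.coe_edgeFinset, Set.ncard_coe_finset, SimpleGraph.card_edgeFinset_top_eq_card_choose_two]
      simp
    rw [this, Nat.choose_two_right, Nat.add_sub_cancel,
      show (2*k*t+1)*(2*k*t) = 2*((2*k*t+1)*(k*t)) by ring, Nat.mul_div_cancel_left _ two_pos]
    simp
    ring
  have hinj : Injective φ := by
    have := Fintype.ofFinite (Σ i, (G i).edgeSet)
    have := Fintype.ofFinite (⊤ : SimpleGraph (Fin (2*k*t+1))).edgeSet
    exact ((Fintype.bijective_iff_surjective_and_card φ).2
      ⟨hs, by simpa only [Nat.card_eq_fintype_card] using hcard⟩).1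
  intro i j hij
  rw [Set.disjoint_left]
  intro x hi hj
  have := @hinj ⟨i, x, hi⟩ ⟨j, x, hj⟩ rfl
  exact hij (congrArg Sigma.fst this)

theorem crit {k t : ℕ} (hk : 3 ≤ k) {V : Type} [Fintype V] (hV : Fintype.card V = 2*k*t+1)
    {I : Type} [Fintype I] (hI : Fintype.card I = k * t)
    (S : I → Set V) (F : I → V → V)
    (hF : ∀ i, Cl k (S i) (F i)) (hS : ∀ i, (S i).ncard = 2*k*t)
    (H : V → V) (SH : Set V)
    (hH : Cl k SH H) (hSH : SH.ncard = k*t)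
    (cov : ∀ a b, a ≠ b → (∃ i, F i a = b ∨ F i b = a) ∨ (H a = b ∨ H b = a)) :
    IsARCS k (2*k*t+1) := by
  let e := Fintype.equivFinOfCardEq hV
  have hn : ∀ S : Set V, {w | e.symm w ∈ S}.ncard = S.ncard := by
    intro S
    exact Set.ncard_preimage_of_injective_subset_range e.symm.injective (by simp)
  refine crit0 hk hI _ _ (fun i => (hF i).conj e) (fun i => by rw [hn, hS]) _ _ (hH.conj e)
    (by rw [hn, hSH]) ?_
  intro a b hab
  rcases cov (e.symm a) (e.symm b) (by simpa using hab) with ⟨i, hi⟩ | hi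
  · refine Or.inl ⟨i, ?_⟩
    rcases hi with hi | hi <;> simp [hi]
  · refine Or.inr ?_
    rcases hi with hi | hi <;> simp [hi]


def CAdj {V : Type*} (l : List V) (u v : V) : Prop :=
  ∃ i, l[i]? = some u ∧ l[(i+1) % l.length]? = some v

theorem mp_formPerm {V : Type*} [DecidableEq V] (l : List V) (hn : l.Nodup) {x : V} (hx : x ∈ l) :
    minimalPeriod (l.formPerm) x = l.length := by
  obtain ⟨i, hi, rfl⟩ := List.getElem_of_mem hx
  have : ∀ n, (l.formPerm)^[n] l[i] = l[i] ↔ l.length ∣ n := by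
    intro n
    rw [← Equiv.Perm.coe_pow, List.formPerm_pow_apply_getElem l hn, hn.getElem_inj_iff]
    have h1 : i = i % l.length := (Nat.mod_eq_of_lt hi).symm
    constructor
    · intro h
      have h' : i + n ≡ i + 0 [MOD l.length] := by
        rw [Nat.ModEq, h, add_zero]; exact h1
      exact (Nat.modEq_zero_iff_dvd).1 (Nat.ModEq.add_left_cancel' i h')
    · rintro ⟨c, rfl⟩
      simp [Nat.mod_eq_of_lt hi]
  apply Nat.dvd_antisymm
  · exact IsPeriodicPt.minimalPeriod_dvd ((this _).2 dvd_rfl)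
  · exact (this _).1 (isPeriodicPt_minimalPeriod _ _)

theorem listClass {V : Type*} [DecidableEq V] {k : ℕ} (cs : List (List V))
    (hl : ∀ l ∈ cs, l.length = k) (S : Finset V) (hS : k * cs.length ≤ S.card)
    (hcov : ∀ x ∈ S, ∃ l ∈ cs, x ∈ l) :
    ∃ f : V → V, Cl k ↑S f ∧ ∀ l ∈ cs, ∀ u v, CAdj l u v → f u = v := by
  classical
  have hlen : cs.flatten.length = k * cs.length := by
    rw [List.length_flatten]
    rw [List.map_congr_left (g := fun _ => k) (fun l h => hl l h)]
    simp [mul_comm]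
  have hsub : S ⊆ cs.flatten.toFinset := by
    intro x hx
    obtain ⟨l, h1, h2⟩ := hcov x hx
    simp only [List.mem_toFinset, List.mem_flatten]
    exact ⟨l, h1, h2⟩
  have hle := List.toFinset_card_le cs.flatten
  have heq : S = cs.flatten.toFinset := Finset.eq_of_subset_of_card_le hsub (by omega)
  have hnd : cs.flatten.Nodup := by
    apply Multiset.coe_nodup.1
    apply Multiset.toFinset_card_eq_card_iff_nodup.1
    have : (↑cs.flatten : Multiset V).toFinset = cs.flatten.toFinset := rfl
    rw [this, ← heq, Multiset.coe_card]
    have := Finset.card_le_card hsub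
    omega
  rw [List.nodup_flatten] at hnd
  have huniq : ∀ l ∈ cs, ∀ l' ∈ cs, ∀ x, x ∈ l → x ∈ l' → l = l' := by
    intro l h l' h' x hx hx'
    by_contra hne
    have : Std.Symm (List.Disjoint (α := V)) := ⟨fun _ _ h => h.symm⟩
    have := hnd.2.forall h h' hne
    exact this hx hx'
  let b : V → List V := fun x => if h : ∃ l ∈ cs, x ∈ l then h.choose else []
  have hb1 : ∀ l ∈ cs, ∀ x ∈ l, b x = l := by
    intro l h x hx
    have hh : ∃ l ∈ cs, x ∈ l := ⟨l, h, hx⟩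
    simp only [b, dif_pos hh]
    exact huniq _ hh.choose_spec.1 _ h x hh.choose_spec.2 hx
  have hb2 : ∀ x, (¬ ∃ l ∈ cs, x ∈ l) → b x = [] := fun x h => by simp only [b, dif_neg h]
  have hb : ∀ x, b ((b x).formPerm x) = b x := by
    intro x
    by_cases h : ∃ l ∈ cs, x ∈ l
    · obtain ⟨l, h1, h2⟩ := h
      rw [hb1 l h1 x h2]
      exact hb1 l h1 _ (List.formPerm_apply_mem_of_mem h2)
    · rw [hb2 x h]; simp [hb2 x h]
  refine ⟨fun x => (b x).formPerm x, ⟨?_, ?_⟩, ?_⟩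
  · intro x hx
    obtain ⟨l, h1, h2⟩ := hcov x hx
    rw [mp_glue b (fun l => l.formPerm) hb, hb1 l h1 x h2, mp_formPerm l (hnd.1 l h1) h2, hl l h1]
  · intro x hx
    have : ¬ ∃ l ∈ cs, x ∈ l := by
      rw [heq] at hx
      simpa using hx
    simp [hb2 x this]
  · rintro l h u v ⟨i, hi, hi'⟩
    obtain ⟨h1, rfl⟩ := List.getElem?_eq_some_iff.1 hi
    obtain ⟨h2, rfl⟩ := List.getElem?_eq_some_iff.1 hi'
    simp only
    rw [hb1 l h _ (List.getElem_mem _), List.formPerm_apply_getElem l (hnd.1 l h)]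


/-! ### Symbolic cycles: all positions are linear forms `x + y q`. -/

abbrev Lf := ℤ × ℤ

def ev (q : ℕ) (a : Lf) : ℤ := a.1 + a.2 * q

theorem ev_add (q : ℕ) (a b : Lf) : ev q (a + b) = ev q a + ev q b := by simp [ev]; ring
theorem ev_sub (q : ℕ) (a b : Lf) : ev q (a - b) = ev q a - ev q b := by simp [ev]; ring
theorem ev_neg (q : ℕ) (a : Lf) : ev q (-a) = - ev q a := by simp [ev]; ring
theorem ev_one (q : ℕ) : ev q (1, 0) = 1 := by simp [ev]

/-- A piece of a cycle: a zigzag between two levels, or a single point. -/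
inductive Pc
  | z (la lb : ℕ) (a b : Lf) (s : Bool) (J : Lf)
  | p (l : ℕ) (a : Lf)

def sgn (s : Bool) : ℤ := if s then 1 else -1

def zl (la lb : ℕ) (s : ℤ) : ℤ → ℤ → ℕ → List (ℕ × ℤ)
  | _, _, 0 => []
  | a, b, J + 1 => (la, a) :: (lb, b) :: zl la lb s (a - s) (b + s) J

def Pc.list (q : ℕ) : Pc → List (ℕ × ℤ)
  | .z la lb a b s J => zl la lb (sgn s) (ev q a) (ev q b) (ev q J).toNat
  | .p l a => [(l, ev q a)]

def Pc.first : Pc → ℕ × Lf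
  | .z la _ a _ _ _ => (la, a)
  | .p l a => (l, a)

def Pc.last : Pc → ℕ × Lf
  | .z _ lb _ b s J => (lb, if s then b + J - (1, 0) else b - J + (1, 0))
  | .p l a => (l, a)

def Pc.ok : Pc → Bool
  | .z _ _ _ _ _ J => decide (0 ≤ J.2) && decide (1 ≤ J.1 + 2 * J.2)
  | .p _ _ => true

def Pc.len : Pc → Lf
  | .z _ _ _ _ _ J => J + J
  | .p _ _ => (1, 0)

def clist (q : ℕ) (c : List Pc) : List (ℕ × ℤ) := c.flatMap (Pc.list q)

theorem zl_length (la lb : ℕ) (s a b : ℤ) (J : ℕ) : (zl la lb s a b J).length = J + J := by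
  induction J generalizing a b with
  | zero => rfl
  | succ J ih => simp [zl, ih]; omega

theorem zl_last (la lb : ℕ) (s a b : ℤ) (J : ℕ) :
    ∃ l, zl la lb s a b (J+1) = l ++ [(lb, b + s * J)] := by
  induction J generalizing a b with
  | zero => exact ⟨[(la, a)], by simp [zl]⟩
  | succ J ih =>
    obtain ⟨l, hl⟩ := ih (a - s) (b + s)
    refine ⟨(la, a) :: (lb, b) :: l, ?_⟩
    rw [zl, hl]
    simp; ring

theorem zl_mem (la lb : ℕ) (s a b : ℤ) (J j : ℕ) (h : j < J) :
    (la, a - s * j) ∈ zl la lb s a b J ∧ (lb, b + s * j) ∈ zl la lb s a b J := by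
  induction J generalizing a b j with
  | zero => omega
  | succ J ih =>
    cases j with
    | zero => simp [zl]
    | succ j =>
      have := ih (a - s) (b + s) j (by omega)
      rw [show a - s - s * j = a - s * (j + 1 : ℕ) by push_cast; ring,
        show b + s + s * j = b + s * (j + 1 : ℕ) by push_cast; ring] at this
      simp only [zl, List.mem_cons]
      exact ⟨Or.inr (Or.inr this.1), Or.inr (Or.inr this.2)⟩

theorem zl_adj (la lb : ℕ) (s a b : ℤ) (J i : ℕ) (h : i + 1 < J + J) :
    ∃ X Y u v, zl la lb s a b J = X ++ u :: v :: Y ∧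
      ((u.1 = la ∧ v.1 = lb ∧ v.2 - u.2 = b - a + s * i) ∨
       (u.1 = lb ∧ v.1 = la ∧ u.2 - v.2 = b - a + s * i)) := by
  induction J generalizing a b i with
  | zero => omega
  | succ J ih =>
    match i with
    | 0 => exact ⟨[], _, (la, a), (lb, b), by rw [zl]; rfl, Or.inl ⟨rfl, rfl, by simp⟩⟩
    | 1 =>
      obtain ⟨J, rfl⟩ : ∃ J', J = J' + 1 := ⟨J - 1, by omega⟩
      exact ⟨[(la, a)], _, (lb, b), (la, a - s), by rw [zl, zl]; rfl,
        Or.inr ⟨rfl, rfl, by simp; ring⟩⟩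
    | i + 2 =>
      obtain ⟨X, Y, u, v, h1, h2⟩ := ih (a - s) (b + s) i (by omega)
      refine ⟨(la, a) :: (lb, b) :: X, Y, u, v, by rw [zl, h1]; rfl, ?_⟩
      rw [show b + s - (a - s) + s * i = b - a + s * (i + 2 : ℕ) by push_cast; ring] at h2
      exact h2

theorem Pc.ok_J {la lb a b s J} (h : (Pc.z la lb a b s J).ok = true) {q : ℕ} (hq : 2 ≤ q) :
    ∃ n : ℕ, ev q J = n + 1 := by
  simp only [Pc.ok, Bool.and_eq_true, decide_eq_true_eq] at h
  have : 1 ≤ ev q J := by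
    have hq' : (2 : ℤ) ≤ q := by exact_mod_cast hq
    simp only [ev]
    nlinarith [h.1, h.2]
  exact ⟨(ev q J - 1).toNat, by omega⟩

theorem Pc.list_first {p : Pc} (h : p.ok = true) {q : ℕ} (hq : 2 ≤ q) :
    ∃ l, p.list q = (p.first.1, ev q p.first.2) :: l := by
  cases p with
  | z la lb a b s J =>
    obtain ⟨n, hn⟩ := Pc.ok_J h hq
    have : (ev q J).toNat = n + 1 := by omega
    simp only [Pc.list, this, Pc.first, zl]
    exact ⟨_, rfl⟩
  | p l a => exact ⟨[], rfl⟩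

theorem Pc.list_last {p : Pc} (h : p.ok = true) {q : ℕ} (hq : 2 ≤ q) :
    ∃ l, p.list q = l ++ [(p.last.1, ev q p.last.2)] := by
  cases p with
  | z la lb a b s J =>
    obtain ⟨n, hn⟩ := Pc.ok_J h hq
    have : (ev q J).toNat = n + 1 := by omega
    simp only [Pc.list, this, Pc.last]
    obtain ⟨l, hl⟩ := zl_last la lb (sgn s) (ev q a) (ev q b) n
    refine ⟨l, ?_⟩
    rw [hl]
    cases s <;> simp [sgn, ev_add, ev_sub, ev_one, hn] <;> ring
  | p l a => exact ⟨[], rfl⟩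

theorem Pc.list_len {p : Pc} (h : p.ok = true) {q : ℕ} (hq : 2 ≤ q) :
    ((p.list q).length : ℤ) = ev q p.len := by
  cases p with
  | z la lb a b s J =>
    obtain ⟨n, hn⟩ := Pc.ok_J h hq
    simp only [Pc.list, Pc.len, zl_length, ev_add]
    omega
  | p l a => simp [Pc.list, Pc.len, ev]

/-- vertex intervals of a piece on level `l` -/
def Pc.vI (l : ℕ) : Pc → List (Lf × Lf)
  | .z la lb a b s J =>
    (if la = l then [(if s then a - J + (1, 0) else a, J)] else []) ++
    (if lb = l then [(if s then b else b - J + (1, 0), J)] else [])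
  | .p l' a => if l' = l then [(a, (1, 0))] else []

theorem Pc.vI_sound {l : ℕ} {p : Pc} {iv : Lf × Lf} (h : iv ∈ p.vI l) {q i : ℕ}
    (hi : (i : ℤ) < ev q iv.2) : (l, ev q iv.1 + i) ∈ p.list q := by
  cases p with
  | z la lb a b s J =>
    have key : ∀ x : ℕ, (x : ℤ) < ev q J →
      (la, ev q a - sgn s * x) ∈ Pc.list q (.z la lb a b s J) ∧
      (lb, ev q b + sgn s * x) ∈ Pc.list q (.z la lb a b s J) :=
      fun x hx => zl_mem la lb (sgn s) _ _ _ x (by omega)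
    simp only [Pc.vI, List.mem_append] at h
    obtain ⟨y, hy⟩ : ∃ y : ℤ, y = ev q J - 1 - i := ⟨_, rfl⟩
    cases s
    · simp only [sgn, Bool.false_eq_true, if_false] at key h
      rcases h with h | h
      · split_ifs at h with h1 <;> simp at h
        subst h1; subst h
        convert (key i hi).1 using 2
        ring
      · split_ifs at h with h1 <;> simp at h
        subst h1; subst h
        simp only at hi
        have hx : (y.toNat : ℤ) = y := by omega
        convert (key y.toNat (by omega)).2 using 2
        rw [hx, hy]
        simp only [ev_add, ev_sub, ev_one]; ring
    · simp only [sgn, if_true] at key h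
      rcases h with h | h
      · split_ifs at h with h1 <;> simp at h
        subst h1; subst h
        simp only at hi
        have hx : (y.toNat : ℤ) = y := by omega
        convert (key y.toNat (by omega)).1 using 2
        rw [hx, hy]
        simp only [ev_add, ev_sub, ev_one]; ring
      · split_ifs at h with h1 <;> simp at h
        subst h1; subst h
        convert (key i hi).2 using 2
        ring
  | p l' a =>
    simp only [Pc.vI] at h
    split_ifs at h with h1 <;> simp at h
    subst h1; subst h
    have : i = 0 := by simp [ev_one] at hi; omega
    subst this
    simp [Pc.list]

/-- An edge interval: levels `la`, `lb`, first difference, number of differences. -/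
abbrev EI := ℕ × ℕ × Lf × Lf

def Pc.eI : Pc → List EI
  | .z la lb a b s J => [(la, lb, if s then b - a else b - a - (J + J) + (2, 0), J + J - (1, 0))]
  | .p _ _ => []

def joins (p0 : Pc) : List Pc → List EI
  | [] => []
  | [p] => [(p.last.1, p0.first.1, p0.first.2 - p.last.2, (1, 0))]
  | p :: p' :: r => (p.last.1, p'.first.1, p'.first.2 - p.last.2, (1, 0)) :: joins p0 (p' :: r)

def ceI : List Pc → List EI
  | [] => []
  | p :: r => joins p (p :: r) ++ (p :: r).flatMap Pc.eI

def Ed {V : Type*} (L : List V) (u v : V) : Prop := CAdj L u v ∨ CAdj L v u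

theorem cadj_mid {V : Type*} (A B : List V) (u v : V) : CAdj (A ++ u :: v :: B) u v := by
  refine ⟨A.length, by simp, ?_⟩
  rw [Nat.mod_eq_of_lt (by simp)]
  simp

theorem cadj_wrap {V : Type*} {L A B : List V} {u v : V} (h1 : L = v :: A) (h2 : L = B ++ [u]) :
    CAdj L u v := by
  refine ⟨B.length, by rw [h2]; simp, ?_⟩
  have : B.length + 1 = L.length := by rw [h2]; simp
  rw [this, Nat.mod_self, h1]
  simp

def Edl (L : List (ℕ × ℤ)) (la lb : ℕ) (d : ℤ) : Prop :=
  ∃ u v, Ed L (la, u) (lb, v) ∧ v - u = d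

theorem joins_sound {q : ℕ} (hq : 2 ≤ q) (L : List (ℕ × ℤ)) (p0 : Pc) (A : List (ℕ × ℤ))
    (hA : L = (p0.first.1, ev q p0.first.2) :: A) (c : List Pc) (hc : ∀ p ∈ c, p.ok = true)
    (pre : List (ℕ × ℤ)) (hL : L = pre ++ clist q c) (e : EI) (he : e ∈ joins p0 c) (i : ℕ)
    (hi : (i : ℤ) < ev q e.2.2.2) : Edl L e.1 e.2.1 (ev q e.2.2.1 + i) := by
  induction c generalizing pre with
  | nil => simp [joins] at he
  | cons p r ih =>
    obtain ⟨lp, hlp⟩ := Pc.list_last (hc p (by simp)) hq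
    match r, ih with
    | [], _ =>
      simp only [joins, List.mem_singleton] at he
      subst he
      simp only [ev_one] at hi
      obtain rfl : i = 0 := by omega
      refine ⟨ev q p.last.2, ev q p0.first.2, Or.inl ?_, by simp [ev_sub]⟩
      refine cadj_wrap hA (B := pre ++ lp) ?_
      rw [hL]; simp [clist, hlp]
    | p' :: r, ih =>
      simp only [joins, List.mem_cons] at he
      rcases he with rfl | he
      · simp only [ev_one] at hi
        obtain rfl : i = 0 := by omega
        refine ⟨ev q p.last.2, ev q p'.first.2, Or.inl ?_, by simp [ev_sub]⟩
        obtain ⟨lf, hlf⟩ := Pc.list_first (hc p' (by simp)) hq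
        have : L = (pre ++ lp) ++ (p.last.1, ev q p.last.2) :: (p'.first.1, ev q p'.first.2) ::
            (lf ++ clist q r) := by
          rw [hL]; simp [clist, hlp, hlf]
        rw [this]
        exact cadj_mid _ _ _ _
      · exact ih (fun x hx => hc x (List.mem_cons_of_mem _ hx)) (pre ++ p.list q)
          (by rw [hL]; simp [clist]) (by exact he)

theorem eI_sound {q : ℕ} (p : Pc) (hp : p.ok = true) (hq : 2 ≤ q) (e : EI) (he : e ∈ p.eI) (i : ℕ)
    (hi : (i : ℤ) < ev q e.2.2.2) (A B : List (ℕ × ℤ)) :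
    Edl (A ++ p.list q ++ B) e.1 e.2.1 (ev q e.2.2.1 + i) := by
  cases p with
  | p l a => simp [Pc.eI] at he
  | z la lb a b s J =>
    obtain ⟨n, hn⟩ := Pc.ok_J hp hq
    simp only [Pc.eI, List.mem_singleton] at he
    subst he
    simp only [ev_add, ev_sub, ev_one] at hi
    have key : ∀ x : ℕ, (x : ℤ) + 1 < ev q J + ev q J →
        Edl (A ++ Pc.list q (.z la lb a b s J) ++ B) la lb (ev q b - ev q a + sgn s * x) := by
      intro x hx
      obtain ⟨X, Y, ⟨u1, u⟩, ⟨v1, v⟩, h1, h2⟩ := zl_adj la lb (sgn s) (ev q a) (ev q b) (ev q J).toNat x (by omega)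
      have h1' : A ++ Pc.list q (.z la lb a b s J) ++ B =
        (A ++ X) ++ (u1, u) :: (v1, v) :: (Y ++ B) := by
        simp only [Pc.list, h1]; simp
      rcases h2 with ⟨h2, h3, h4⟩ | ⟨h2, h3, h4⟩
      · simp only at h2 h3 h4; subst h2 h3
        exact ⟨u, v, Or.inl (by rw [h1']; exact cadj_mid _ _ _ _), h4⟩
      · simp only at h2 h3 h4; subst h2 h3
        exact ⟨v, u, Or.inr (by rw [h1']; exact cadj_mid _ _ _ _), h4⟩
    cases s with
    | true =>
      have := key i (by omega)
      simpa [sgn, ev_sub] using this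
    | false =>
      obtain ⟨x, hx⟩ : ∃ x : ℕ, (x : ℤ) = ev q J + ev q J - 2 - i :=
        ⟨(ev q J + ev q J - 2 - i).toNat, by omega⟩
      have := key x (by omega)
      rw [hx] at this
      convert this using 1
      simp [sgn, ev_sub, ev_add, show ev q (2, 0) = 2 by simp [ev]]
      ring

theorem ceI_sound {q : ℕ} (hq : 2 ≤ q) (c : List Pc) (hc : ∀ p ∈ c, p.ok = true)
    (e : EI) (he : e ∈ ceI c) (i : ℕ)
    (hi : (i : ℤ) < ev q e.2.2.2) : Edl (clist q c) e.1 e.2.1 (ev q e.2.2.1 + i) := by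
  match c with
  | [] => simp [ceI] at he
  | p :: r =>
    simp only [ceI, List.mem_append] at he
    rcases he with he | he
    · obtain ⟨lf, hlf⟩ := Pc.list_first (hc p (by simp)) hq
      exact joins_sound hq _ p (lf ++ clist q r) (by simp [clist, hlf]) (p :: r) hc [] rfl e he i hi
    · obtain ⟨x, hx, he⟩ := List.mem_flatMap.1 he
      obtain ⟨A, B, hAB⟩ := List.append_of_mem hx
      have := eI_sound x (hc x hx) hq e he i hi (clist q A) (clist q B)
      rw [hAB]
      simpa [clist] using this

/-- Difference intervals of the edges with a given key. -/
def kI (key : ℕ → ℕ → ℕ) (κ : ℕ) (D : List (List Pc)) : List (Lf × Lf) :=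
  (D.flatMap ceI).flatMap fun e =>
    (if key e.1 e.2.1 = κ then [e.2.2] else []) ++
    (if key e.2.1 e.1 = κ then [(-e.2.2.1 - e.2.2.2 + (1, 0), e.2.2.2)] else [])

def lvI (l : ℕ) (D : List (List Pc)) : List (Lf × Lf) := D.flatMap fun c => c.flatMap (Pc.vI l)

def okD (K : Lf) (D : List (List Pc)) : Bool :=
  D.all fun c => c.all Pc.ok && decide ((c.map Pc.len).sum = K)

theorem Edl.symm {L : List (ℕ × ℤ)} {la lb : ℕ} {d : ℤ} (h : Edl L la lb d) : Edl L lb la (-d) := by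
  obtain ⟨u, v, h, rfl⟩ := h
  exact ⟨v, u, h.symm, by ring⟩

theorem kI_sound {q : ℕ} (hq : 2 ≤ q) {K : Lf} {D : List (List Pc)} (hD : okD K D = true)
    {key : ℕ → ℕ → ℕ} {κ : ℕ} {iv : Lf × Lf} (h : iv ∈ kI key κ D) {i : ℕ}
    (hi : (i : ℤ) < ev q iv.2) :
    ∃ c ∈ D, ∃ la lb, key la lb = κ ∧ Edl (clist q c) la lb (ev q iv.1 + i) := by
  simp only [okD, List.all_eq_true, Bool.and_eq_true] at hD
  obtain ⟨e, he, h⟩ := List.mem_flatMap.1 h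
  obtain ⟨c, hc, he⟩ := List.mem_flatMap.1 he
  refine ⟨c, hc, ?_⟩
  rw [List.mem_append] at h
  rcases h with h | h
  · split_ifs at h with h1 <;> simp at h
    subst h
    exact ⟨_, _, h1, ceI_sound hq c (hD c hc).1 e he i hi⟩
  · split_ifs at h with h1 <;> simp at h
    subst h
    simp only at hi
    obtain ⟨x, hx⟩ : ∃ x : ℕ, (x : ℤ) = ev q e.2.2.2 - 1 - i := ⟨(ev q e.2.2.2 - 1 - i).toNat, by omega⟩
    refine ⟨_, _, h1, ?_⟩
    have := (ceI_sound hq c (hD c hc).1 e he x (by omega)).symm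
    convert this using 1
    simp only [ev_add, ev_sub, ev_neg, ev_one, hx]
    ring

theorem lvI_sound {q : ℕ} {D : List (List Pc)}
    {l : ℕ} {iv : Lf × Lf} (h : iv ∈ lvI l D) {i : ℕ} (hi : (i : ℤ) < ev q iv.2) :
    ∃ c ∈ D, (l, ev q iv.1 + i) ∈ clist q c := by
  obtain ⟨c, hc, h⟩ := List.mem_flatMap.1 h
  obtain ⟨p, hp, h⟩ := List.mem_flatMap.1 h
  exact ⟨c, hc, List.mem_flatMap.2 ⟨p, hp, Pc.vI_sound h hi⟩⟩

theorem okD_len {q : ℕ} (hq : 2 ≤ q) {K : Lf} {D : List (List Pc)} (hD : okD K D = true)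
    {c : List Pc} (hc : c ∈ D) : ((clist q c).length : ℤ) = ev q K := by
  simp only [okD, List.all_eq_true, Bool.and_eq_true, decide_eq_true_eq] at hD
  obtain ⟨h1, h2⟩ := hD c hc
  rw [← h2]
  clear h2 hc
  induction c with
  | nil => simp [clist, ev]
  | cons p r ih =>
    have := ih (fun x hx => h1 x (List.mem_cons_of_mem _ hx))
    have h3 := Pc.list_len (h1 p (by simp)) hq
    simp only [clist, List.flatMap_cons, List.length_append, List.map_cons, List.sum_cons, ev_add] at this ⊢
    push_cast
    rw [h3, this]

def emod (N a b : Lf) : Bool :=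
  let m := if N.2 = 0 then (a.1 - b.1) / N.1 else (a.2 - b.2) / N.2
  decide (a.1 - b.1 = m * N.1) && decide (a.2 - b.2 = m * N.2)

def chainGo (N : Lf) (ivs : List (Lf × Lf)) (tgt : Lf) : ℕ → Lf → Bool
  | 0, p => decide (p = tgt)
  | n + 1, p => if p = tgt then true else
    match ivs.find? (fun iv => emod N iv.1 p) with
    | none => false
    | some iv => chainGo N ivs tgt n (p + iv.2)

def chain (N : Lf) (ivs : List (Lf × Lf)) : Bool :=
  match ivs with
  | [] => false
  | iv :: r => chainGo N (iv :: r) (iv.1 + N) ((iv :: r).length + 1) iv.1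

def InI (n q : ℕ) (ivs : List (Lf × Lf)) (d : ZMod n) : Prop :=
  ∃ iv ∈ ivs, ∃ i : ℕ, (i : ℤ) < ev q iv.2 ∧ d = ((ev q iv.1 + i : ℤ) : ZMod n)

theorem emod_sound {N a b : Lf} (h : emod N a b = true) {q n : ℕ} (hn : (n : ℤ) = ev q N) :
    ((ev q a : ℤ) : ZMod n) = (ev q b : ℤ) := by
  simp only [emod, Bool.and_eq_true, decide_eq_true_eq] at h
  obtain ⟨h1, h2⟩ := h
  generalize (if N.2 = 0 then (a.1 - b.1) / N.1 else (a.2 - b.2) / N.2) = m at h1 h2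
  have : ev q a = ev q b + m * n := by
    rw [hn]; simp only [ev]
    linear_combination h1 + q * h2
  rw [this]; simp

theorem chainGo_sound {N : Lf} {ivs : List (Lf × Lf)} {tgt : Lf} {q n : ℕ} (hn : (n : ℤ) = ev q N)
    (lo : ℤ) (m : ℕ) (p : Lf) (h : chainGo N ivs tgt m p = true)
    (hp : ∀ x : ℤ, lo ≤ x → x < ev q p → InI n q ivs (x : ZMod n)) :
    ∀ x : ℤ, lo ≤ x → x < ev q tgt → InI n q ivs (x : ZMod n) := by
  induction m generalizing p with
  | zero =>
    simp only [chainGo, decide_eq_true_eq] at h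
    rwa [h] at hp
  | succ m ih =>
    simp only [chainGo] at h
    split_ifs at h with h1
    · rwa [h1] at hp
    · split at h
      · simp at h
      · rename_i iv hiv
        refine ih _ h ?_
        intro x hx1 hx2
        by_cases hx : x < ev q p
        · exact hp x hx1 hx
        · rw [ev_add] at hx2
          have hm := List.find?_some hiv
          refine ⟨iv, List.mem_of_find?_eq_some hiv, (x - ev q p).toNat, by omega, ?_⟩
          have := emod_sound hm hn
          rw [Int.cast_add, this, ← Int.cast_add]
          congr 1
          omega

theorem chain_sound {N : Lf} {ivs : List (Lf × Lf)} (h : chain N ivs = true) {q n : ℕ}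
    (hn : (n : ℤ) = ev q N) (hn0 : 0 < n) (d : ZMod n) : InI n q ivs d := by
  match ivs with
  | [] => simp [chain] at h
  | iv :: r =>
    simp only [chain] at h
    have hh := chainGo_sound hn (ev q iv.1) _ _ h (fun x h1 h2 => by omega)
    have : NeZero n := ⟨by omega⟩
    obtain ⟨x, hx⟩ : ∃ x : ℤ, x = ev q iv.1 + ((d.val : ℤ) - ev q iv.1) % n := ⟨_, rfl⟩
    have hz : (0 : ℤ) < n := by exact_mod_cast hn0
    have h1 := Int.emod_nonneg ((d.val : ℤ) - ev q iv.1) hz.ne'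
    have h2 := Int.emod_lt_of_pos ((d.val : ℤ) - ev q iv.1) hz
    have h3 : (x : ZMod n) = d := by
      have e : x = d.val - n * (((d.val : ℤ) - ev q iv.1) / n) := by
        have := Int.emod_add_mul_ediv ((d.val : ℤ) - ev q iv.1) n
        omega
      rw [e]; simp
    rw [← h3]
    apply hh
    · omega
    · rw [ev_add, ← hn]; omega


theorem CAdj.map {V W : Type*} (φ : V → W) {l : List V} {u v : V} (h : CAdj l u v) :
    CAdj (l.map φ) (φ u) (φ v) := by
  obtain ⟨i, h1, h2⟩ := h
  exact ⟨i, by simp [h1], by simp [h2]⟩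

theorem symClass {q k : ℕ} (hq : 2 ≤ q) {K : Lf} {D : List (List Pc)} (hD : okD K D = true)
    (hk : (k : ℤ) = ev q K) {V : Type*} [DecidableEq V] (φ : ℕ × ℤ → V) (S : Finset V)
    (hS : k * D.length ≤ S.card) (hcov : ∀ x ∈ S, ∃ c ∈ D, ∃ w ∈ clist q c, φ w = x) :
    ∃ f : V → V, Cl k ↑S f ∧ ∀ c ∈ D, ∀ la lb d, Edl (clist q c) la lb d →
      ∃ u v : ℤ, v - u = d ∧ (f (φ (la, u)) = φ (lb, v) ∨ f (φ (lb, v)) = φ (la, u)) := by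
  obtain ⟨f, h1, h2⟩ := listClass (k := k) (D.map fun c => (clist q c).map φ) (by
    intro l hl
    obtain ⟨c, hc, rfl⟩ := List.mem_map.1 hl
    have := okD_len hq hD hc
    rw [List.length_map]; omega) S (by simpa using hS) (by
    intro x hx
    obtain ⟨c, hc, w, hw, rfl⟩ := hcov x hx
    exact ⟨_, List.mem_map.2 ⟨c, hc, rfl⟩, List.mem_map.2 ⟨w, hw, rfl⟩⟩)
  refine ⟨f, h1, ?_⟩
  rintro c hc la lb d ⟨u, v, h, rfl⟩
  refine ⟨u, v, rfl, ?_⟩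
  rcases h with h | h
  · exact Or.inl (h2 _ (List.mem_map.2 ⟨c, hc, rfl⟩) _ _ (h.map φ))
  · exact Or.inr (h2 _ (List.mem_map.2 ⟨c, hc, rfl⟩) _ _ (h.map φ))

/-! ### Cycle blow-ups -/

def LA (m k : ℕ) : Prop := ∃ f : ZMod k → (Fin m × ZMod k → Fin m × ZMod k),
  (∀ c, Cl k Set.univ (f c)) ∧ ∀ (i j : Fin m) (x y : ZMod k), (j : ℕ) = (i + 1) % m →
    ∃ c, f c (i, x) = (j, y) ∨ f c (j, y) = (i, x)

def keyA (m la lb : ℕ) : ℕ := if la < m ∧ lb = (la + 1) % m then la else 99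

def chkA (m : ℕ) (K : Lf) (D : List (List Pc)) : Bool :=
  okD K D && decide (D.length = m) && (List.range m).all fun i =>
    chain K (lvI i D) && chain K (kI (keyA m) i D)

def trl {V : Type*} {N : ℕ} (c : ZMod N) : V × ZMod N ≃ V × ZMod N :=
  (Equiv.refl V).prodCongr (Equiv.addRight c)

theorem la_of_chk {m k q : ℕ} (hm : 0 < m) (hm9 : m < 99) (hk0 : 0 < k) (hq : 2 ≤ q) {K : Lf} {D : List (List Pc)}
    (h : chkA m K D = true) (hk : (k : ℤ) = ev q K) : LA m k := by
  simp only [chkA, Bool.and_eq_true, List.all_eq_true, List.mem_range, decide_eq_true_eq] at h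
  obtain ⟨⟨hD, hl⟩, hc⟩ := h
  have : NeZero k := ⟨by omega⟩
  let φ : ℕ × ℤ → Fin m × ZMod k := fun w => (⟨w.1 % m, Nat.mod_lt _ hm⟩, (w.2 : ZMod k))
  obtain ⟨f, h1, h2⟩ := symClass hq hD hk φ Finset.univ (by simp [hl, mul_comm]) (by
    rintro ⟨i, x⟩ -
    obtain ⟨iv, hiv, j, hj, rfl⟩ := chain_sound (hc i i.2).1 hk hk0 x
    obtain ⟨c, hc, hm⟩ := lvI_sound hiv hj
    refine ⟨c, hc, _, hm, ?_⟩
    simp [φ, Nat.mod_eq_of_lt i.2])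
  refine ⟨fun c w => trl c (f ((trl c).symm w)), fun c => ?_, ?_⟩
  · have := h1.conj (trl c)
    simpa using this
  · intro i j x y hij
    obtain ⟨iv, hiv, n, hn, hd⟩ := chain_sound (hc i i.2).2 hk hk0 (y - x)
    obtain ⟨c, hc, la, lb, hkey, he⟩ := kI_sound hq hD hiv hn
    obtain ⟨u, v, huv, hf⟩ := h2 c hc la lb _ he
    have hla : la = i ∧ lb = (la + 1) % m := by
      simp only [keyA] at hkey
      split_ifs at hkey with h
      · exact ⟨hkey, h.2⟩
      · have := i.2; omega
    obtain ⟨rfl, rfl⟩ := hla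
    refine ⟨(x - (u : ZMod k) : ZMod k), ?_⟩
    have e1 : φ (↑i, u) = (trl (x - (u : ZMod k))).symm (i, x) := by
      ext <;> simp [φ, trl, Nat.mod_eq_of_lt i.2]
    have e2 : φ ((↑i + 1) % m, v) = (trl (x - (u : ZMod k))).symm (j, y) := by
      rw [← huv] at hd
      push_cast at hd
      ext
      · simp [φ, trl, hij]
      · simp only [φ, trl, Equiv.prodCongr_symm, Equiv.prodCongr_apply, Prod.map_apply,
          Equiv.addRight_symm, Equiv.coe_addRight]
        linear_combination -hd
    rw [e1, e2] at hf
    rcases hf with hf | hf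
    · left; simp only [hf, Equiv.apply_symm_apply]
    · right; simp only [hf, Equiv.apply_symm_apply]

/-! ### One-rotational systems on `∞` and two levels -/

def LB (k N : ℕ) : Prop := ∃ (f : ZMod N → (Option (Bool × ZMod N) → Option (Bool × ZMod N)))
  (p : ZMod N → Option (Bool × ZMod N)) (H : Option (Bool × ZMod N) → Option (Bool × ZMod N)),
  (∀ c, Cl k {x | x ≠ p c} (f c)) ∧ Cl k {x | ∃ y, x = some (false, y)} H ∧
  ∀ a b, a ≠ b → (∃ c, f c a = b ∨ f c b = a) ∨ (H a = b ∨ H b = a)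

def keyB : ℕ → ℕ → ℕ
  | 0, 0 => 0
  | 1, 1 => 1
  | 0, 1 => 2
  | 0, 2 => 3
  | 1, 2 => 4
  | _, _ => 9

def one' : Lf := (1, 0)

def chkB (K N ex : Lf) (l0 : ℕ) (x0 : Lf) (D : List (List Pc)) : Bool :=
  okD K D && decide ((List.replicate D.length K).sum = N + N) && decide (l0 < 2) &&
  chain N ((if l0 = 0 then [(x0, one')] else []) ++ lvI 0 D) &&
  chain N ((if l0 = 1 then [(x0, one')] else []) ++ lvI 1 D) &&
  (lvI 2 D).any (fun iv => iv.2 = one') &&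
  chain N ([(0, one'), (ex, one'), (-ex, one')] ++ kI keyB 0 D) &&
  chain N ([(0, one')] ++ kI keyB 1 D) && chain N (kI keyB 2 D) &&
  (kI keyB 3 D).any (fun iv => iv.2 = one') && (kI keyB 4 D).any (fun iv => iv.2 = one')

theorem keyB_inv {la lb κ : ℕ} (h : keyB la lb = κ) (hκ : κ < 5) :
    (κ = 0 ∧ la = 0 ∧ lb = 0) ∨ (κ = 1 ∧ la = 1 ∧ lb = 1) ∨ (κ = 2 ∧ la = 0 ∧ lb = 1) ∨
    (κ = 3 ∧ la = 0 ∧ lb = 2) ∨ (κ = 4 ∧ la = 1 ∧ lb = 2) := by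
  unfold keyB at h
  split at h <;> omega

theorem in_one {q : ℕ} {x : Lf} {i : ℕ} (hi : (i : ℤ) < ev q (x, one').2) : i = 0 := by
  simp [one', ev_one] at hi
  omega

theorem lb_of_chk {k N q : ℕ} (hk3 : 3 ≤ k) (hN : 0 < N) (hq : 2 ≤ q) {K NN ex x0 : Lf} {l0 : ℕ}
    {D : List (List Pc)} (h : chkB K NN ex l0 x0 D = true) (hk : (k : ℤ) = ev q K)
    (hNN : (N : ℤ) = ev q NN) (hex : addOrderOf ((ev q ex : ℤ) : ZMod N) = k) : LB k N := by
  simp only [chkB, Bool.and_eq_true, decide_eq_true_eq, List.any_eq_true] at h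
  obtain ⟨⟨⟨⟨⟨⟨⟨⟨⟨⟨hD, hl⟩, hl0⟩, hv0⟩, hv1⟩, hv2⟩, hp0⟩, hp1⟩, hmx⟩, hi0⟩, hi1⟩ := h
  have : NeZero N := ⟨by omega⟩
  let φ : ℕ × ℤ → (Option (Bool × ZMod N)) := fun w => if w.1 = 2 then none else some (decide (w.1 = 1), (w.2 : ZMod N))
  let p0 : Bool × ZMod N := (decide (l0 = 1), ((ev q x0 : ℤ) : ZMod N))
  have hlen : k * D.length = 2 * N := by
    have : (k * D.length : ℤ) = 2 * N := by
      rw [hk, hNN]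
      have := congrArg (ev q) hl
      rw [ev_add] at this
      rw [two_mul, ← this]
      simp [ev]; ring
    exact_mod_cast this
  obtain ⟨f, h1, h2⟩ := symClass hq hD hk φ (Finset.univ.erase (some p0)) (by
      rw [Finset.card_erase_of_mem (Finset.mem_univ _), Finset.card_univ, Fintype.card_option,
        Fintype.card_prod, ZMod.card, Fintype.card_bool, hlen]; simp) (by
    intro x hx
    replace hx := (Finset.mem_erase.1 hx).1
    match x with
    | none =>
      obtain ⟨iv, hiv, h2⟩ := hv2
      obtain ⟨c, hc, hm⟩ := lvI_sound (q := q) hiv (i := 0) (by rw [h2]; simp [one', ev_one])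
      exact ⟨c, hc, _, hm, by simp [φ]⟩
    | some (false, x) =>
      obtain ⟨iv, hiv, j, hj, rfl⟩ := chain_sound hv0 hNN hN x
      rw [List.mem_append] at hiv
      rcases hiv with hiv | hiv
      · split_ifs at hiv with hh <;> simp at hiv
        subst hiv
        have := in_one hj
        subst this
        exact absurd (by simp [p0, hh]) hx
      · obtain ⟨c, hc, hm⟩ := lvI_sound hiv hj
        exact ⟨c, hc, _, hm, by simp [φ]⟩
    | some (true, x) =>
      obtain ⟨iv, hiv, j, hj, rfl⟩ := chain_sound hv1 hNN hN x
      rw [List.mem_append] at hiv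
      rcases hiv with hiv | hiv
      · split_ifs at hiv with hh <;> simp at hiv
        subst hiv
        have := in_one hj
        subst this
        exact absurd (by simp [p0, hh]) hx
      · obtain ⟨c, hc, hm⟩ := lvI_sound hiv hj
        exact ⟨c, hc, _, hm, by simp [φ]⟩)
  let τ : ZMod N → (Option (Bool × ZMod N)) ≃ (Option (Bool × ZMod N)) := fun c => Equiv.optionCongr (trl c)
  let ee : ZMod N := ((ev q ex : ℤ) : ZMod N)
  let F : ZMod N → (Option (Bool × ZMod N)) → (Option (Bool × ZMod N)) := fun c w => τ c (f ((τ c).symm w))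
  let H : (Option (Bool × ZMod N)) → (Option (Bool × ZMod N)) := fun w => match w with
    | some (false, y) => some (false, y + ee)
    | w => w
  have fin : ∀ a b : (Option (Bool × ZMod N)), ∀ c, (f ((τ c).symm a) = (τ c).symm b ∨ f ((τ c).symm b) = (τ c).symm a) →
      ∃ c, F c a = b ∨ F c b = a := by
    intro a b c h
    refine ⟨c, ?_⟩
    rcases h with h | h
    · left; simp only [F, h, Equiv.apply_symm_apply]
    · right; simp only [F, h, Equiv.apply_symm_apply]
  have hin : ∀ l : ℕ, l < 2 → ∀ x : ZMod N, ∀ u : ℤ,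
      φ (l, u) = (τ (x - (u : ZMod N))).symm (some (decide (l = 1), x)) := by
    intro l hl x u
    have : l ≠ 2 := by omega
    rw [Equiv.eq_symm_apply]
    simp [φ, this, τ, trl]
  have hin2 : ∀ l : ℕ, l < 2 → ∀ x y : ZMod N, ∀ u v : ℤ, y - x = ((v - u : ℤ) : ZMod N) →
      φ (l, v) = (τ (x - (u : ZMod N))).symm (some (decide (l = 1), y)) := by
    intro l hl x y u v h
    have : x - (u : ZMod N) = y - (v : ZMod N) := by push_cast at h; linear_combination -h
    rw [this]; exact hin l hl y v
  have hnone : ∀ c u, φ (2, u) = (τ c).symm none := by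
    intro c u; rw [Equiv.eq_symm_apply]; simp [φ, τ]
  -- generic use of a key
  have use : ∀ κ < 3, ∀ x y : ZMod N, InI N q (kI keyB κ D) (y - x) →
      ∃ c, F c (some (decide (κ = 1), x)) = some (decide (κ ≠ 0), y) ∨
        F c (some (decide (κ ≠ 0), y)) = some (decide (κ = 1), x) := by
    rintro κ hκ x y ⟨iv, hiv, n, hn, hd⟩
    obtain ⟨c, hc, la, lb, hkey, he⟩ := kI_sound hq hD hiv hn
    obtain ⟨u, v, huv, hf⟩ := h2 c hc la lb _ he
    rw [← huv] at hd
    have := keyB_inv hkey (by omega)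
    have hla : la < 2 := by omega
    have hlb : lb < 2 := by omega
    rw [hin la hla x u, hin2 lb hlb x y u v hd] at hf
    have e1 : decide (la = 1) = decide (κ = 1) := by rw [decide_eq_decide]; omega
    have e2 : decide (lb = 1) = decide (κ ≠ 0) := by rw [decide_eq_decide]; omega
    rw [e1, e2] at hf
    exact fin _ _ _ hf
  have useInf : ∀ l < 2, (∃ iv ∈ kI keyB (3 + l) D, iv.2 = one') → ∀ x : ZMod N,
      ∃ c, F c (some (decide (l = 1), x)) = none ∨ F c none = some (decide (l = 1), x) := by
    rintro l hl ⟨iv, hiv, he⟩ x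
    obtain ⟨c, hc, la, lb, hkey, he⟩ := kI_sound hq hD hiv (i := 0) (by rw [he]; simp [one', ev_one])
    obtain ⟨u, v, huv, hf⟩ := h2 c hc la lb _ he
    have := keyB_inv hkey (by omega)
    have hla : la = l := by omega
    have hlb : lb = 2 := by omega
    subst hla hlb
    rw [hin la hl x u, hnone (x - (u : ZMod N))] at hf
    exact fin _ _ _ hf
  have one_eq : ∀ {x : Lf} {z : ZMod N} {i : ℕ}, (i : ℤ) < ev q (x, one').2 →
      z = ((ev q x + i : ℤ) : ZMod N) → z = ((ev q x : ℤ) : ZMod N) := by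
    intro x z i hi hz
    have := in_one hi
    subst this
    simpa using hz
  have pure0 : ∀ x y : ZMod N, x ≠ y → (∃ c, F c (some (false, x)) = some (false, y) ∨
      F c (some (false, y)) = some (false, x)) ∨ (y = x + ee ∨ x = y + ee) := by
    intro x y hxy
    obtain ⟨iv, hiv, i, hi, hd⟩ := chain_sound hp0 hNN hN (y - x)
    rw [List.mem_append] at hiv
    rcases hiv with hiv | hiv
    · right
      simp only [List.mem_cons, List.not_mem_nil, or_false] at hiv
      rcases hiv with rfl | rfl | rfl
      · have := one_eq hi hd
        simp [ev] at this
        exact absurd (sub_eq_zero.1 this).symm hxy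
      · have := one_eq hi hd
        left; simp only [ee]; linear_combination this
      · have := one_eq hi hd
        rw [ev_neg] at this
        push_cast at this
        right; simp only [ee]; linear_combination -this
    · exact Or.inl (use 0 (by omega) x y ⟨iv, hiv, i, hi, hd⟩)
  have pure1 : ∀ x y : ZMod N, x ≠ y → (∃ c, F c (some (true, x)) = some (true, y) ∨
      F c (some (true, y)) = some (true, x)) := by
    intro x y hxy
    obtain ⟨iv, hiv, i, hi, hd⟩ := chain_sound hp1 hNN hN (y - x)
    rw [List.mem_append] at hiv
    rcases hiv with hiv | hiv
    · simp only [List.mem_cons, List.not_mem_nil, or_false] at hiv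
      subst hiv
      have := one_eq hi hd
      simp [ev] at this
      exact absurd (sub_eq_zero.1 this).symm hxy
    · exact use 1 (by omega) x y ⟨iv, hiv, i, hi, hd⟩
  have mixed : ∀ x y : ZMod N, (∃ c, F c (some (false, x)) = some (true, y) ∨
      F c (some (true, y)) = some (false, x)) :=
    fun x y => use 2 (by omega) x y (chain_sound hmx hNN hN (y - x))
  have inf0 := useInf 0 (by omega) (by simpa using hi0)
  have inf1 := useInf 1 (by omega) (by simpa using hi1)
  simp only [decide_true, Nat.zero_ne_one, decide_false] at inf0 inf1
  have sw : ∀ {a b : (Option (Bool × ZMod N))}, (∃ c, F c a = b ∨ F c b = a) → ∃ c, F c b = a ∨ F c a = b :=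
    fun ⟨c, h⟩ => ⟨c, h.symm⟩
  refine ⟨F, fun c => τ c (some p0), H, fun c => ?_, ⟨?_, ?_⟩, ?_⟩
  · have := h1.conj (τ c)
    convert this using 1
    ext w
    simp [Equiv.symm_apply_eq]
  · rintro _ ⟨y, rfl⟩
    have e := mp_semi (f := H) (g := fun y => y + ee) (e := fun y => some (false, y))
      (fun a b h => by simpa using h) (fun y => rfl) y
    rw [e, ← hex]
    apply Nat.dvd_antisymm
    · apply IsPeriodicPt.minimalPeriod_dvd
      change (fun y => y + ee)^[_] y = y
      rw [add_right_iterate]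
      rw [addOrderOf_nsmul_eq_zero]
      exact add_zero y
    · apply addOrderOf_dvd_of_nsmul_eq_zero
      have := isPeriodicPt_minimalPeriod (fun y => y + ee) y
      change (fun y => y + ee)^[_] y = y at this
      rw [add_right_iterate] at this
      simpa using this
  · intro x hx
    match x with
    | none => rfl
    | some (true, x) => rfl
    | some (false, x) => exact absurd ⟨x, rfl⟩ hx
  · intro a b hab
    match a, b with
    | none, none => exact absurd rfl hab
    | none, some (false, x) => exact Or.inl (sw (inf0 x))
    | none, some (true, x) => exact Or.inl (sw (inf1 x))
    | some (false, x), none => exact Or.inl (inf0 x)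
    | some (true, x), none => exact Or.inl (inf1 x)
    | some (false, x), some (true, y) => exact Or.inl (mixed x y)
    | some (true, x), some (false, y) => exact Or.inl (sw (mixed y x))
    | some (true, x), some (true, y) => exact Or.inl (pure1 x y (by rintro rfl; exact hab rfl))
    | some (false, x), some (false, y) =>
      rcases pure0 x y (by rintro rfl; exact hab rfl) with h | h | h
      · exact Or.inl h
      · right; left; simp [H, h]
      · right; right; simp [H, h]


/-! ### Frames -/

theorem Cl.glue {V ι : Type*} {k : ℕ} (hk : 3 ≤ k) (S : ι → Set V) (F : ι → V → V)
    (h : ∀ i, Cl k (S i) (F i)) (disj : ∀ i j x, x ∈ S i → x ∈ S j → i = j) :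
    ∃ f, Cl k (⋃ i, S i) f ∧ ∀ i, ∀ x ∈ S i, f x = F i x := by
  classical
  let b : V → Option ι := fun x => if h : ∃ i, x ∈ S i then some h.choose else none
  let g : Option ι → V → V := fun o => o.elim id F
  have hb1 : ∀ i x, x ∈ S i → b x = some i := by
    intro i x hx
    have hh : ∃ i, x ∈ S i := ⟨i, hx⟩
    simp only [b, dif_pos hh]
    exact congrArg some (disj _ _ x hh.choose_spec hx)
  have hb0 : ∀ x, x ∉ (⋃ i, S i) → b x = none := by
    intro x hx
    simp only [Set.mem_iUnion] at hx
    simp only [b, dif_neg hx]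
  have hb : ∀ x, b (g (b x) x) = b x := by
    intro x
    by_cases hx : x ∈ ⋃ i, S i
    · obtain ⟨i, hi⟩ := Set.mem_iUnion.1 hx
      rw [hb1 i x hi]
      exact hb1 i _ ((h i).mem hk hi)
    · rw [hb0 x hx]; exact hb0 x hx
  refine ⟨fun x => g (b x) x, ⟨?_, ?_⟩, ?_⟩
  · intro x hx
    obtain ⟨i, hi⟩ := Set.mem_iUnion.1 hx
    rw [mp_glue b g hb, hb1 i x hi]
    exact (h i).1 x hi
  · intro x hx
    simp only [hb0 x hx]; rfl
  · intro i x hi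
    simp only [hb1 i x hi]; rfl

theorem Cl.push {V W : Type*} {k : ℕ} {S : Set V} {f : V → V} (h : Cl k S f) {e : V → W}
    (he : Injective e) : ∃ f' : W → W, Cl k (e '' S) f' ∧ ∀ x, f' (e x) = e (f x) := by
  classical
  let f' : W → W := fun w => if h : ∃ v, e v = w then e (f h.choose) else w
  have key : ∀ x, f' (e x) = e (f x) := by
    intro x
    have hh : ∃ v, e v = e x := ⟨x, rfl⟩
    simp only [f', dif_pos hh]
    rw [he hh.choose_spec]
  refine ⟨f', ⟨?_, ?_⟩, key⟩
  · rintro _ ⟨x, hx, rfl⟩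
    rw [mp_semi he key]; exact h.1 x hx
  · intro w hw
    by_cases hh : ∃ v, e v = w
    · obtain ⟨v, rfl⟩ := hh
      rw [key, h.2 v (fun hv => hw ⟨v, hv, rfl⟩)]
    · simp only [f', dif_neg hh]

def Frame (k : ℕ) (T : Type) : Prop :=
  ∃ σ : T → ZMod k → (T × Bool × ZMod k → T × Bool × ZMod k),
    (∀ i c, Cl k {x | x.1 ≠ i} (σ i c)) ∧
    ∀ a b : T × Bool × ZMod k, a.1 ≠ b.1 → ∃ i c, σ i c a = b ∨ σ i c b = a

theorem Frame.equiv {k : ℕ} {T T' : Type} (h : Frame k T) (e : T ≃ T') : Frame k T' := by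
  obtain ⟨σ, h1, h2⟩ := h
  let E : T × Bool × ZMod k ≃ T' × Bool × ZMod k := e.prodCongr (Equiv.refl _)
  have hE : ∀ w, (E.symm w).1 = e.symm w.1 := fun w => rfl
  refine ⟨fun i c w => E (σ (e.symm i) c (E.symm w)), fun i c => ?_, fun a b hab => ?_⟩
  · have := (h1 (e.symm i) c).conj E
    convert this using 1
    ext w
    simp [hE]
  · obtain ⟨i, c, h⟩ := h2 (E.symm a) (E.symm b) (by rw [hE, hE]; simpa using hab)
    refine ⟨e i, c, ?_⟩
    beta_reduce
    rw [e.symm_apply_apply]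
    rcases h with h | h
    · left; rw [h, E.apply_symm_apply]
    · right; rw [h, E.apply_symm_apply]

theorem Frame.sub {k : ℕ} {T : Type} [Subsingleton T] : Frame k T := by
  refine ⟨fun _ _ x => x, fun i c => ⟨fun x hx => ?_, fun _ _ => rfl⟩, fun a b h => ?_⟩
  · exact absurd (Subsingleton.elim _ _) hx
  · exact absurd (Subsingleton.elim _ _) h

theorem Frame.of_card {k n : ℕ} {T : Type} [Fintype T] (hT : Fintype.card T = n)
    (h : Frame k (Fin n)) : Frame k T :=
  h.equiv (Fintype.equivFinOfCardEq hT).symm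

theorem Frame.pbd {k : ℕ} (hk : 3 ≤ k) {T β : Type} (B : β → Set T)
    (hex : ∀ i j, i ≠ j → ∃ b, i ∈ B b ∧ j ∈ B b)
    (huq : ∀ i j b b', i ≠ j → i ∈ B b → j ∈ B b → i ∈ B b' → j ∈ B b' → b = b')
    (hF : ∀ b, Frame k (B b)) : Frame k T := by
  choose σ h1 h2 using hF
  let e : ∀ b, (B b) × Bool × ZMod k → T × Bool × ZMod k := fun b w => (w.1.1, w.2)
  have he : ∀ b, Injective (e b) := by
    rintro b ⟨⟨x, hx⟩, y⟩ ⟨⟨x', hx'⟩, y'⟩ h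
    simp only [e, Prod.mk.injEq] at h
    obtain ⟨rfl, rfl⟩ := h
    rfl
  choose τ hτ1 hτ2 using fun b i c => (h1 b i c).push (he b)
  have him : ∀ b (i : B b) w, w ∈ (e b) '' {x | x.1 ≠ i} ↔ w.1 ∈ B b ∧ w.1 ≠ i := by
    intro b i w
    constructor
    · rintro ⟨x, hx, rfl⟩
      exact ⟨x.1.2, fun h => hx (Subtype.ext h)⟩
    · rintro ⟨h, h'⟩
      exact ⟨(⟨w.1, h⟩, w.2), fun hh => h' (congrArg Subtype.val hh), rfl⟩
  have hg : ∀ (i : T) (c : ZMod k), ∃ f, Cl k {x | x.1 ≠ i} f ∧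
      ∀ b (hb : i ∈ B b), ∀ x : (B b) × Bool × ZMod k, x.1.1 ≠ i →
        f (e b x) = e b (σ b ⟨i, hb⟩ c x) := by
    intro i c
    obtain ⟨f, hf1, hf2⟩ := Cl.glue hk (fun b : {b // i ∈ B b} => (e b.1) '' {x | x.1 ≠ ⟨i, b.2⟩})
      (fun b => τ b.1 ⟨i, b.2⟩ c) (fun b => hτ1 _ _ _) (by
        intro b b' x hx hx'
        have := (him _ _ _).1 hx
        have := (him _ _ _).1 hx'
        apply Subtype.ext
        exact huq i x.1 _ _ (by tauto) b.2 (by tauto) b'.2 (by tauto))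
    refine ⟨f, ?_, ?_⟩
    · convert hf1 using 1
      ext x
      simp only [Set.mem_ofPred_eq, Set.mem_iUnion, him]
      constructor
      · intro h
        obtain ⟨b, hb, hb'⟩ := hex i x.1 (Ne.symm h)
        exact ⟨⟨b, hb⟩, hb', h⟩
      · rintro ⟨b, -, h⟩; exact h
    · intro b hb x hx
      rw [hf2 ⟨b, hb⟩ (e b x) ((him _ _ _).2 ⟨x.1.2, hx⟩)]
      exact hτ2 _ _ _ _
  choose f hf1 hf2 using hg
  refine ⟨f, hf1, ?_⟩
  intro x y hxy
  obtain ⟨b, hx, hy⟩ := hex _ _ hxy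
  obtain ⟨i, c, h⟩ := h2 b (⟨x.1, hx⟩, x.2) (⟨y.1, hy⟩, y.2) (fun h => hxy (congrArg Subtype.val h))
  have aux : ∀ x y : T × Bool × ZMod k, ∀ (hx : x.1 ∈ B b) (hy : y.1 ∈ B b), x.1 ≠ y.1 →
      σ b i c (⟨x.1, hx⟩, x.2) = (⟨y.1, hy⟩, y.2) → f i.1 c x = y := by
    intro x y hx hy hxy h
    by_cases hi : x.1 = i.1
    · exfalso
      have := (h1 b i c).2 (⟨x.1, hx⟩, x.2) (by simp [Subtype.ext_iff, hi])
      rw [this] at h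
      exact hxy (congrArg (fun w => w.1.1) h)
    · have := hf2 i.1 c b i.2 (⟨x.1, hx⟩, x.2) hi
      rw [Subtype.coe_eta, h] at this
      exact this
  exact ⟨i.1, c, h.imp (aux x y hx hy hxy) (aux y x hy hx (Ne.symm hxy))⟩

/-- truncated transversal designs -/
theorem Frame.td {k m g : ℕ} (hk : 3 ≤ k) (hm : 0 < m) (hg : ∀ d, 1 ≤ d → d < g → Nat.Coprime d m)
    (r : Fin g → ℕ) (hr : ∀ j, r j ≤ m) (hr4 : ∀ j : Fin g, (j : ℕ) < 4 → r j = m) (hg4 : 4 ≤ g)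
    (hG : ∀ j, Frame k (Fin (r j))) (hL : ∀ s, 4 ≤ s → s ≤ g → Frame k (Fin s)) :
    Frame k (Fin (∑ j, r j)) := by
  classical
  have : NeZero m := ⟨by omega⟩
  let T := {p : Fin g × ZMod m // p.2.val < r p.1}
  have cardG : ∀ j, Fintype.card {z : ZMod m // z.val < r j} = r j := by
    intro j
    rw [Fintype.card_subtype]
    have : (Finset.univ.filter fun z : ZMod m => z.val < r j).card
        = (Finset.range (r j)).card := by
      apply Finset.card_bij (fun z _ => z.val)
      · intro z hz; simpa using hz
      · intro a _ b _ h; exact ZMod.val_injective m h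
      · intro b hb
        have hb := Finset.mem_range.1 hb
        have := hr j
        exact ⟨(b : ZMod m), by simp [ZMod.val_cast_of_lt (show b < m by omega), hb],
          ZMod.val_cast_of_lt (by omega)⟩
    rw [this, Finset.card_range]
  have cardT : Fintype.card T = ∑ j, r j := by
    let E : T ≃ (Σ j, {z : ZMod m // z.val < r j}) :=
      { toFun := fun p => ⟨p.1.1, p.1.2, p.2⟩
        invFun := fun p => ⟨(p.1, p.2.1), p.2.2⟩
        left_inv := fun p => rfl
        right_inv := fun p => rfl }
    rw [Fintype.card_congr E, Fintype.card_sigma]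
    exact Finset.sum_congr rfl fun j _ => cardG j
  have hu : ∀ i j : Fin g, i ≠ j → IsUnit ((i : ℕ) - (j : ℕ) : ZMod m) := by
    have aux : ∀ i j : Fin g, (j : ℕ) < i → IsUnit ((i : ℕ) - (j : ℕ) : ZMod m) := by
      intro i j h
      rw [← Nat.cast_sub h.le]
      exact (ZMod.isUnit_iff_coprime _ _).2 (hg _ (by omega) (by omega))
    intro i j h
    rcases lt_or_gt_of_ne (fun hh => h (Fin.ext hh) : (i : ℕ) ≠ j) with h | h
    · rw [← neg_sub]; exact (aux j i h).neg
    · exact aux i j h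
  let B : Fin g ⊕ (ZMod m × ZMod m) → Set T := fun b => match b with
    | .inl j => {p | p.1.1 = j}
    | .inr ab => {p | p.1.2 = ab.1 + ab.2 * (p.1.1 : ℕ)}
  have : Frame k T := by
    apply Frame.pbd hk B
    · rintro ⟨⟨i, x⟩, hx⟩ ⟨⟨j, y⟩, hy⟩ h
      by_cases hij : i = j
      · exact ⟨.inl i, rfl, hij.symm⟩
      · obtain ⟨u, hu⟩ := hu i j hij
        have h1 : (u : ZMod m) * (u⁻¹ : (ZMod m)ˣ) = 1 := Units.mul_inv u
        rw [hu] at h1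
        refine ⟨.inr (x - (x - y) * (u⁻¹ : (ZMod m)ˣ) * (i : ℕ), (x - y) * (u⁻¹ : (ZMod m)ˣ)), ?_, ?_⟩
        · change x = _; ring
        · change y = _
          linear_combination (x - y) * h1
    · rintro ⟨⟨i, x⟩, hx⟩ ⟨⟨j, y⟩, hy⟩ b b' h h1 h2 h3 h4
      match b, b' with
      | .inl b, .inl b' => exact congrArg _ (h1.symm.trans h3)
      | .inl b, .inr (c, d) =>
        exfalso
        have e1 : i = b := h1
        have e2 : j = b := h2
        have e3 : x = c + d * (i : ℕ) := h3
        have e4 : y = c + d * (j : ℕ) := h4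
        subst e1 e2
        exact h (Subtype.ext (Prod.ext rfl (e3.trans e4.symm)))
      | .inr (c, d), .inl b =>
        exfalso
        have e1 : i = b := h3
        have e2 : j = b := h4
        have e3 : x = c + d * (i : ℕ) := h1
        have e4 : y = c + d * (j : ℕ) := h2
        subst e1 e2
        exact h (Subtype.ext (Prod.ext rfl (e3.trans e4.symm)))
      | .inr (c, d), .inr (c', d') =>
        have e1 : x = c + d * (i : ℕ) := h1
        have e2 : y = c + d * (j : ℕ) := h2
        have e3 : x = c' + d' * (i : ℕ) := h3
        have e4 : y = c' + d' * (j : ℕ) := h4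
        have hij : i ≠ j := by
          rintro rfl
          exact h (Subtype.ext (Prod.ext rfl (e1.trans e2.symm)))
        have hd : d = d' := by
          apply (hu i j hij).mul_right_cancel
          linear_combination e3 - e1 - e4 + e2
        subst hd
        have hc : c = c' := by linear_combination e3 - e1
        subst hc
        rfl
    · intro b
      match b with
      | .inl j =>
        refine Frame.of_card (n := r j) ?_ (hG j)
        rw [← cardG j]
        refine Fintype.card_congr
          { toFun := fun p => ⟨p.1.1.2, ?_⟩
            invFun := fun z => ⟨⟨(j, z.1), z.2⟩, rfl⟩
            left_inv := ?_
            right_inv := fun z => rfl }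
        · have := p.1.2
          have h2 : p.1.1.1 = j := p.2
          rwa [h2] at this
        · rintro ⟨⟨⟨i, z⟩, h⟩, h2⟩
          have h2 : i = j := h2
          subst h2
          rfl
      | .inr (c, d) =>
        have e : B (.inr (c, d)) ≃ {j : Fin g // (c + d * (j : ℕ)).val < r j} :=
          { toFun := fun p => ⟨p.1.1.1, by
              have := p.1.2
              have h2 : p.1.1.2 = c + d * (p.1.1.1 : ℕ) := p.2
              rwa [h2] at this⟩
            invFun := fun j => ⟨⟨(j.1, c + d * (j.1 : ℕ)), j.2⟩, rfl⟩
            left_inv := by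
              rintro ⟨⟨⟨i, z⟩, h⟩, h2⟩
              have h2 : z = c + d * (i : ℕ) := h2
              subst h2
              rfl
            right_inv := fun j => rfl }
        refine Frame.of_card rfl (hL _ ?_ ?_)
        · rw [Fintype.card_congr e]
          have : Fintype.card (Fin 4) ≤ Fintype.card {j : Fin g // (c + d * (j : ℕ)).val < r j} := by
            refine Fintype.card_le_of_injective (fun x => ⟨⟨x, by omega⟩, ?_⟩) ?_
            · rw [hr4 _ x.2]; exact ZMod.val_lt _
            · intro x y h
              simpa [Fin.ext_iff] using h
          simpa using this
        · rw [Fintype.card_congr e]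
          simpa using Fintype.card_subtype_le (fun j : Fin g => (c + d * (j : ℕ)).val < r j)
  exact this.equiv (Fintype.equivFinOfCardEq cardT)

/-! ### The frame with five groups -/

def keyF (la lb : ℕ) : ℕ := 4 * ((lb / 2 + 4 * (la / 2)) % 5) + 2 * (la % 2) + lb % 2

def chkF (K : Lf) (D : List (List Pc)) : Bool :=
  okD K D && decide (D.length = 8) && (List.range 8).all (fun i => chain K (lvI (i + 2) D)) &&
  (List.range 16).all fun i => chain K (kI keyF (i + 4) D)

theorem frame5 {k q : ℕ} (hk0 : 0 < k) (hq : 2 ≤ q) {K : Lf} {D : List (List Pc)}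
    (h : chkF K D = true) (hk : (k : ℤ) = ev q K) : Frame k (Fin 5) := by
  simp only [chkF, Bool.and_eq_true, List.all_eq_true, List.mem_range, decide_eq_true_eq] at h
  obtain ⟨⟨⟨hD, hl⟩, hv⟩, hc⟩ := h
  have : NeZero k := ⟨by omega⟩
  have key5 : Frame k (ZMod 5) := by
    let φ : ℕ × ℤ → ZMod 5 × Bool × ZMod k := fun w => (((w.1 / 2 : ℕ) : ZMod 5),
      decide (w.1 % 2 = 1), (w.2 : ZMod k))
    obtain ⟨f, h1, h2⟩ := symClass hq hD hk φ (Finset.univ.filter fun x => x.1 ≠ 0) (by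
        have : (Finset.univ.filter fun x : ZMod 5 × Bool × ZMod k => x.1 ≠ 0)
            = (Finset.univ.filter fun x : ZMod 5 => x ≠ 0) ×ˢ Finset.univ := by
          ext x; simp
        rw [this, Finset.card_product, Finset.card_univ, Fintype.card_prod, ZMod.card,
          Fintype.card_bool, hl]
        have : (Finset.univ.filter fun x : ZMod 5 => x ≠ 0).card = 4 := by decide
        rw [this]; omega) (by
      rintro ⟨i, l, x⟩ hx
      have hi : i ≠ 0 := by simpa using hx
      have hi' : i.val ≠ 0 := by rwa [Ne, ZMod.val_eq_zero]
      have hi5 := ZMod.val_lt i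
      have hb : l.toNat < 2 := Bool.toNat_lt l
      obtain ⟨iv, hiv, j, hj, rfl⟩ := chain_sound (hv (2 * i.val + l.toNat - 2) (by omega)) hk hk0 x
      rw [show 2 * i.val + l.toNat - 2 + 2 = 2 * i.val + l.toNat by omega] at hiv
      obtain ⟨c, hc, hm⟩ := lvI_sound hiv hj
      refine ⟨c, hc, _, hm, ?_⟩
      have e1 : (2 * i.val + l.toNat) / 2 = i.val := by omega
      have e2 : (2 * i.val + l.toNat) % 2 = l.toNat := by omega
      simp only [φ, e1, e2, ZMod.natCast_zmod_val]
      cases l <;> simp)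
    let τ : ZMod 5 → ZMod k → ZMod 5 × Bool × ZMod k ≃ ZMod 5 × Bool × ZMod k := fun i c =>
      (Equiv.addRight i).prodCongr (trl c)
    refine ⟨fun i c w => τ i c (f ((τ i c).symm w)), fun i c => ?_, ?_⟩
    · have := h1.conj (τ i c)
      convert this using 1
      ext w
      simp [τ, ← sub_eq_add_neg, sub_eq_zero]
    · rintro ⟨i, l, x⟩ ⟨j, l', y⟩ hij
      have hij : i ≠ j := hij
      have hd : (j - i).val ≠ 0 := by rw [Ne, ZMod.val_eq_zero, sub_eq_zero]; exact hij.symm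
      have hd5 := ZMod.val_lt (j - i)
      have hb : l.toNat < 2 := Bool.toNat_lt l
      have hb' : l'.toNat < 2 := Bool.toNat_lt l'
      obtain ⟨iv, hiv, n, hn, hdd⟩ := chain_sound
        (hc (4 * (j - i).val + 2 * l.toNat + l'.toNat - 4) (by omega)) hk hk0 (y - x)
      rw [show 4 * (j - i).val + 2 * l.toNat + l'.toNat - 4 + 4 =
        4 * (j - i).val + 2 * l.toNat + l'.toNat by omega] at hiv
      obtain ⟨c, hc, la, lb, hkey, he⟩ := kI_sound hq hD hiv hn
      obtain ⟨u, v, huv, hf⟩ := h2 c hc la lb _ he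
      have hla : (lb / 2 + 4 * (la / 2)) % 5 = (j - i).val ∧ la % 2 = l.toNat ∧
          lb % 2 = l'.toNat := by
        simp only [keyF] at hkey
        omega
      obtain ⟨k1, k2, k3⟩ := hla
      have k4 : ((lb / 2 : ℕ) : ZMod 5) - ((la / 2 : ℕ) : ZMod 5) = j - i := by
        have := congrArg (Nat.cast : ℕ → ZMod 5) k1
        rw [ZMod.natCast_mod, ZMod.natCast_zmod_val] at this
        rw [← this, Nat.cast_add, Nat.cast_mul]
        have : ((4 : ℕ) : ZMod 5) = -1 := by decide
        rw [this]; ring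
      have bt : ∀ b : Bool, decide (b.toNat = 1) = b := by decide
      refine ⟨i - ((la / 2 : ℕ) : ZMod 5), (x - (u : ZMod k) : ZMod k), ?_⟩
      have e1 : φ (la, u) = (τ (i - ((la / 2 : ℕ) : ZMod 5)) (x - (u : ZMod k))).symm (i, l, x) := by
        rw [Equiv.eq_symm_apply]
        simp only [τ, φ, trl, Equiv.prodCongr_apply, Prod.map, Equiv.coe_addRight, Equiv.refl_apply,
          k2, bt]
        simp
      have e2 : φ (lb, v) = (τ (i - ((la / 2 : ℕ) : ZMod 5)) (x - (u : ZMod k))).symm (j, l', y) := by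
        rw [← huv] at hdd
        push_cast at hdd
        rw [Equiv.eq_symm_apply]
        simp only [τ, φ, trl, Equiv.prodCongr_apply, Prod.map, Equiv.coe_addRight, Equiv.refl_apply,
          k3, bt]
        refine Prod.ext ?_ (Prod.ext rfl ?_)
        · change _ + _ = j
          linear_combination k4
        · change _ + _ = y
          linear_combination -hdd
      rw [e1, e2] at hf
      rcases hf with hf | hf
      · left; simp only [hf, Equiv.apply_symm_apply]
      · right; simp only [hf, Equiv.apply_symm_apply]
  exact key5.equiv (Equiv.refl (Fin 5))

/-! ### Assembly -/

theorem arcs_of_lb {k t : ℕ} (hk : 3 ≤ k) (ht : 0 < t) (h : LB k (k * t)) :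
    IsARCS k (2 * k * t + 1) := by
  have : NeZero (k * t) := ⟨by positivity⟩
  obtain ⟨f, p, H, h1, h2, h3⟩ := h
  have hV : Fintype.card (Option (Bool × ZMod (k * t))) = 2 * k * t + 1 := by
    simp [ZMod.card]; ring
  refine crit hk hV (I := ZMod (k * t)) (by simp [ZMod.card]) (fun c => {x | x ≠ p c}) f h1 ?_ H _ h2 ?_ h3
  · intro c
    have : {x | x ≠ p c} = ({p c} : Set _)ᶜ := by ext; simp
    rw [this, Set.ncard_compl, Set.ncard_singleton, Nat.card_eq_fintype_card, hV]; rfl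
  · have : {x : Option (Bool × ZMod (k * t)) | ∃ y, x = some (false, y)}
        = Set.range (fun y => some (false, y)) := by
      ext x; simp [eq_comm]
    rw [this, Set.ncard_range_of_injective (fun a b h => by simpa using h), Nat.card_eq_fintype_card, ZMod.card]

theorem arcs_of_frame {k t : ℕ} (hk : 3 ≤ k) (h : LB k k) (hF : Frame k (Fin t)) :
    IsARCS k (2 * k * t + 1) := by
  have : NeZero k := ⟨by omega⟩
  obtain ⟨f, p, H, h1, h2, h3⟩ := h
  obtain ⟨σ, s1, s2⟩ := hF
  let e : Fin t → Option (Bool × ZMod k) → Option (Fin t × Bool × ZMod k) :=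
    fun i => Option.map fun w => (i, w)
  have he : ∀ i, Injective (e i) := fun i => Option.map_injective (fun a b h => by simpa using h)
  have hs : Injective (some : Fin t × Bool × ZMod k → _) := Option.some_injective _
  choose F0 F1 F2 using fun i c => (h1 c).push (he i)
  choose G0 G1 G2 using fun i c => (s1 i c).push hs
  choose H0 H1 H2 using fun i => h2.push (he i)
  have hK : ∀ i c, ∃ f', Cl k {x | x ≠ e i (p c)} f' ∧ (∀ x ≠ p c, f' (e i x) = e i (f c x)) ∧
      ∀ x, x.1 ≠ i → f' (some x) = some (σ i c x) := by
    intro i c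
    obtain ⟨f', a1, a2⟩ := Cl.glue hk
      (fun b : Bool => if b then e i '' {x | x ≠ p c} else some '' {x | x.1 ≠ i})
      (fun b => if b then F0 i c else G0 i c) (by
        intro b; cases b
        · simpa using G1 i c
        · simpa using F1 i c) (by
        have aux : ∀ x, x ∈ e i '' {x | x ≠ p c} → x ∈ some '' {x : Fin t × Bool × ZMod k | x.1 ≠ i} →
            False := by
          rintro _ ⟨x, -, rfl⟩ ⟨y, hy, h⟩
          cases x with
          | none => simp [e] at h
          | some x =>
            simp only [e, Option.map_some, Option.some.injEq] at h
            exact hy (by rw [h])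
        intro b b' x hx hx'
        cases b <;> cases b' <;> simp only [if_true, Bool.false_eq_true, if_false] at hx hx'
        · rfl
        · exact (aux x hx' hx).elim
        · exact (aux x hx hx').elim
        · rfl)
    refine ⟨f', ?_, ?_, ?_⟩
    · convert a1 using 1
      ext x
      simp only [Set.mem_iUnion, Bool.exists_bool, if_true, Bool.false_eq_true, if_false]
      constructor
      · intro hx
        match x with
        | none => exact Or.inr ⟨none, fun h => hx (by rw [← h]; rfl), rfl⟩
        | some (j, w) =>
          by_cases hj : j = i
          · subst hj
            exact Or.inr ⟨some w, fun h => hx (by rw [← h]; rfl), rfl⟩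
          · exact Or.inl ⟨(j, w), hj, rfl⟩
      · rintro (⟨y, hy, rfl⟩ | ⟨y, hy, rfl⟩) h
        · cases hp : p c with
          | none => rw [hp] at h; simp [e] at h
          | some w =>
            rw [hp] at h
            simp only [e, Option.map_some, Option.some.injEq] at h
            exact hy (by rw [h])
        · exact hy (he i h)
    · intro x hx
      rw [a2 true (e i x) ⟨x, hx, rfl⟩]
      exact F2 i c x
    · intro x hx
      rw [a2 false (some x) ⟨x, hx, rfl⟩]
      exact G2 i c x
  choose K K1 K2 K3 using hK
  obtain ⟨Hh, b1, b2⟩ := Cl.glue hk (fun i => e i '' {x | ∃ y, x = some (false, y)}) H0 H1 (by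
    rintro i j _ ⟨_, ⟨y, rfl⟩, rfl⟩ ⟨_, ⟨y', rfl⟩, h⟩
    simp only [e, Option.map_some, Option.some.injEq, Prod.mk.injEq] at h
    exact h.1.symm)
  have hV : Fintype.card (Option (Fin t × Bool × ZMod k)) = 2 * k * t + 1 := by
    simp [ZMod.card]; ring
  refine crit hk hV (I := Fin t × ZMod k) (by simp [ZMod.card, mul_comm])
    (fun w => {x | x ≠ e w.1 (p w.2)}) (fun w => K w.1 w.2) (fun w => K1 _ _) ?_ Hh _ b1 ?_ ?_
  · rintro ⟨i, c⟩
    have : {x | x ≠ e i (p c)} = ({e i (p c)} : Set _)ᶜ := by ext; simp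
    simp only [this]
    rw [Set.ncard_compl, Set.ncard_singleton, Nat.card_eq_fintype_card, hV]; rfl
  · have : (⋃ i, e i '' {x | ∃ y, x = some (false, y)})
        = Set.range (fun w : Fin t × ZMod k => some (w.1, false, w.2)) := by
      ext x
      simp only [Set.mem_iUnion, Set.mem_range]
      constructor
      · rintro ⟨i, _, ⟨y, rfl⟩, rfl⟩; exact ⟨(i, y), rfl⟩
      · rintro ⟨⟨i, y⟩, rfl⟩; exact ⟨i, _, ⟨y, rfl⟩, rfl⟩
    rw [this, Set.ncard_range_of_injective, Nat.card_eq_fintype_card, Fintype.card_prod, ZMod.card,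
      Fintype.card_fin, mul_comm]
    rintro ⟨a, b⟩ ⟨a', b'⟩ h
    simpa using h
  · have inner : ∀ i a b, a ≠ b → (∃ w : Fin t × ZMod k, K w.1 w.2 (e i a) = e i b ∨
        K w.1 w.2 (e i b) = e i a) ∨ (Hh (e i a) = e i b ∨ Hh (e i b) = e i a) := by
      intro i a b hab
      have aux : ∀ c a b, a ≠ b → f c a = b → K i c (e i a) = e i b := by
        intro c a b hab h
        by_cases ha : a = p c
        · have := (h1 c).2 a (by simp [ha])
          exact absurd (this.symm.trans h) hab
        · rw [K2 i c a ha, h]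
      have auxH : ∀ a b, a ≠ b → H a = b → Hh (e i a) = e i b := by
        intro a b hab h
        by_cases ha : ∃ y, a = some (false, y)
        · rw [b2 i (e i a) ⟨a, ha, rfl⟩, H2, h]
        · exact absurd ((h2.2 a ha).symm.trans h) hab
      rcases h3 a b hab with ⟨c, h⟩ | h
      · exact Or.inl ⟨(i, c), h.imp (aux c a b hab) (aux c b a hab.symm)⟩
      · exact Or.inr (h.imp (auxH a b hab) (auxH b a hab.symm))
    intro a b hab
    match a, b with
    | none, none => exact absurd rfl hab
    | none, some (i, w) => exact inner i none (some w) (by simp)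
    | some (i, w), none => exact inner i (some w) none (by simp)
    | some (i, w), some (j, w') =>
      by_cases hij : i = j
      · subst hij
        exact inner i (some w) (some w') (fun h => hab (by simpa using h))
      · obtain ⟨n, c, h⟩ := s2 (i, w) (j, w') hij
        left
        refine ⟨(n, c), ?_⟩
        have aux : ∀ x y : Fin t × Bool × ZMod k, x ≠ y → σ n c x = y → K n c (some x) = some y := by
          intro x y hxy h
          by_cases hx : x.1 = n
          · exact absurd (((s1 n c).2 x (by simp [hx])).symm.trans h) hxy
          · rw [K3 n c x hx, h]
        have hne : ((i, w) : Fin t × Bool × ZMod k) ≠ (j, w') := fun h => hij (congrArg Prod.fst h)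
        exact h.imp (aux _ _ hne) (aux _ _ hne.symm)

/-! ### Base frames with short cycles -/

def lors {α : Type} (L : List α) (f : α → ℕ) : ℕ := L.foldl (fun a x => Nat.lor a (f x)) 0

theorem testBit_lors {α : Type} (L : List α) (f : α → ℕ) (n : ℕ) :
    (lors L f).testBit n = true ↔ ∃ x ∈ L, (f x).testBit n = true := by
  have : ∀ (L : List α) a, (L.foldl (fun a x => Nat.lor a (f x)) a).testBit n = true ↔
      (a.testBit n = true ∨ ∃ x ∈ L, (f x).testBit n = true) := by
    intro L
    induction L with
    | nil => simp
    | cons x L ih =>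
      intro a
      rw [List.foldl_cons, ih]
      have : (Nat.lor a (f x)).testBit n = (a.testBit n || (f x).testBit n) := Nat.testBit_or a (f x) n
      rw [this, Bool.or_eq_true]
      simp [or_assoc]
  rw [lors, this]
  simp

def msk (L : List ℕ) : ℕ := lors L (fun n => Nat.shiftLeft 1 n)

theorem testBit_msk (L : List ℕ) (n : ℕ) : (msk L).testBit n = true ↔ n ∈ L := by
  rw [msk, testBit_lors]
  constructor
  · rintro ⟨x, hx, h⟩
    have h : (1 <<< x).testBit n = true := h
    rw [Nat.one_shiftLeft, Nat.testBit_two_pow] at h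
    have := of_decide_eq_true h
    rwa [← this]
  · intro h
    refine ⟨n, h, ?_⟩
    change (1 <<< n).testBit n = true
    rw [Nat.one_shiftLeft, Nat.testBit_two_pow]
    simp

def eds (l : List ℕ) : List (ℕ × ℕ) := l.zip (l.rotate 1)

theorem eds_sound {l : List ℕ} {u v : ℕ} (h : (u, v) ∈ eds l) : CAdj l u v := by
  obtain ⟨i, hi, he⟩ := List.getElem_of_mem h
  simp only [eds, List.length_zip, List.length_rotate, min_self] at hi
  simp only [eds, List.getElem_zip, Prod.mk.injEq, List.getElem_rotate] at he
  refine ⟨i, ?_, ?_⟩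
  · rw [List.getElem?_eq_getElem hi, he.1]
  · rw [List.getElem?_eq_getElem (Nat.mod_lt _ (by omega)), he.2]

def chkT (t : ℕ) (cyc : ℕ → List (List ℕ)) : Bool :=
  ((List.range t).all fun i => ((cyc i).all fun l => Nat.beq l.length 3 || Nat.beq l.length 5) &&
    Nat.beq (cyc i).flatten.length (2 * t - 2) &&
    Nat.beq (msk (cyc i).flatten) (msk ((List.range (2 * t)).filter fun n => !Nat.beq (n / 2) i))) &&
  Nat.beq (lors (List.range t) fun i => lors (cyc i) fun l =>
      msk ((eds l).flatMap fun e => [e.1 * (2 * t) + e.2, e.2 * (2 * t) + e.1]))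
    (lors (List.range (2 * t)) fun p =>
      msk (((List.range (2 * t)).filter fun n => !Nat.beq (n / 2) (p / 2)).map (p * (2 * t) + ·)))

theorem chkT_sound {t : ℕ} {cyc : ℕ → List (List ℕ)} (h : chkT t cyc = true) :
    (∀ i < t, (∀ l ∈ cyc i, l.length = 3 ∨ l.length = 5) ∧ (cyc i).flatten.Nodup ∧
      ∀ n, n ∈ (cyc i).flatten ↔ n < 2 * t ∧ n / 2 ≠ i) ∧
    ∀ p q, p < 2 * t → q < 2 * t → p / 2 ≠ q / 2 → ∃ i < t, ∃ l ∈ cyc i, CAdj l p q ∨ CAdj l q p := by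
  simp only [chkT, Bool.and_eq_true, List.all_eq_true, List.mem_range, Nat.beq_eq, Bool.or_eq_true] at h
  obtain ⟨h1, h2⟩ := h
  have hmem : ∀ i < t, ∀ n, n ∈ (cyc i).flatten ↔ n < 2 * t ∧ n / 2 ≠ i := by
    intro i hi n
    rw [← testBit_msk, (h1 i hi).2, testBit_msk]
    have : (n / 2).beq i = false ↔ ¬ n / 2 = i := by
      rw [← Nat.beq_eq, Bool.not_eq_true]
    simp [this]
  refine ⟨fun i hi => ⟨(h1 i hi).1.1, ?_, hmem i hi⟩, ?_⟩
  · apply Multiset.coe_nodup.1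
    apply Multiset.toFinset_card_eq_card_iff_nodup.1
    rw [Multiset.coe_card, (h1 i hi).1.2]
    have : (((cyc i).flatten : Multiset ℕ)).toFinset =
        (Finset.range (2 * t)) \ {2 * i, 2 * i + 1} := by
      ext n
      simp only [Multiset.mem_toFinset, Multiset.mem_coe, hmem i hi, Finset.mem_sdiff,
        Finset.mem_range, Finset.mem_insert, Finset.mem_singleton]
      omega
    rw [this, Finset.card_sdiff_of_subset, Finset.card_range, Finset.card_pair (by omega)]
    intro n
    simp only [Finset.mem_range, Finset.mem_insert, Finset.mem_singleton]
    omega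
  · intro p q hp hq hpq
    have : (lors (List.range (2 * t)) fun p =>
      msk (((List.range (2 * t)).filter fun n => !Nat.beq (n / 2) (p / 2)).map
        (p * (2 * t) + ·))).testBit (p * (2 * t) + q) = true := by
      rw [testBit_lors]
      refine ⟨p, by simpa using hp, ?_⟩
      rw [testBit_msk]
      refine List.mem_map.2 ⟨q, ?_, rfl⟩
      rw [List.mem_filter]
      refine ⟨by simpa using hq, ?_⟩
      cases hb : Nat.beq (q / 2) (p / 2)
      · rfl
      · exact absurd (Nat.eq_of_beq_eq_true hb).symm hpq
    rw [← h2, testBit_lors] at this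
    obtain ⟨i, hi, this⟩ := this
    rw [testBit_lors] at this
    obtain ⟨l, hl, this⟩ := this
    rw [testBit_msk] at this
    obtain ⟨⟨u, v⟩, he, hm⟩ := List.mem_flatMap.1 this
    have hi := List.mem_range.1 hi
    have hlt : ∀ x ∈ l, x < 2 * t := fun x hx =>
      ((hmem i hi x).1 (List.mem_flatten.2 ⟨l, hl, hx⟩)).1
    have hadj := eds_sound he
    have hu : u < 2 * t := by
      obtain ⟨j, h1, h2⟩ := hadj
      exact hlt u (List.mem_of_getElem? h1)
    have hv : v < 2 * t := by
      obtain ⟨j, h1, h2⟩ := hadj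
      exact hlt v (List.mem_of_getElem? h2)
    have inj : ∀ {a b c d : ℕ}, b < 2 * t → d < 2 * t → a * (2 * t) + b = c * (2 * t) + d →
        a = c ∧ b = d := by
      intro a b c d hb hd h
      have e1 := congrArg (· % (2 * t)) h
      have e2 := congrArg (· / (2 * t)) h
      simp only [Nat.mul_add_mod', Nat.mod_eq_of_lt hb, Nat.mod_eq_of_lt hd] at e1
      refine ⟨?_, e1⟩
      subst e1
      exact Nat.eq_of_mul_eq_mul_right (by omega) (Nat.add_right_cancel h)
    refine ⟨i, hi, l, hl, ?_⟩
    simp only [List.mem_cons, List.not_mem_nil, or_false] at hm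
    rcases hm with hm | hm
    · obtain ⟨rfl, rfl⟩ := inj hq hv hm
      exact Or.inl hadj
    · obtain ⟨rfl, rfl⟩ := inj hq hu hm
      exact Or.inr hadj

theorem frame_base {t k : ℕ} (hk : 3 ≤ k) (h3 : LA 3 k) (h5 : LA 5 k) {cyc : ℕ → List (List ℕ)}
    (h : chkT t cyc = true) : Frame k (Fin t) := by
  obtain ⟨hi, hadj⟩ := chkT_sound h
  have hpt : ∀ i < t, ∀ n ∈ (cyc i).flatten, n / 2 < t := by
    intro i h1 n hn
    have := ((hi i h1).2.2 n).1 hn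
    omega
  let pt : ∀ n : ℕ, n / 2 < t → Fin t × Bool := fun n h => (⟨n / 2, h⟩, decide (n % 2 = 1))
  have pt_inj : ∀ n n' h h', pt n h = pt n' h' → n = n' := by
    intro n n' h h' e
    simp only [pt, Prod.mk.injEq, Fin.mk.injEq, decide_eq_decide] at e
    omega
  have hLA : ∀ (i : Fin t) (l : {l // l ∈ cyc i}), LA l.1.length k := by
    intro i l
    rcases (hi i i.2).1 l.1 l.2 with h | h <;> rw [h] <;> assumption
  choose f f1 f2 using hLA
  have hm : ∀ (i : Fin t) (l : {l // l ∈ cyc i}) (n : ℕ), n ∈ l.1 → n ∈ (cyc i).flatten :=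
    fun i l n hn => List.mem_flatten.2 ⟨l.1, l.2, hn⟩
  have hg : ∀ (i : Fin t) (l : {l // l ∈ cyc i}) (j : ℕ) (h : j < l.1.length), l.1[j] / 2 < t :=
    fun i l j h => hpt i i.2 _ (hm i l _ (List.getElem_mem h))
  let e : ∀ (i : Fin t) (l : {l // l ∈ cyc i}), Fin l.1.length × ZMod k → Fin t × Bool × ZMod k :=
    fun i l w => ((pt _ (hg i l w.1 w.1.2)).1, (pt _ (hg i l w.1 w.1.2)).2, w.2)
  have hnd : ∀ (i : Fin t), (∀ l ∈ cyc i, l.Nodup) ∧ (cyc i).Pairwise List.Disjoint := by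
    intro i
    exact List.nodup_flatten.1 (hi i i.2).2.1
  have ee : ∀ i l l' w w', e i l w = e i l' w' → l.1[w.1] = l'.1[w'.1] ∧ w.2 = w'.2 := by
    intro i l l' w w' h
    simp only [e, Prod.mk.injEq] at h
    exact ⟨pt_inj _ _ _ _ (Prod.ext h.1 h.2.1), h.2.2⟩
  have he : ∀ i l, Injective (e i l) := by
    rintro i l ⟨j, z⟩ ⟨j', z'⟩ h
    obtain ⟨h1, h2⟩ := ee i l l _ _ h
    have := ((hnd i).1 l.1 l.2).getElem_inj_iff.1 h1
    exact Prod.ext (Fin.ext this) h2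
  choose F F1 F2 using fun i l c => (f1 i l c).push (he i l)
  have hK : ∀ (i : Fin t) (c : ZMod k), ∃ K, Cl k {x : Fin t × Bool × ZMod k | x.1 ≠ i} K ∧
      ∀ l w, K (e i l w) = e i l (f i l c w) := by
    intro i c
    obtain ⟨K, k1, k2⟩ := Cl.glue hk (fun l => e i l '' Set.univ) (fun l => F i l c)
      (fun l => F1 i l c) (by
        rintro l l' _ ⟨w, -, rfl⟩ ⟨w', -, h⟩
        by_contra hne
        have : Std.Symm (List.Disjoint : List ℕ → List ℕ → Prop) := ⟨fun _ _ h => h.symm⟩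
        have hd := (hnd i).2.forall l.2 l'.2 (fun h => hne (Subtype.ext h))
        have := (ee _ _ _ _ _ h).1
        exact hd (List.getElem_mem w.1.2) (by
          have h3 : l'.1[w'.1] ∈ l'.1 := List.getElem_mem w'.1.2
          rw [this] at h3
          exact h3))
    refine ⟨K, ?_, ?_⟩
    · convert k1 using 1
      ext ⟨j, b, z⟩
      simp only [Set.mem_iUnion, Set.image_univ, Set.mem_range]
      constructor
      · intro hx
        have hx : j ≠ i := hx
        have hb : b.toNat < 2 := Bool.toNat_lt b
        have := ((hi i i.2).2.2 (2 * j + b.toNat)).2 ⟨by omega, by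
          intro h; exact hx (Fin.ext (by omega))⟩
        obtain ⟨l, hl, hn⟩ := List.mem_flatten.1 this
        obtain ⟨n, hn, he⟩ := List.getElem_of_mem hn
        refine ⟨⟨l, hl⟩, (⟨n, hn⟩, z), ?_⟩
        simp only [e, pt, Prod.mk.injEq, Fin.ext_iff, and_true]
        simp only [he]
        refine ⟨by omega, ?_⟩
        cases b <;> simp
      · rintro ⟨l, w, h⟩
        have h1 : (l.1[w.1] : ℕ) / 2 = j := congrArg (fun x => (x.1 : ℕ)) h
        have := (((hi i i.2).2.2 _).1 (hm i l _ (List.getElem_mem w.1.2))).2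
        intro hj
        have hj : j = i := hj
        exact this (h1.trans (congrArg Fin.val hj))
    · intro l w
      rw [k2 l _ ⟨w, trivial, rfl⟩]
      exact F2 i l c w
  choose K K1 K2 using hK
  refine ⟨K, K1, ?_⟩
  have main : ∀ (i : Fin t) (l : {l // l ∈ cyc i}) (u v : ℕ) (hu : u / 2 < t) (hv : v / 2 < t)
      (x y : ZMod k), CAdj l.1 u v → ∃ c, K i c ((pt u hu).1, (pt u hu).2, x) = ((pt v hv).1, (pt v hv).2, y) ∨
        K i c ((pt v hv).1, (pt v hv).2, y) = ((pt u hu).1, (pt u hu).2, x) := by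
    rintro i l u v hu hv x y ⟨j, h1, h2⟩
    obtain ⟨hj, rfl⟩ := List.getElem?_eq_some_iff.1 h1
    obtain ⟨hj', rfl⟩ := List.getElem?_eq_some_iff.1 h2
    obtain ⟨c, hc⟩ := f2 i l ⟨j, hj⟩ ⟨_, hj'⟩ x y rfl
    refine ⟨c, ?_⟩
    rcases hc with hc | hc
    · left
      have := K2 i c l (⟨j, hj⟩, x)
      rw [hc] at this
      exact this
    · right
      have := K2 i c l (⟨_, hj'⟩, y)
      rw [hc] at this
      exact this
  have cod : ∀ (j : Fin t) (b : Bool), ∃ n, n < 2 * t ∧ n / 2 = j ∧ ∃ h, (pt n h) = (j, b) := by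
    intro j b
    have hb : b.toNat < 2 := Bool.toNat_lt b
    refine ⟨2 * j + b.toNat, by omega, by omega, by omega, ?_⟩
    simp only [pt, Prod.mk.injEq, Fin.ext_iff]
    refine ⟨by omega, ?_⟩
    cases b <;> simp
  rintro ⟨j, b, x⟩ ⟨j', b', y⟩ hne
  obtain ⟨n, n1, n2, n3, n4⟩ := cod j b
  obtain ⟨n', n1', n2', n3', n4'⟩ := cod j' b'
  obtain ⟨i, hit, l, hl, ha⟩ := hadj n n' n1 n1' (by
    rw [n2, n2']; exact fun h => hne (Fin.ext h))
  refine ⟨⟨i, hit⟩, ?_⟩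
  rcases ha with ha | ha
  · obtain ⟨c, hc⟩ := main ⟨i, hit⟩ ⟨l, hl⟩ n n' n3 n3' x y ha
    rw [n4, n4'] at hc
    exact ⟨c, hc⟩
  · obtain ⟨c, hc⟩ := main ⟨i, hit⟩ ⟨l, hl⟩ n' n n3' n3 y x ha
    rw [n4, n4'] at hc
    exact ⟨c, hc.symm⟩

/-! ### The small frames -/

def shp (g t : ℕ) (fx : Bool) (s n : ℕ) : ℕ :=
  if fx && Nat.beq (n / 2) (t - 1) then n else 2 * ((n / 2) / g * g + ((n / 2) % g + s) % g) + n % 2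

def dev (g t p : ℕ) (fx : Bool) (base : List (List (List ℕ))) (i : ℕ) : List (List ℕ) :=
  if fx && Nat.beq i (t - 1) then
    [0, 1].flatMap fun l => (List.range (g / p)).map fun x =>
      (List.range p).map fun j => 2 * (x + j * (g / p)) + l
  else (base.getD (i / g) []).map fun c => c.map (shp g t fx (i % g))

theorem ck4 : chkT 4 (dev 3 4 3 true
    [[[2, 7, 5], [6, 3, 4]]]) = true := by
  decide +kernel

theorem ck6 : chkT 6 (dev 5 6 5 true
    [[[9, 11, 8, 10, 5], [3, 4, 7, 2, 6]]]) = true := by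
  decide +kernel

theorem ck7 : chkT 7 (dev 7 7 5 false
    [[[3, 9, 5], [11, 6, 4], [2, 13, 10], [8, 7, 12]]]) = true := by
  decide +kernel

theorem ck8 : chkT 8 (dev 1 8 5 false
    [[[13, 5, 14, 9, 7], [4, 11, 6], [12, 15, 3], [10, 2, 8]], [[15, 9, 0, 5, 1], [13, 14, 11],
    [6, 12, 8], [4, 7, 10]], [[8, 14, 6, 15, 7], [1, 2, 13], [12, 11, 0], [9, 10, 3]], [[8, 5,
    3, 11, 15], [1, 9, 12], [2, 4, 14], [13, 0, 10]], [[10, 1, 4, 12, 14], [5, 11, 7], [3, 13,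
    6], [15, 2, 0]], [[15, 4, 0, 8, 13], [3, 1, 14], [7, 12, 2], [5, 9, 6]], [[0, 6, 1, 7, 14],
    [3, 4, 8], [10, 5, 15], [9, 11, 2]], [[6, 2, 5, 12, 10], [13, 9, 4], [7, 3, 0], [11, 1,
    8]]]) = true := by
  decide +kernel

theorem ck9 : chkT 9 (dev 9 9 3 false
    [[[7, 11, 13, 10, 15], [12, 16, 8, 17, 5], [3, 6, 4], [14, 2, 9]]]) = true := by
  decide +kernel

theorem ck10 : chkT 10 (dev 9 10 3 true
    [[[17, 14, 5, 12, 10], [2, 6, 16, 13, 15], [3, 11, 7, 8, 18], [4, 19, 9]]]) = true := by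
  decide +kernel

theorem ck11 : chkT 11 (dev 11 11 5 false
    [[[4, 17, 12, 20, 14], [9, 19, 2], [5, 18, 16], [3, 6, 10], [8, 11, 7], [15, 13, 21]]]) = true := by
  decide +kernel

theorem ck12 : chkT 12 (dev 3 12 3 false
    [[[11, 15, 9, 7, 12], [4, 18, 5, 14, 23], [17, 21, 8], [20, 3, 19], [16, 2, 13], [6, 22,
    10]], [[0, 2, 8, 16, 5], [17, 4, 11, 20, 15], [21, 23, 3], [12, 19, 9], [13, 1, 22], [18,
    14, 10]], [[10, 17, 3, 9, 0], [7, 21, 4, 16, 15], [19, 8, 14], [18, 11, 22], [5, 6, 1],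
    [23, 2, 20]], [[10, 15, 23, 17, 1], [8, 7, 3, 11, 0], [22, 16, 14], [2, 5, 12], [9, 6, 21],
    [20, 4, 13]]]) = true := by
  decide +kernel

theorem ck13 : chkT 13 (dev 13 13 5 false
    [[[5, 6, 23], [16, 18, 13], [4, 22, 7], [25, 15, 11], [17, 19, 12], [14, 24, 10], [21, 8,
    2], [9, 3, 20]]]) = true := by
  decide +kernel

theorem ck14 : chkT 14 (dev 7 14 5 false
    [[[27, 5, 6, 17, 12], [24, 13, 2], [25, 8, 4], [19, 9, 14], [16, 15, 22], [18, 21, 3], [11,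
    7, 20], [26, 10, 23]], [[19, 5, 11, 23, 25], [4, 18, 27], [8, 3, 0], [22, 10, 12], [13, 20,
    16], [9, 2, 7], [26, 24, 6], [17, 21, 1]]]) = true := by
  decide +kernel

theorem ck15 : chkT 15 (dev 15 15 3 false
    [[[11, 2, 8, 20, 19], [21, 14, 29, 17, 24], [4, 25, 12], [23, 9, 28], [10, 15, 13], [7, 27,
    3], [26, 22, 6], [18, 5, 16]]]) = true := by
  decide +kernel

theorem ck16 : chkT 16 (dev 15 16 3 true
    [[[8, 26, 19], [27, 14, 31], [24, 22, 18], [5, 28, 20], [25, 23, 4], [30, 6, 3], [10, 13,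
    9], [29, 17, 12], [7, 15, 21], [2, 11, 16]]]) = true := by
  decide +kernel

theorem ck17 : chkT 17 (dev 17 17 5 false
    [[[5, 31, 4, 12, 7], [16, 26, 32], [6, 10, 23], [13, 28, 8], [19, 3, 15], [9, 29, 22], [18,
    20, 17], [25, 2, 14], [11, 21, 30], [24, 33, 27]]]) = true := by
  decide +kernel

theorem ck18 : chkT 18 (dev 9 18 3 false
    [[[8, 5, 9, 16, 6], [24, 19, 21, 18, 35], [17, 20, 27], [32, 12, 23], [2, 7, 15], [13, 33,
    25], [14, 31, 26], [28, 11, 34], [22, 30, 3], [4, 10, 29]], [[32, 4, 28, 24, 16], [5, 23,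
    26, 8, 30], [14, 35, 29], [21, 17, 25], [12, 15, 3], [7, 31, 0], [11, 27, 13], [22, 20, 9],
    [34, 2, 1], [10, 6, 33]]]) = true := by
  decide +kernel

theorem ck19 : chkT 19 (dev 19 19 5 false
    [[[36, 29, 23, 25, 17], [27, 15, 5, 34, 11], [14, 31, 10, 28, 13], [33, 22, 26], [6, 18,
    20], [16, 3, 7], [35, 21, 32], [2, 30, 8], [37, 24, 19], [9, 12, 4]]]) = true := by
  decide +kernel

theorem ck22 : chkT 22 (dev 21 22 3 true
    [[[27, 7, 17, 43, 4], [33, 14, 41, 30, 35], [38, 37, 16, 5, 32], [8, 21, 12], [22, 19, 24],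
    [39, 3, 10], [18, 40, 28], [15, 11, 23], [36, 20, 2], [9, 25, 34], [26, 42, 29], [31, 13,
    6]]]) = true := by
  decide +kernel

theorem ck23 : chkT 23 (dev 23 23 5 false
    [[[12, 16, 33, 4, 36], [10, 13, 17], [11, 45, 30], [3, 5, 23], [18, 9, 31], [6, 42, 29],
    [2, 27, 37], [38, 43, 44], [22, 19, 34], [39, 20, 28], [35, 14, 40], [15, 7, 21], [8, 26,
    24], [41, 25, 32]]]) = true := by
  decide +kernel

theorem ck26 : chkT 26 (dev 25 26 5 true
    [[[32, 28, 17, 43, 24], [40, 22, 5], [37, 15, 23], [36, 51, 49], [48, 19, 35], [29, 11, 9],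
    [10, 13, 8], [6, 3, 41], [21, 44, 25], [46, 39, 45], [14, 31, 20], [7, 12, 34], [33, 26,
    42], [27, 50, 2], [18, 47, 38], [16, 4, 30]]]) = true := by
  decide +kernel

theorem ck27 : chkT 27 (dev 27 27 3 false
    [[[3, 46, 49, 19, 21], [25, 32, 17, 30, 2], [44, 27, 53], [37, 29, 51], [5, 26, 34], [40,
    52, 38], [11, 7, 45], [9, 50, 18], [36, 31, 43], [41, 12, 47], [48, 10, 15], [14, 24, 13],
    [35, 20, 16], [22, 28, 4], [8, 42, 39], [6, 33, 23]]]) = true := by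
  decide +kernel


theorem td5 {k m r : ℕ} (hk : 3 ≤ k) (hm0 : 0 < m) (h2 : m % 2 = 1) (h3 : m % 3 ≠ 0) (hr : r ≤ m)
    (hF4 : Frame k (Fin 4)) (hF5 : Frame k (Fin 5)) (hm : Frame k (Fin m)) (hF : Frame k (Fin r)) :
    Frame k (Fin (4 * m + r)) := by
  have c2 : Nat.Coprime 2 m := (Nat.Prime.coprime_iff_not_dvd Nat.prime_two).2 (by omega)
  have c3 : Nat.Coprime 3 m := (Nat.Prime.coprime_iff_not_dvd Nat.prime_three).2 (by omega)
  have c4 : Nat.Coprime 4 m := Nat.Coprime.mul_left c2 c2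
  have := Frame.td (g := 5) hk hm0 (fun d h1 h5 => by interval_cases d <;> first | exact Nat.coprime_one_left m | assumption)
    (fun j => if (j : ℕ) < 4 then m else r) (fun j => by split_ifs <;> omega)
    (fun j hj => if_pos hj) (by norm_num)
    (fun j => by by_cases h : (j : ℕ) < 4 <;> simp only [h, if_true, if_false] <;> assumption)
    (fun s h1 h5 => by interval_cases s <;> assumption)
  have hs : (∑ j : Fin 5, if (j : ℕ) < 4 then m else r) = 4 * m + r := by
    simp [Fin.sum_univ_succ]; omega
  rwa [hs] at this

theorem td7 {k m a b c : ℕ} (hk : 3 ≤ k) (hm0 : 0 < m) (h2 : m % 2 = 1) (h3 : m % 3 ≠ 0)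
    (h5 : m % 5 ≠ 0) (ha : a ≤ m) (hb : b ≤ m) (hc : c ≤ m)
    (hF4 : Frame k (Fin 4)) (hF5 : Frame k (Fin 5)) (hF6 : Frame k (Fin 6)) (hF7 : Frame k (Fin 7))
    (hm : Frame k (Fin m)) (hFa : Frame k (Fin a)) (hFb : Frame k (Fin b)) (hFc : Frame k (Fin c)) :
    Frame k (Fin (4 * m + a + b + c)) := by
  have c2 : Nat.Coprime 2 m := (Nat.Prime.coprime_iff_not_dvd Nat.prime_two).2 (by omega)
  have c3 : Nat.Coprime 3 m := (Nat.Prime.coprime_iff_not_dvd Nat.prime_three).2 (by omega)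
  have c5 : Nat.Coprime 5 m := (Nat.Prime.coprime_iff_not_dvd Nat.prime_five).2 (by omega)
  have c4 : Nat.Coprime 4 m := Nat.Coprime.mul_left c2 c2
  have c6 : Nat.Coprime 6 m := Nat.Coprime.mul_left c2 c3
  have := Frame.td (g := 7) hk hm0 (fun d h1 h5 => by interval_cases d <;> first | exact Nat.coprime_one_left m | assumption)
    (fun j => if (j : ℕ) < 4 then m else if (j : ℕ) = 4 then a else if (j : ℕ) = 5 then b else c)
    (fun j => by split_ifs <;> omega)
    (fun j hj => if_pos hj) (by norm_num)
    (fun j => by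
      by_cases h : (j : ℕ) < 4 <;> by_cases h' : (j : ℕ) = 4 <;> by_cases h'' : (j : ℕ) = 5 <;>
      simp only [h, h', h'', if_true, if_false] <;> assumption)
    (fun s h1 h5 => by interval_cases s <;> assumption)
  have hs : (∑ j : Fin 7, if (j : ℕ) < 4 then m else if (j : ℕ) = 4 then a
      else if (j : ℕ) = 5 then b else c) = 4 * m + a + b + c := by
    simp [Fin.sum_univ_succ]; omega
  rwa [hs] at this

theorem frames {k : ℕ} (hk : 3 ≤ k) (h3 : LA 3 k) (h5 : LA 5 k) (f5 : Frame k (Fin 5)) :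
    ∀ t, 4 ≤ t → Frame k (Fin t) := by
  intro t
  induction t using Nat.strong_induction_on with
  | _ t ih =>
    intro ht
    have f0 : Frame k (Fin 0) := Frame.sub
    have f1 : Frame k (Fin 1) := Frame.sub
    have f4 := frame_base hk h3 h5 ck4
    have f6 := frame_base hk h3 h5 ck6
    have f7 := frame_base hk h3 h5 ck7
    have key : ∀ m r, 4 ≤ m → m % 2 = 1 → m % 3 ≠ 0 → r ≤ m → r ≠ 2 → r ≠ 3 → t = 4 * m + r →
        Frame k (Fin t) := by
      intro m r hm h2 h3 hr r2 r3 e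
      have hFr : Frame k (Fin r) := by
        rcases Nat.lt_or_ge r 4 with h | h
        · interval_cases r <;> first | assumption | omega
        · exact ih r (by omega) h
      rw [e]
      exact td5 hk (by omega) h2 h3 hr f4 f5 (ih m (by omega) hm) hFr
    have key7 : ∀ m a b c, 4 ≤ m → m % 2 = 1 → m % 3 ≠ 0 → m % 5 ≠ 0 → a ≤ m → b ≤ m → c ≤ m →
        Frame k (Fin a) → Frame k (Fin b) → Frame k (Fin c) → t = 4 * m + a + b + c →
        Frame k (Fin t) := by
      intro m a b c hm h2 h3 h5 ha hb hc fa fb fc e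
      rw [e]
      exact td7 hk (by omega) h2 h3 h5 ha hb hc f4 f5 f6 f7 (ih m (by omega) hm) fa fb fc
    rcases Nat.lt_or_ge t 72 with hlt | hge
    · clear ih
      interval_cases t
      · exact f4
      · exact f5
      · exact f6
      · exact f7
      · exact frame_base hk h3 h5 ck8
      · exact frame_base hk h3 h5 ck9
      · exact frame_base hk h3 h5 ck10
      · exact frame_base hk h3 h5 ck11
      · exact frame_base hk h3 h5 ck12
      · exact frame_base hk h3 h5 ck13
      · exact frame_base hk h3 h5 ck14
      · exact frame_base hk h3 h5 ck15
      · exact frame_base hk h3 h5 ck16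
      · exact frame_base hk h3 h5 ck17
      · exact frame_base hk h3 h5 ck18
      · exact frame_base hk h3 h5 ck19
      · exact key 5 0 (by norm_num) rfl (by norm_num) (by norm_num) (by norm_num) (by norm_num) rfl
      · exact key 5 1 (by norm_num) rfl (by norm_num) (by norm_num) (by norm_num) (by norm_num) rfl
      · exact frame_base hk h3 h5 ck22
      · exact frame_base hk h3 h5 ck23
      · exact key 5 4 (by norm_num) rfl (by norm_num) (by norm_num) (by norm_num) (by norm_num) rfl
      · exact key 5 5 (by norm_num) rfl (by norm_num) (by norm_num) (by norm_num) (by norm_num) rfl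
      · exact frame_base hk h3 h5 ck26
      · exact frame_base hk h3 h5 ck27
      · exact key 7 0 (by norm_num) rfl (by norm_num) (by norm_num) (by norm_num) (by norm_num) rfl
      · exact key 7 1 (by norm_num) rfl (by norm_num) (by norm_num) (by norm_num) (by norm_num) rfl
      · exact key7 7 0 1 1 (by norm_num) rfl (by norm_num) (by norm_num) (by norm_num) (by norm_num) (by norm_num)
          f0 f1 f1 rfl
      · exact key7 7 1 1 1 (by norm_num) rfl (by norm_num) (by norm_num) (by norm_num) (by norm_num) (by norm_num)
          f1 f1 f1 rfl
      · exact key 7 4 (by norm_num) rfl (by norm_num) (by norm_num) (by norm_num) (by norm_num) rfl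
      · exact key 7 5 (by norm_num) rfl (by norm_num) (by norm_num) (by norm_num) (by norm_num) rfl
      · exact key 7 6 (by norm_num) rfl (by norm_num) (by norm_num) (by norm_num) (by norm_num) rfl
      · exact key 7 7 (by norm_num) rfl (by norm_num) (by norm_num) (by norm_num) (by norm_num) rfl
      · exact key7 7 0 1 7 (by norm_num) rfl (by norm_num) (by norm_num) (by norm_num) (by norm_num) (by norm_num)
          f0 f1 f7 rfl
      · exact key7 7 0 4 5 (by norm_num) rfl (by norm_num) (by norm_num) (by norm_num) (by norm_num) (by norm_num)
          f0 f4 f5 rfl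
      · exact key7 7 0 4 6 (by norm_num) rfl (by norm_num) (by norm_num) (by norm_num) (by norm_num) (by norm_num)
          f0 f4 f6 rfl
      · exact key7 7 0 4 7 (by norm_num) rfl (by norm_num) (by norm_num) (by norm_num) (by norm_num) (by norm_num)
          f0 f4 f7 rfl
      · exact key7 7 0 5 7 (by norm_num) rfl (by norm_num) (by norm_num) (by norm_num) (by norm_num) (by norm_num)
          f0 f5 f7 rfl
      · exact key7 7 0 6 7 (by norm_num) rfl (by norm_num) (by norm_num) (by norm_num) (by norm_num) (by norm_num)
          f0 f6 f7 rfl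
      · exact key7 7 0 7 7 (by norm_num) rfl (by norm_num) (by norm_num) (by norm_num) (by norm_num) (by norm_num)
          f0 f7 f7 rfl
      · exact key7 7 1 7 7 (by norm_num) rfl (by norm_num) (by norm_num) (by norm_num) (by norm_num) (by norm_num)
          f1 f7 f7 rfl
      · exact key 11 0 (by norm_num) rfl (by norm_num) (by norm_num) (by norm_num) (by norm_num) rfl
      · exact key 11 1 (by norm_num) rfl (by norm_num) (by norm_num) (by norm_num) (by norm_num) rfl
      · exact key7 7 4 7 7 (by norm_num) rfl (by norm_num) (by norm_num) (by norm_num) (by norm_num) (by norm_num)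
          f4 f7 f7 rfl
      · exact key7 7 5 7 7 (by norm_num) rfl (by norm_num) (by norm_num) (by norm_num) (by norm_num) (by norm_num)
          f5 f7 f7 rfl
      · exact key 11 4 (by norm_num) rfl (by norm_num) (by norm_num) (by norm_num) (by norm_num) rfl
      · exact key 11 5 (by norm_num) rfl (by norm_num) (by norm_num) (by norm_num) (by norm_num) rfl
      · exact key 11 6 (by norm_num) rfl (by norm_num) (by norm_num) (by norm_num) (by norm_num) rfl
      · exact key 11 7 (by norm_num) rfl (by norm_num) (by norm_num) (by norm_num) (by norm_num) rfl
      · exact key 11 8 (by norm_num) rfl (by norm_num) (by norm_num) (by norm_num) (by norm_num) rfl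
      · exact key 11 9 (by norm_num) rfl (by norm_num) (by norm_num) (by norm_num) (by norm_num) rfl
      · exact key 11 10 (by norm_num) rfl (by norm_num) (by norm_num) (by norm_num) (by norm_num) rfl
      · exact key 11 11 (by norm_num) rfl (by norm_num) (by norm_num) (by norm_num) (by norm_num) rfl
      · exact key 13 4 (by norm_num) rfl (by norm_num) (by norm_num) (by norm_num) (by norm_num) rfl
      · exact key 13 5 (by norm_num) rfl (by norm_num) (by norm_num) (by norm_num) (by norm_num) rfl
      · exact key 13 6 (by norm_num) rfl (by norm_num) (by norm_num) (by norm_num) (by norm_num) rfl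
      · exact key 13 7 (by norm_num) rfl (by norm_num) (by norm_num) (by norm_num) (by norm_num) rfl
      · exact key 13 8 (by norm_num) rfl (by norm_num) (by norm_num) (by norm_num) (by norm_num) rfl
      · exact key 13 9 (by norm_num) rfl (by norm_num) (by norm_num) (by norm_num) (by norm_num) rfl
      · exact key 13 10 (by norm_num) rfl (by norm_num) (by norm_num) (by norm_num) (by norm_num) rfl
      · exact key 13 11 (by norm_num) rfl (by norm_num) (by norm_num) (by norm_num) (by norm_num) rfl
      · exact key 13 12 (by norm_num) rfl (by norm_num) (by norm_num) (by norm_num) (by norm_num) rfl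
      · exact key 13 13 (by norm_num) rfl (by norm_num) (by norm_num) (by norm_num) (by norm_num) rfl
      · exact key7 13 0 7 7 (by norm_num) rfl (by norm_num) (by norm_num) (by norm_num) (by norm_num) (by norm_num)
          f0 f7 f7 rfl
      · exact key7 13 1 7 7 (by norm_num) rfl (by norm_num) (by norm_num) (by norm_num) (by norm_num) (by norm_num)
          f1 f7 f7 rfl
      · exact key 17 0 (by norm_num) rfl (by norm_num) (by norm_num) (by norm_num) (by norm_num) rfl
      · exact key 17 1 (by norm_num) rfl (by norm_num) (by norm_num) (by norm_num) (by norm_num) rfl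
      · exact key7 13 4 7 7 (by norm_num) rfl (by norm_num) (by norm_num) (by norm_num) (by norm_num) (by norm_num)
          f4 f7 f7 rfl
      · exact key7 13 5 7 7 (by norm_num) rfl (by norm_num) (by norm_num) (by norm_num) (by norm_num) (by norm_num)
          f5 f7 f7 rfl
    · obtain ⟨n, u, hu, e⟩ : ∃ n u, u < 24 ∧ t = 24 * n + u :=
        ⟨t / 24, t % 24, Nat.mod_lt _ (by norm_num), by omega⟩
      by_cases h : 4 ≤ u ∧ u ≠ 6 ∧ u ≠ 7
      · exact key (6 * n + 1) (u - 4) (by omega) (by omega) (by omega) (by omega) (by omega) (by omega)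
          (by omega)
      · exact key (6 * n - 1) (u + 4) (by omega) (by omega) (by omega) (by omega) (by omega) (by omega)
          (by omega)

/-! ### Symbolic data -/

theorem ckA31 : chkA 3 (5, 4)
    [[.z 1 0 (0, 2) (0, 0) true (0, 1), .p 2 (0, 1), .p 1 (1, 3), .p 2 (2, 3), .p 0 (0, 1), .p 2
     (1, 3), .z 1 2 (3, 3) (0, 3) false (-1, 1), .p 1 (2, 4), .p 0 (4, 4)],
    [.z 2 1 (0, 2) (0, 0) true (0, 1), .p 0 (2, 3), .p 1 (0, 1), .p 0 (1, 3), .z 2 0 (3, 3) (0,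
     3) false (-1, 1), .p 2 (2, 4), .p 0 (3, 4), .p 2 (3, 4), .p 1 (4, 4)],
    [.z 0 2 (0, 2) (0, 0) true (0, 1), .p 1 (2, 3), .z 0 1 (3, 3) (0, 3) false (-1, 1), .p 0 (2,
     4), .p 1 (3, 4), .p 2 (1, 2), .p 1 (1, 2), .p 0 (1, 2), .p 2 (4, 4)]] = true := by
  decide +kernel

theorem ckA51 : chkA 5 (1, 4)
    [[.z 0 1 (0, 0) (-2, 2) false (-1, 1), .p 0 (-1, 1), .z 1 2 (1, 3) (-1, 3) false (-1, 1), .p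
     3 (0, 2), .p 4 (0, 2), .p 3 (0, 4), .p 4 (-1, 2)],
    [.z 1 2 (0, 0) (-2, 2) false (-1, 1), .p 1 (-1, 1), .z 2 3 (1, 3) (-1, 3) false (-1, 1), .p 4
     (0, 4), .p 0 (-1, 2), .p 1 (-1, 2), .p 0 (0, 2)],
    [.z 2 3 (0, 0) (-2, 2) false (-1, 1), .p 4 (-1, 1), .p 0 (0, 3), .p 4 (0, 3), .z 0 1 (1, 3)
     (-1, 3) false (-1, 1), .p 2 (0, 4), .p 3 (-1, 2)],
    [.z 3 4 (0, 0) (-2, 2) false (-1, 1), .p 3 (-1, 1), .z 4 0 (1, 3) (-1, 3) false (-1, 1), .p 1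
     (0, 4), .p 2 (0, 2), .p 1 (0, 2), .p 2 (-1, 2)],
    [.z 4 0 (0, 0) (-2, 2) false (-1, 1), .p 1 (0, 3), .p 2 (-1, 1), .p 3 (0, 3), .p 2 (0, 3), .z
     3 4 (1, 3) (-1, 3) false (-1, 1), .p 0 (0, 4)]] = true := by
  decide +kernel

theorem ckB1 : chkB (1, 4) (1, 4) (2, 0) 0 (-2, 2)
    [[.z 0 0 (0, 0) (-2, 4) false (-1, 1), .z 0 1 (-1, 3) (2, 1) true (0, 1), .p 0 (0, 4), .p 1
     (1, 0), .p 2 (0, 0)],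
    [.z 1 1 (2, 0) (0, 0) false (-1, 1), .p 1 (1, 1), .p 1 (1, 3), .p 1 (2, 3), .z 0 1 (-1, 1)
     (0, 3) false (-1, 1), .p 0 (-1, 2), .p 0 (-1, 4)]] = true := by
  decide +kernel

theorem ckC1 : chkB (1, 4) (3, 12) (3, 0) 0 (-1, 1)
    [[.z 0 0 (3, 11) (-1, 3) false (-1, 1), .p 0 (-1, 0), .p 0 (1, 4), .z 0 1 (3, 10) (-2, 1)
     false (-1, 1), .p 0 (2, 5), .p 0 (2, 9), .p 1 (1, 4)],
    [.z 0 1 (3, 7) (1, 12) false (0, 1), .p 0 (2, 10), .z 1 0 (1, 3) (1, 10) false (-1, 1), .p 1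
     (0, 4), .p 0 (2, 7)],
    [.z 0 1 (0, 1) (-2, 2) false (-1, 1), .p 0 (-1, 2), .p 1 (0, 3), .p 0 (0, 4), .p 1 (0, 9), .p
     1 (-2, 3), .z 1 1 (1, 9) (-3, 3) false (-1, 1)],
    [.z 1 1 (1, 5) (-2, 7) false (-1, 1), .p 1 (0, 8), .p 0 (1, 5), .p 0 (3, 5), .z 1 0 (2, 4)
     (1, 7) false (-1, 1), .p 0 (0, 2), .p 1 (-1, 7)],
    [.z 0 0 (-1, 4) (3, 8) true (-1, 1), .p 0 (2, 11), .p 0 (0, 3), .p 1 (-1, 0), .p 2 (0, 0), .z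
     0 0 (4, 5) (0, 5) false (-1, 1), .p 1 (-1, 1)],
    [.z 1 1 (-1, 8) (1, 10) true (0, 1), .p 1 (-1, 3), .p 1 (1, 11), .z 0 1 (0, 0) (-1, 9) false
     (-1, 1), .p 1 (0, 10)]] = true := by
  decide +kernel

theorem ckF1 : chkF (1, 4)
    [[.p 6 (0, 4), .p 5 (-1, 3), .p 8 (1, 2), .p 4 (-1, 2), .z 3 6 (0, 3) (0, 0) true (-1, 1), .p
     3 (1, 2), .z 9 5 (0, 4) (0, 2) true (-1, 1)],
    [.z 8 3 (1, 1) (0, 2) false (-1, 1), .p 9 (-1, 1), .p 5 (-1, 1), .p 9 (0, 1), .p 6 (-1, 2),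
     .z 4 7 (-2, 2) (1, 3) true (-1, 1), .p 2 (0, 1)],
    [.z 4 6 (0, 0) (-2, 2) false (-1, 1), .p 8 (1, 3), .p 6 (-1, 1), .p 3 (0, 4), .p 6 (0, 3), .p
     2 (-1, 1), .z 4 2 (2, 3) (-2, 1) false (-1, 1)],
    [.p 4 (0, 3), .p 2 (1, 1), .p 9 (0, 2), .p 4 (1, 3), .z 3 9 (-1, 4) (0, 0) true (-1, 1), .p 7
     (-1, 3), .z 8 7 (2, 2) (-2, 3) false (-1, 1)],
    [.p 7 (0, 4), .p 4 (-1, 3), .p 9 (1, 2), .p 5 (-1, 2), .z 2 7 (0, 3) (0, 0) true (-1, 1), .p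
     2 (1, 2), .z 8 4 (0, 4) (0, 2) true (-1, 1)],
    [.z 9 2 (1, 1) (0, 2) false (-1, 1), .p 8 (-1, 1), .p 4 (-1, 1), .p 8 (0, 1), .p 7 (-1, 2),
     .z 5 6 (-2, 2) (1, 3) true (-1, 1), .p 3 (0, 1)],
    [.z 5 7 (0, 0) (-2, 2) false (-1, 1), .p 9 (1, 3), .p 7 (-1, 1), .p 2 (0, 4), .p 7 (0, 3), .p
     3 (-1, 1), .z 5 3 (2, 3) (-2, 1) false (-1, 1)],
    [.p 5 (0, 3), .p 3 (1, 1), .p 8 (0, 2), .p 5 (1, 3), .z 2 8 (-1, 4) (0, 0) true (-1, 1), .p 6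
     (-1, 3), .z 9 6 (2, 2) (-2, 3) false (-1, 1)]] = true := by
  decide +kernel

theorem ckA33 : chkA 3 (3, 4)
    [[.z 0 1 (0, 0) (-1, 2) false (-1, 1), .p 0 (-1, 1), .p 1 (0, 1), .p 2 (-1, 1), .p 1 (1, 3),
     .p 2 (0, 1), .p 0 (0, 3), .z 2 0 (2, 3) (-1, 3) false (-1, 1), .p 2 (1, 4)],
    [.z 1 2 (0, 0) (-1, 2) false (-1, 1), .z 0 1 (2, 3) (-1, 3) false (-1, 1), .p 0 (1, 4), .p 2
     (-1, 0), .p 1 (-1, 0), .p 0 (0, 2), .p 1 (0, 2), .p 0 (-1, 0), .p 2 (0, 2)],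
    [.z 2 0 (0, 0) (-1, 2) false (-1, 1), .p 1 (-1, 1), .p 0 (0, 1), .p 1 (0, 3), .p 2 (1, 3), .p
     0 (1, 3), .p 2 (0, 3), .z 1 2 (2, 3) (-1, 3) false (-1, 1), .p 1 (1, 4)]] = true := by
  decide +kernel

theorem ckA53 : chkA 5 (7, 4)
    [[.p 1 (1, 2), .z 0 4 (4, 4) (0, 0) true (0, 1), .p 3 (4, 3), .p 4 (2, 3), .p 0 (4, 3), .p 1
     (0, 1), .p 2 (1, 3), .z 1 0 (0, 3) (1, 1) true (-1, 1), .p 4 (1, 2), .p 3 (5, 4), .p 2 (0,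
     2)],
    [.p 3 (0, 1), .p 4 (4, 3), .z 0 1 (-1, 1) (5, 3) true (0, 1), .p 0 (-1, 0), .z 1 2 (-1, 2)
     (2, 2) true (-1, 1), .p 3 (1, 3), .p 2 (2, 3), .p 1 (4, 3), .p 2 (4, 3), .p 3 (2, 3), .p 2
     (0, 1)],
    [.z 2 3 (-1, 2) (2, 2) true (-1, 1), .p 4 (1, 3), .p 0 (2, 3), .p 4 (3, 3), .p 3 (3, 3), .z 2
     3 (-1, 1) (5, 3) true (0, 1), .p 4 (-1, 0), .p 0 (0, 2), .p 1 (5, 4), .p 2 (1, 2), .p 1 (-1,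
     0)],
    [.p 4 (0, 2), .p 0 (5, 4), .p 4 (5, 4), .p 3 (0, 2), .p 2 (-1, 0), .z 3 4 (-1, 2) (2, 2) true
     (-1, 1), .z 3 4 (-1, 1) (5, 3) true (0, 1), .p 0 (1, 2), .p 1 (0, 2), .p 2 (5, 4), .p 3 (1,
     2)],
    [.p 0 (1, 3), .p 1 (2, 3), .p 0 (0, 1), .p 1 (1, 3), .p 2 (3, 3), .z 1 2 (-1, 1) (5, 3) true
     (0, 1), .p 3 (-1, 0), .z 4 0 (-1, 2) (2, 2) true (-1, 1), .p 4 (0, 1), .p 0 (3, 3), .p 1 (3,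
     3)]] = true := by
  decide +kernel

theorem ckB3 : chkB (3, 4) (3, 4) (1, 0) 0 (0, 3)
    [[.z 1 1 (-9, 2) (-11, 2) false (-1, 1), .p 1 (-10, 3), .p 1 (-12, 1), .p 0 (0, 4), .p 1
     (-10, 1), .p 1 (-11, 1), .p 0 (-1, 0), .z 0 0 (-2, 2) (0, 0) true (-1, 1), .p 1 (-9, 4)],
    [.z 0 1 (-2, 3) (-8, 4) true (-1, 1), .p 0 (1, 4), .p 0 (-1, 2), .p 2 (0, 0), .z 1 0 (-9, 3)
     (-1, 4) false (-1, 1), .p 1 (-10, 2), .p 0 (-1, 3), .p 0 (-1, 1), .p 1 (-10, 4)]] = true := by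
  decide +kernel

theorem ckC3 : chkB (3, 4) (9, 12) (3, 0) 0 (6, 7)
    [[.p 0 (4, 7), .z 0 0 (2, 3) (0, 1) true (0, 1), .p 0 (1, 2), .p 0 (4, 6), .p 0 (7, 8), .p 0
     (2, 2), .z 0 1 (5, 8) (8, 9) true (-1, 1)],
    [.z 0 1 (9, 10) (7, 9) false (0, 1), .p 0 (4, 5), .p 1 (5, 8), .p 1 (-1, 0), .p 1 (7, 10), .z
     0 0 (6, 9) (5, 5) true (-1, 1), .p 1 (0, 1)],
    [.z 1 1 (2, 2) (4, 8) false (0, 1), .p 0 (6, 8), .p 1 (1, 1), .p 0 (0, 2), .p 1 (2, 3), .z 0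
     1 (2, 4) (9, 11) true (-1, 1), .p 0 (3, 5)],
    [.z 1 1 (5, 5) (2, 7) false (-1, 1), .p 1 (6, 8), .p 0 (3, 3), .z 1 0 (2, 4) (8, 9) true (0,
     1), .p 1 (4, 7), .p 0 (8, 10), .p 1 (3, 7)],
    [.z 0 0 (2, 5) (9, 11) true (0, 1), .p 1 (-1, 1), .p 1 (8, 11), .z 1 0 (-2, 1) (0, 0) true
     (-1, 1), .p 0 (-1, 1), .p 2 (0, 0), .p 1 (7, 8)],
    [.z 0 1 (3, 7) (9, 10) true (-1, 1), .p 1 (4, 5), .z 1 1 (2, 1) (3, 5) false (0, 1), .p 1 (8,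
     10), .p 0 (5, 7), .p 1 (3, 4), .p 0 (7, 9)]] = true := by
  decide +kernel

theorem ckF3 : chkF (3, 4)
    [[.z 6 4 (3, 3) (1, 2) false (-1, 1), .p 6 (-1, 0), .p 4 (1, 1), .p 2 (1, 2), .z 6 2 (0, 2)
     (2, 2) true (0, 1), .p 6 (0, 1), .p 3 (-1, 0)],
    [.p 8 (0, 2), .p 7 (2, 2), .p 8 (1, 4), .z 6 4 (-1, 1) (0, 0) true (0, 1), .z 3 4 (2, 1) (0,
     3) false (-1, 1), .p 8 (-1, 0), .p 4 (-1, 0)],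
    [.z 8 4 (0, 0) (1, 4) false (-1, 1), .p 8 (-1, 1), .p 2 (0, 1), .p 5 (0, 1), .p 7 (1, 2), .z
     9 2 (1, 3) (1, 4) false (0, 1), .p 5 (1, 3)],
    [.p 8 (-1, 2), .z 7 8 (3, 2) (-2, 2) false (-1, 1), .z 3 8 (0, 0) (0, 3) false (0, 1), .p 5
     (2, 3), .p 2 (1, 1), .p 5 (2, 1), .p 6 (2, 3)],
    [.z 7 5 (3, 3) (1, 2) false (-1, 1), .p 7 (-1, 0), .p 5 (1, 1), .p 3 (1, 2), .z 7 3 (0, 2)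
     (2, 2) true (0, 1), .p 7 (0, 1), .p 2 (-1, 0)],
    [.p 9 (0, 2), .p 6 (2, 2), .p 9 (1, 4), .z 7 5 (-1, 1) (0, 0) true (0, 1), .z 2 5 (2, 1) (0,
     3) false (-1, 1), .p 9 (-1, 0), .p 5 (-1, 0)],
    [.z 9 5 (0, 0) (1, 4) false (-1, 1), .p 9 (-1, 1), .p 3 (0, 1), .p 4 (0, 1), .p 6 (1, 2), .z
     8 3 (1, 3) (1, 4) false (0, 1), .p 4 (1, 3)],
    [.p 9 (-1, 2), .z 6 9 (3, 2) (-2, 2) false (-1, 1), .z 2 9 (0, 0) (0, 3) false (0, 1), .p 4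
     (2, 3), .p 3 (1, 1), .p 4 (2, 1), .p 7 (2, 3)]] = true := by
  decide +kernel

theorem ckA511 : chkA 5 (11, 0)
    [[.p 0 (0, 0), .p 4 (8, 0), .p 3 (9, 0), .p 2 (10, 0), .p 3 (2, 0), .p 2 (5, 0), .p 3 (6, 0),
     .p 2 (4, 0), .p 1 (4, 0), .p 2 (6, 0), .p 1 (3, 0)],
    [.p 1 (0, 0), .p 0 (2, 0), .p 4 (5, 0), .p 3 (8, 0), .p 4 (6, 0), .p 3 (4, 0), .p 4 (7, 0),
     .p 3 (1, 0), .p 2 (1, 0), .p 3 (7, 0), .p 2 (9, 0)],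
    [.p 2 (0, 0), .p 1 (6, 0), .p 0 (4, 0), .p 4 (2, 0), .p 0 (7, 0), .p 4 (1, 0), .p 0 (10, 0),
     .p 4 (3, 0), .p 3 (3, 0), .p 4 (10, 0), .p 3 (5, 0)],
    [.p 3 (0, 0), .p 2 (7, 0), .p 1 (1, 0), .p 0 (6, 0), .p 1 (10, 0), .p 0 (3, 0), .p 1 (8, 0),
     .p 0 (9, 0), .p 4 (9, 0), .p 0 (8, 0), .p 4 (4, 0)],
    [.p 4 (0, 0), .p 3 (10, 0), .p 2 (3, 0), .p 1 (7, 0), .p 2 (8, 0), .p 1 (9, 0), .p 2 (2, 0),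
     .p 1 (5, 0), .p 0 (5, 0), .p 1 (2, 0), .p 0 (1, 0)]] = true := by
  decide +kernel

theorem ord1 {k : ℕ} : addOrderOf (((1 : ℤ)) : ZMod (k * 1)) = k := by
  rw [mul_one]
  simp [ZMod.addOrderOf_one]

theorem ord2 {k : ℕ} (hk : k % 2 = 1) : addOrderOf (((2 : ℤ)) : ZMod (k * 1)) = k := by
  rw [mul_one]
  have h : (((2 : ℤ)) : ZMod k) = ((2 : ℕ) : ZMod k) := by norm_cast
  rw [h, ZMod.addOrderOf_coe _ (by omega)]
  have : Nat.Coprime k 2 := ((Nat.Prime.coprime_iff_not_dvd Nat.prime_two).2 (by omega)).symm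
  rw [Nat.Coprime.gcd_eq_one this, Nat.div_one]

theorem ord3 {k : ℕ} (hk : 0 < k) : addOrderOf (((3 : ℤ)) : ZMod (k * 3)) = k := by
  have h : (((3 : ℤ)) : ZMod (k * 3)) = ((3 : ℕ) : ZMod (k * 3)) := by norm_cast
  rw [h, ZMod.addOrderOf_coe _ (by omega)]
  simp

theorem main_of {k t : ℕ} (hk : 3 ≤ k) (h3 : LA 3 k) (h5 : LA 5 k) (f5 : Frame k (Fin 5))
    (hB : LB k (k * 1)) (hC : LB k (k * 3)) (ht : 1 ≤ t) (ht2 : t ≠ 2) : IsARCS k (2 * k * t + 1) := by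
  rcases Nat.lt_or_ge t 4 with h | h
  · interval_cases t
    · exact arcs_of_lb hk (by norm_num) hB
    · exact absurd rfl ht2
    · exact arcs_of_lb hk (by norm_num) hC
  · rw [mul_one] at hB
    exact arcs_of_frame hk hB (frames hk h3 h5 f5 t h)

theorem stmt8 (k t : ℕ) (hk : Odd k) (h11 : 11 ≤ k) (ht : 1 ≤ t) (ht2 : t ≠ 2) :
    IsARCS k (2 * k * t + 1) := by
  obtain ⟨n, hn⟩ := hk
  rcases Nat.even_or_odd' n with ⟨q, hq | hq⟩
  · have hk1 : (k : ℤ) = ev q (1, 4) := by simp only [ev]; omega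
    have hk3 : (k : ℤ) = ev (q - 1 : ℕ) (5, 4) := by simp only [ev]; omega
    refine main_of (by omega) (la_of_chk (by norm_num) (by norm_num) (by omega) (by omega) ckA31 hk3)
      (la_of_chk (by norm_num) (by norm_num) (by omega) (by omega) ckA51 hk1)
      (frame5 (by omega) (by omega) ckF1 hk1)
      (lb_of_chk (q := q) (by omega) (by omega) (by omega) ckB1 hk1 (by simp only [ev] at *; omega) ?_)
      (lb_of_chk (q := q) (by omega) (by omega) (by omega) ckC1 hk1 (by simp only [ev] at *; omega) ?_) ht ht2
    · have : ev q (2, 0) = 2 := by simp [ev]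
      rw [this]; exact ord2 (by omega)
    · have : ev q (3, 0) = 3 := by simp [ev]
      rw [this]; exact ord3 (by omega)
  · have hk1 : (k : ℤ) = ev q (3, 4) := by simp only [ev]; omega
    have hA5 : LA 5 k := by
      by_cases h3 : 3 ≤ q
      · have hk3 : (k : ℤ) = ev (q - 1 : ℕ) (7, 4) := by simp only [ev]; omega
        exact la_of_chk (by norm_num) (by norm_num) (by omega) (by omega) ckA53 hk3
      · have hk4 : (k : ℤ) = ev 2 (11, 0) := by simp only [ev]; omega
        exact la_of_chk (by norm_num) (by norm_num) (by omega) le_rfl ckA511 hk4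
    refine main_of (by omega) (la_of_chk (by norm_num) (by norm_num) (by omega) (by omega) ckA33 hk1)
      hA5
      (frame5 (by omega) (by omega) ckF3 hk1)
      (lb_of_chk (q := q) (by omega) (by omega) (by omega) ckB3 hk1 (by simp only [ev] at *; omega) ?_)
      (lb_of_chk (q := q) (by omega) (by omega) (by omega) ckC3 hk1 (by simp only [ev] at *; omega) ?_) ht ht2
    · have : ev q (1, 0) = 1 := by simp [ev]
      rw [this]; exact ord1
    · have : ev q (3, 0) = 3 := by simp [ev]
      rw [this]; exact ord3 (by omega)
end

section
/- Let m and n be odd integers with n ≥ m ≥ 3, n ≥ 9 and n ≡ 3 (mod 6). Then (2, n−2) ∈ HWP(C_m[n]; m, n); that is, the edge set of C_m[n] can be partitioned into 2 C_m-factors and n−2 C_n-factors. -/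
open SimpleGraph

/-- A layered rotation: from `(i,u)` go to `(i + e u, u + d)`, layers relabelled by `g`. -/
structure Fac (m n : ℕ) where
  e : ZMod n → ZMod m
  d : ZMod n
  g : ZMod m → ZMod n

namespace Fac

variable {m n : ℕ}

/-- the successor map -/
def s (f : Fac m n) (v : ZMod m × ZMod n) : ZMod m × ZMod n :=
  (v.1 + f.e (v.2 - f.g v.1),
    v.2 - f.g v.1 + f.d + f.g (v.1 + f.e (v.2 - f.g v.1)))

/-- the graph of the successor map -/
def G (f : Fac m n) : SimpleGraph (ZMod m × ZMod n) :=
  SimpleGraph.fromRel (fun a b => f.s a = b)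

/-- all steps are `±1` -/
def Good (f : Fac m n) : Prop := ∀ u, f.e u = 1 ∨ f.e u = -1

/-- upward arc -/
def Arc (f : Fac m n) (i : ZMod m) (x y : ZMod n) : Prop :=
  (f.e (x - f.g i) = 1 ∧ y - f.g (i + 1) = x - f.g i + f.d) ∨
  (f.e (y - f.g (i + 1)) = -1 ∧ x - f.g i = y - f.g (i + 1) + f.d)

open Classical in
/-- the upward arc used by the edge leaving `v` -/
noncomputable def Phi (f : Fac m n) (v : ZMod m × ZMod n) : ZMod m × ZMod n × ZMod n :=
  if f.e (v.2 - f.g v.1) = 1 then (v.1, v.2, (f.s v).2) else ((f.s v).1, (f.s v).2, v.2)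

theorem one_ne_neg_one (hm : 3 ≤ m) : (1 : ZMod m) ≠ -1 := by
  intro h
  have h2 : ((2 : ℕ) : ZMod m) = 0 := by
    push_cast
    linear_combination h
  rw [ZMod.natCast_eq_zero_iff] at h2
  have := Nat.le_of_dvd (by norm_num) h2
  omega

theorem arc_phi (f : Fac m n) (hm : 3 ≤ m) {i x y} (h : f.Arc i x y) :
    ∃ v, f.Phi v = (i, x, y) := by
  rcases h with ⟨h1, h2⟩ | ⟨h1, h2⟩
  · refine ⟨(i, x), ?_⟩
    simp only [Phi, h1, s, if_true]
    rw [← h2]; simp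
  · refine ⟨(i + 1, y), ?_⟩
    have : ¬ ((-1 : ZMod m) = 1) := fun h => one_ne_neg_one hm h.symm
    simp only [Phi, h1, s, this, if_false]
    simp [← h2]

theorem adj_iff (f : Fac m n) (hf : f.Good) (hm : 3 ≤ m) {i x y} :
    f.G.Adj (i, x) (i + 1, y) ↔ f.Arc i x y := by
  have h1 := one_ne_neg_one hm
  have h10 : (1 : ZMod m) ≠ 0 := by
    intro h; apply h1; rw [h]; simp
  simp only [G, SimpleGraph.fromRel_adj, Arc, s, Prod.mk.injEq, ne_eq]
  constructor
  · rintro ⟨-, ⟨h, h'⟩ | ⟨h, h'⟩⟩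
    · left
      have he := add_left_cancel h
      refine ⟨he, ?_⟩
      rw [he] at h'
      rw [← h']; ring
    · right
      have he : f.e (y - f.g (i + 1)) = -1 := by linear_combination h
      refine ⟨he, ?_⟩
      rw [he] at h'
      rw [← h']
      have : i + 1 + -1 = i := by ring
      rw [this]; ring
  · intro h
    refine ⟨fun hh => h10 (by linear_combination - hh.1), ?_⟩
    rcases h with ⟨he, h⟩ | ⟨he, h⟩
    · left
      rw [he]
      exact ⟨rfl, by rw [← h]; ring⟩
    · right
      rw [he]
      have : i + 1 + -1 = i := by ring
      rw [this]
      exact ⟨rfl, by rw [← h]; ring⟩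

theorem adj_cases (f : Fac m n) (hf : f.Good) {a b} (h : f.G.Adj a b) :
    b.1 = a.1 + 1 ∨ a.1 = b.1 + 1 := by
  simp only [G, SimpleGraph.fromRel_adj, s] at h
  rcases h with ⟨-, h | h⟩
  · have := congrArg Prod.fst h
    simp only at this
    rcases hf (a.2 - f.g a.1) with h' | h' <;> rw [h'] at this
    · left; exact this.symm
    · right; linear_combination this
  · have := congrArg Prod.fst h
    simp only at this
    rcases hf (b.2 - f.g b.1) with h' | h' <;> rw [h'] at this
    · right; exact this.symm
    · left; linear_combination this

theorem le_lex (f : Fac m n) (hf : f.Good) : f.G ≤ lexCycle m n := by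
  intro a b h
  have h1 := h.ne
  rcases f.adj_cases hf h with h | h
  · simp only [lexCycle, SimpleGraph.fromRel_adj]
    exact ⟨h1, Or.inr (by rw [h]; ring)⟩
  · simp only [lexCycle, SimpleGraph.fromRel_adj]
    exact ⟨h1, Or.inl (by rw [h]; ring)⟩

theorem iter (f : Fac m n) (j : ℕ) (i : ZMod m) (u : ZMod n) :
    f.s^[j] (i, u + f.g i) =
      (i + ∑ t ∈ Finset.range j, f.e (u + t * f.d),
        u + j * f.d + f.g (i + ∑ t ∈ Finset.range j, f.e (u + t * f.d))) := by
  induction j with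
  | zero => simp
  | succ j ih =>
    rw [Function.iterate_succ_apply', ih]
    simp only [s, Finset.sum_range_succ, add_sub_cancel_right, Prod.mk.injEq]
    constructor
    · ring
    · push_cast
      rw [← add_assoc]
      ring

theorem period_n [NeZero n] (f : Fac m n) (hd : IsUnit f.d) (he : ∑ u, f.e u = 0) (v) (j : ℕ) :
    f.s^[j] v = v ↔ n ∣ j := by
  obtain ⟨i, x⟩ := v
  obtain ⟨u, rfl⟩ : ∃ u, x = u + f.g i := ⟨x - f.g i, by ring⟩
  have key : ∀ w, ∑ t ∈ Finset.range n, f.e (w + t * f.d) = 0 := by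
    intro w
    rw [← he]
    apply Finset.sum_bij (fun (t : ℕ) _ => w + (t : ZMod n) * f.d)
    · simp
    · intro a ha b hb h
      have h2 : (a : ZMod n) = b := hd.mul_right_cancel (add_left_cancel h)
      rw [ZMod.natCast_eq_natCast_iff] at h2
      exact Nat.ModEq.eq_of_lt_of_lt h2 (Finset.mem_range.1 ha) (Finset.mem_range.1 hb)
    · intro b _
      obtain ⟨c, hc⟩ := hd
      refine ⟨((b - w) * (c⁻¹ : (ZMod n)ˣ)).val, Finset.mem_range.2 (ZMod.val_lt _), ?_⟩
      rw [ZMod.natCast_zmod_val, ← hc]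
      simp [mul_assoc]
    · simp
  have hn : ∀ v, f.s^[n] v = v := by
    rintro ⟨i, x⟩
    obtain ⟨u, rfl⟩ : ∃ u, x = u + f.g i := ⟨x - f.g i, by ring⟩
    rw [iter, key]; simp
  constructor
  · intro h
    rw [iter] at h
    have h1 := congrArg Prod.fst h
    have h2 := congrArg Prod.snd h
    simp only at h1 h2
    rw [h1] at h2
    have h3 : (j : ZMod n) * f.d = 0 := by linear_combination h2
    rw [hd.mul_left_eq_zero] at h3
    exact (ZMod.natCast_eq_zero_iff _ _).1 h3
  · rintro ⟨c, rfl⟩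
    rw [Function.iterate_mul]
    have : f.s^[n] = id := funext hn
    rw [this]; simp

theorem period_m (f : Fac m n) (hd : f.d = 0) (he : ∀ u, f.e u = 1) (v) (j : ℕ) :
    f.s^[j] v = v ↔ m ∣ j := by
  obtain ⟨i, x⟩ := v
  obtain ⟨u, rfl⟩ : ∃ u, x = u + f.g i := ⟨x - f.g i, by ring⟩
  rw [iter, hd]
  simp only [he, Finset.sum_const, Finset.card_range, nsmul_eq_mul, mul_one, mul_zero, add_zero,
    Prod.mk.injEq, add_eq_left]
  rw [← ZMod.natCast_eq_zero_iff]
  constructor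
  · exact fun h => h.1
  · intro h
    simp [h]

end Fac

theorem cycle_of_period {V : Type*} (H : SimpleGraph V) (s : V → V) (k : ℕ) (hk : 3 ≤ k)
    (hs : ∀ v j, s^[j] v = v ↔ k ∣ j) (hle : SimpleGraph.fromRel (fun a b => s a = b) ≤ H) :
    IsCycleFactor H (SimpleGraph.fromRel (fun a b => s a = b)) k := by
  set G := SimpleGraph.fromRel (fun a b => s a = b) with hG
  have hk' : ∀ v, s^[k] v = v := fun v => (hs v k).2 dvd_rfl
  have h1 : ∀ v, s v ≠ v := by
    intro v h
    have := Nat.le_of_dvd one_pos ((hs v 1).1 h)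
    omega
  have hpred : ∀ v, s (s^[k-1] v) = v := by
    intro v
    rw [← Function.iterate_succ_apply' s, show (k - 1).succ = k by omega, hk']
  have hinj : Function.Injective s := by
    intro a b h
    have e : ∀ v, s^[k-1] (s v) = v := by
      intro v
      rw [← Function.iterate_succ_apply s, show (k - 1).succ = k by omega, hk']
    rw [← e a, h, e]
  have hadj : ∀ v, G.Adj v (s v) := by
    intro v
    simp only [hG, SimpleGraph.fromRel_adj]
    exact ⟨(h1 v).symm, Or.inl trivial⟩
  refine ⟨hle, ?_, ?_⟩
  · intro v
    have : G.neighborSet v = {s v, s^[k-1] v} := by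
      ext w
      simp only [SimpleGraph.mem_neighborSet, Set.mem_insert_iff, Set.mem_singleton_iff]
      constructor
      · intro h
        simp only [hG, SimpleGraph.fromRel_adj] at h
        rcases h.2 with h | h
        · exact Or.inl h.symm
        · right
          apply hinj
          rw [h, hpred]
      · rintro (rfl | rfl)
        · exact hadj v
        · have := hadj (s^[k-1] v)
          rw [hpred] at this
          exact this.symm
    rw [this, Set.ncard_pair]
    intro h
    have h2 : s^[2] v = v := by
      show s (s v) = v
      rw [h, hpred]
    have := Nat.le_of_dvd two_pos ((hs v 2).1 h2)
    omega
  · intro v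
    have hset : {w | G.Reachable v w} = (fun j => s^[j] v) '' (Finset.range k : Set ℕ) := by
      ext w
      simp only [Set.mem_setOf_eq, Set.mem_image, Finset.coe_range, Set.mem_Iio]
      constructor
      · intro h
        rw [SimpleGraph.reachable_iff_reflTransGen] at h
        induction h with
        | refl => exact ⟨0, by omega, rfl⟩
        | tail _ hbc ih =>
          obtain ⟨j, hj, rfl⟩ := ih
          simp only [hG, SimpleGraph.fromRel_adj] at hbc
          rcases hbc.2 with h | h
          · rw [← Function.iterate_succ_apply' s] at h
            by_cases hjk : j + 1 = k
            · refine ⟨0, by omega, ?_⟩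
              rw [← h, Nat.succ_eq_add_one, hjk, hk']; rfl
            · exact ⟨j + 1, by omega, h⟩
          · rcases Nat.eq_zero_or_pos j with rfl | hj0
            · refine ⟨k - 1, by omega, ?_⟩
              apply hinj
              rw [hpred, h]; rfl
            · refine ⟨j - 1, by omega, ?_⟩
              apply hinj
              rw [h, ← Function.iterate_succ_apply' s, show (j - 1).succ = j by omega]
      · rintro ⟨j, -, rfl⟩
        clear * - hadj
        induction j with
        | zero => exact SimpleGraph.Reachable.refl _
        | succ j ih =>
          rw [Function.iterate_succ_apply']
          exact ih.trans (hadj _).reachable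
    rw [hset, Set.ncard_image_of_injOn]
    · simp [Set.ncard_coe_finset]
    · have hwlog : ∀ a b, a < k → b < k → a ≤ b → s^[a] v = s^[b] v → a = b := by
        intro a b _ hb hab h
        obtain ⟨c, rfl⟩ := Nat.exists_eq_add_of_le hab
        rw [Function.iterate_add_apply] at h
        have h2 := (hinj.iterate a) h
        have h3 := (hs v c).1 h2.symm
        rcases Nat.eq_zero_or_pos c with rfl | hc
        · rfl
        · have := Nat.le_of_dvd hc h3
          omega
      intro a ha b hb h
      simp only [Finset.coe_range, Set.mem_Iio] at ha hb
      rcases le_total a b with hab | hab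
      · exact hwlog a b ha hb hab h
      · exact (hwlog b a hb ha hab h.symm).symm

theorem decomp_of_cover {m n : ℕ} (hm : 3 ≤ m) [NeZero m] [NeZero n] {ι : Type*} [Fintype ι]
    (hι : Fintype.card ι = n) (F : ι → Fac m n) (hF : ∀ k, (F k).Good)
    (hc : ∀ i x y, ∃ k, (F k).Arc i x y) :
    IsDecomp (lexCycle m n) (fun k => (F k).G) := by
  have hbij : Function.Bijective
      (fun p : ι × (ZMod m × ZMod n) => (F p.1).Phi p.2) := by
    rw [Fintype.bijective_iff_surjective_and_card]
    constructor
    · rintro ⟨i, x, y⟩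
      obtain ⟨k, hk⟩ := hc i x y
      obtain ⟨v, hv⟩ := (F k).arc_phi hm hk
      exact ⟨(k, v), hv⟩
    · simp only [Fintype.card_prod, ZMod.card, hι]
      ring
  have huniq : ∀ i x y k l, (F k).Arc i x y → (F l).Arc i x y → k = l := by
    intro i x y k l hk hl
    obtain ⟨v, hv⟩ := (F k).arc_phi hm hk
    obtain ⟨w, hw⟩ := (F l).arc_phi hm hl
    have := hbij.1 (a₁ := (k, v)) (a₂ := (l, w)) (by simp only [hv, hw])
    exact congrArg Prod.fst this
  constructor
  · intro k l hkl
    rw [Set.disjoint_left]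
    intro e
    induction e using Sym2.ind with
    | _ a b =>
      intro hk hl
      rw [SimpleGraph.mem_edgeSet] at hk hl
      apply hkl
      obtain ⟨i, x⟩ := a
      obtain ⟨i', y⟩ := b
      rcases (F k).adj_cases (hF k) hk with h | h
      · simp only at h
        subst h
        exact huniq i x y k l (((F k).adj_iff (hF k) hm).1 hk) (((F l).adj_iff (hF l) hm).1 hl)
      · simp only at h
        subst h
        exact huniq i' y x k l (((F k).adj_iff (hF k) hm).1 hk.symm)
          (((F l).adj_iff (hF l) hm).1 hl.symm)
  · intro e
    induction e using Sym2.ind with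
    | _ a b =>
      simp only [SimpleGraph.mem_edgeSet]
      constructor
      · intro h
        simp only [lexCycle, SimpleGraph.fromRel_adj] at h
        obtain ⟨i, x⟩ := a
        obtain ⟨i', y⟩ := b
        rcases h.2 with h | h
        · obtain rfl : i = i' + 1 := by simp only at h; linear_combination h
          obtain ⟨k, hk⟩ := hc i' y x
          exact ⟨k, (((F k).adj_iff (hF k) hm).2 hk).symm⟩
        · obtain rfl : i' = i + 1 := by simp only at h; linear_combination h
          obtain ⟨k, hk⟩ := hc i x y
          exact ⟨k, ((F k).adj_iff (hF k) hm).2 hk⟩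
      · rintro ⟨k, hk⟩
        exact (F k).le_lex (hF k) hk

theorem exists_col (m : ℕ) [NeZero m] (hm : Odd m) (h3 : 3 ≤ m) :
    ∃ col : ZMod m → Fin 3, ∀ i, col i ≠ col (i + 1) := by
  refine ⟨fun i => if i.val = m - 1 then 2 else if i.val % 2 = 0 then 0 else 1, ?_⟩
  intro i
  have hi := ZMod.val_lt i
  have h1 : (i + 1).val = (i.val + 1) % m := by
    rw [ZMod.val_add, ZMod.val_one'' (by omega)]
  obtain ⟨k, hk⟩ := hm
  by_cases h : i.val = m - 1
  · have : (i + 1).val = 0 := by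
      rw [h1, h, show m - 1 + 1 = m by omega, Nat.mod_self]
    simp only [h, this, if_true]
    rw [if_neg (by omega)]; simp
  · have h2 : (i + 1).val = i.val + 1 := by
      rw [h1, Nat.mod_eq_of_lt (by omega)]
    simp only [h, h2, if_false]
    split_ifs <;> first | omega | simp

theorem exists_sign (m n : ℕ) [NeZero n] (hm : Odd m) (hn : Odd n) (hmn : m ≤ n) :
    ∃ e : ZMod n → ZMod m, (∀ u, e u = 1 ∨ e u = -1) ∧ ∑ u, e u = 0 := by
  classical
  obtain ⟨a, ha⟩ := hm
  obtain ⟨b, hb⟩ := hn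
  obtain ⟨E, -, hE⟩ := Finset.exists_subset_card_eq (s := (Finset.univ : Finset (ZMod n)))
    (n := a + b + 1) (by rw [Finset.card_univ, ZMod.card]; omega)
  refine ⟨fun u => if u ∈ E then 1 else -1, ?_, ?_⟩
  · intro u
    by_cases h : u ∈ E <;> simp [h]
  · have : ∀ u, (if u ∈ E then (1 : ZMod m) else -1) = 2 * (if u ∈ E then 1 else 0) - 1 := by
      intro u; split_ifs <;> ring
    simp only [this, Finset.sum_sub_distrib, ← Finset.mul_sum]
    simp only [Finset.sum_ite_mem, Finset.univ_inter, Finset.sum_const, hE, Finset.card_univ,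
      ZMod.card, nsmul_eq_mul, mul_one]
    have : ((m : ℕ) : ZMod m) = 0 := ZMod.natCast_self m
    rw [hb]
    rw [ha] at this ⊢
    push_cast at this ⊢
    linear_combination this

/-- the factors -/
def facs {m n : ℕ} (col : ZMod m → Fin 3) (e : ZMod n → ZMod m) (G : Fin 3 → ZMod n) (u : ZMod n)
    {J : Type} (P : J → Fin 3 → ZMod n) (D : J → ZMod n) :
    (Fin 3 ⊕ Bool) ⊕ (J × Bool) → Fac m n
  | .inl (.inl k) => ⟨e, u, fun i => G (col i) + if col i = k then u else 0⟩
  | .inl (.inr false) => ⟨-e, u, fun i => G (col i)⟩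
  | .inl (.inr true) => ⟨e, -2 * u, fun i => G (col i) + 2 * u⟩
  | .inr (j, true) => ⟨e, D j, fun i => P j (col i)⟩
  | .inr (j, false) => ⟨-e, D j, fun i => P j (col i)⟩

theorem assemble (m n : ℕ) (hm : Odd m) (hn : Odd n) (h3 : 3 ≤ m) (hmn : m ≤ n)
    (G : Fin 3 → ZMod n) (u : ZMod n) (hu : IsUnit u) {J : Type} [Fintype J]
    (P : J → Fin 3 → ZMod n) (D : J → ZMod n) (hD : ∀ j, IsUnit (D j))
    (A B : Fin 3 → ZMod n) (hcard : 7 + 2 * Fintype.card J = n)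
    (cov : ∀ c : Fin 3, ∀ s : ZMod n,
      (∃ j ∈ ([-2, -1, 0, 1, 2] : List ℤ), s = G (c + 1) - G c + j * u) ∨
      (∃ j, s = P j (c + 1) - P j c + D j ∨ s = P j (c + 1) - P j c - D j) ∨
      s = A (c + 1) - A c ∨ s = B (c + 1) - B c) :
    HW (lexCycle m n) m n 2 (n - 2) := by
  haveI : NeZero m := ⟨by omega⟩
  haveI : NeZero n := ⟨by omega⟩
  obtain ⟨col, hcol⟩ := exists_col m hm h3
  obtain ⟨e, he, hesum⟩ := exists_sign m n hm hn hmn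
  have h1 := Fac.one_ne_neg_one h3
  -- full covering
  have cov' : ∀ c c' : Fin 3, c ≠ c' → ∀ s : ZMod n,
      (∃ j ∈ ([-2, -1, 0, 1, 2] : List ℤ), s = G c' - G c + j * u) ∨
      (∃ j, s = P j c' - P j c + D j ∨ s = P j c' - P j c - D j) ∨
      s = A c' - A c ∨ s = B c' - B c := by
    intro c c' hcc s
    have : c' = c + 1 ∨ c = c' + 1 := by
      revert c c'; decide
    rcases this with rfl | rfl
    · exact cov c s
    · rcases cov c' (-s) with ⟨j, hj, h⟩ | ⟨j, h | h⟩ | h | h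
      · left
        refine ⟨-j, ?_, ?_⟩
        · simp only [List.mem_cons, List.not_mem_nil, or_false] at hj ⊢
          omega
        · push_cast; linear_combination -h
      · right; left; exact ⟨j, Or.inr (by linear_combination -h)⟩
      · right; left; exact ⟨j, Or.inl (by linear_combination -h)⟩
      · right; right; left; linear_combination -h
      · right; right; right; linear_combination -h
  have hu2 : IsUnit (2 : ZMod n) := by
    have : IsUnit ((2 : ℕ) : ZMod n) := by
      rw [ZMod.isUnit_iff_coprime]
      exact (Nat.coprime_two_left).2 hn
    exact_mod_cast this
  let K := (Fin 3 ⊕ Bool) ⊕ (J × Bool)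
  have hK : Fintype.card (Fin (n - 2)) = Fintype.card K := by
    simp only [K, Fintype.card_sum, Fintype.card_prod, Fintype.card_fin, Fintype.card_bool]
    omega
  let φ : Fin (n - 2) ≃ K := Fintype.equivOfCardEq hK
  let S : Fin 2 → Fac m n := fun k =>
    ⟨fun _ => 1, 0, fun i => if k = 0 then A (col i) else B (col i)⟩
  let F : Fin 2 ⊕ Fin (n - 2) → Fac m n := Sum.elim S (fun k => facs col e G u P D (φ k))
  have hneg : ∀ u, (-e) u = 1 ∨ (-e) u = -1 := by
    intro u
    rcases he u with h | h <;> simp [h]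
  have hnegsum : ∑ u, (-e) u = 0 := by simp [hesum]
  have hgood : ∀ k, (facs col e G u P D k).Good := by
    rintro ((k | (_ | _)) | ⟨j, (_ | _)⟩)
    · exact he
    · exact hneg
    · exact he
    · exact hneg
    · exact he
  have hunit : ∀ k, IsUnit (facs col e G u P D k).d := by
    rintro ((k | (_ | _)) | ⟨j, (_ | _)⟩)
    · exact hu
    · exact hu
    · exact (hu2.neg).mul hu
    · exact hD j
    · exact hD j
  have hsum : ∀ k, ∑ v, (facs col e G u P D k).e v = 0 := by
    rintro ((k | (_ | _)) | ⟨j, (_ | _)⟩)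
    · exact hesum
    · exact hnegsum
    · exact hesum
    · exact hnegsum
    · exact hesum
  have hgoodF : ∀ k, (F k).Good := by
    rintro (k | k)
    · intro u; left; rfl
    · exact hgood _
  refine ⟨fun k => (F k).G, ?_, ?_, ?_⟩
  · intro k
    exact cycle_of_period _ _ m h3 ((F (Sum.inl k)).period_m rfl (fun _ => rfl))
      ((F _).le_lex (hgoodF _))
  · intro k
    exact cycle_of_period _ _ n (by omega) ((F (Sum.inr k)).period_n (hunit _) (hsum _))
      ((F _).le_lex (hgoodF _))
  · apply decomp_of_cover h3 (by simp; omega) F hgoodF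
    intro i x y
    have lift : (∃ k, (facs col e G u P D k).Arc i x y) → ∃ k, (F k).Arc i x y := by
      rintro ⟨k, hk⟩
      refine ⟨Sum.inr (φ.symm k), ?_⟩
      simpa [F] using hk
    have hc := hcol i
    rcases cov' _ _ hc (y - x) with ⟨j, hj, h⟩ | ⟨j, h | h⟩ | h | h
    · apply lift
      obtain ⟨r, hr1, hr2⟩ : ∃ r : Fin 3, col i ≠ r ∧ col (i + 1) ≠ r := by
        have h33 : ∀ c c' : Fin 3, ∃ r, c ≠ r ∧ c' ≠ r := by decide
        exact h33 _ _
      simp only [List.mem_cons, List.not_mem_nil, or_false] at hj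
      rcases hj with rfl | rfl | rfl | rfl | rfl
      · -- Y = X - 2u
        rcases he (y - G (col (i + 1))) with h' | h'
        · refine ⟨.inl (.inr true), Or.inl ⟨?_, ?_⟩⟩
          · simp only [facs]
            rw [← h']; congr 1; push_cast at h; linear_combination -h
          · simp only [facs]; push_cast at h; linear_combination h
        · refine ⟨.inl (.inl (col i)), Or.inr ⟨?_, ?_⟩⟩
          · simp only [facs, hc.symm, if_false, add_zero]; exact h'
          · simp only [facs, hc.symm, if_false, if_true]; push_cast at h; linear_combination -h
      · rcases he (y - G (col (i + 1))) with h' | h'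
        · refine ⟨.inl (.inr false), Or.inr ⟨?_, ?_⟩⟩
          · simp only [facs, Pi.neg_apply, h']
          · simp only [facs]; push_cast at h; linear_combination -h
        · refine ⟨.inl (.inl r), Or.inr ⟨?_, ?_⟩⟩
          · simp only [facs, hr2, if_false, add_zero]; exact h'
          · simp only [facs, hr1, hr2, if_false]; push_cast at h; linear_combination -h
      · rcases he (x - G (col i) - u) with h' | h'
        · refine ⟨.inl (.inl (col i)), Or.inl ⟨?_, ?_⟩⟩
          · simp only [facs, if_true]; rw [← h']; congr 1; ring
          · simp only [facs, hc.symm, if_false, if_true]; push_cast at h; linear_combination h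
        · refine ⟨.inl (.inl (col (i + 1))), Or.inr ⟨?_, ?_⟩⟩
          · simp only [facs, if_true]; rw [← h']; congr 1; push_cast at h; linear_combination h
          · simp only [facs, hc, if_false, if_true]; push_cast at h; linear_combination -h
      · rcases he (x - G (col i)) with h' | h'
        · refine ⟨.inl (.inl r), Or.inl ⟨?_, ?_⟩⟩
          · simp only [facs, hr1, if_false, add_zero]; exact h'
          · simp only [facs, hr1, hr2, if_false]; push_cast at h; linear_combination h
        · refine ⟨.inl (.inr false), Or.inl ⟨?_, ?_⟩⟩
          · simp only [facs, Pi.neg_apply, h', neg_neg]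
          · simp only [facs]; push_cast at h; linear_combination h
      · rcases he (x - G (col i)) with h' | h'
        · refine ⟨.inl (.inl (col (i + 1))), Or.inl ⟨?_, ?_⟩⟩
          · simp only [facs, hc, if_false, add_zero]; exact h'
          · simp only [facs, hc, if_false, if_true]; push_cast at h; linear_combination h
        · refine ⟨.inl (.inr true), Or.inr ⟨?_, ?_⟩⟩
          · simp only [facs]
            rw [← h']; congr 1; push_cast at h; linear_combination h
          · simp only [facs]; push_cast at h; linear_combination -h
    · apply lift
      rcases he (x - P j (col i)) with h' | h'
      · exact ⟨.inr (j, true), Or.inl ⟨h', by simp only [facs]; linear_combination h⟩⟩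
      · exact ⟨.inr (j, false), Or.inl ⟨by simp only [facs, Pi.neg_apply, h', neg_neg],
          by simp only [facs]; linear_combination h⟩⟩
    · apply lift
      rcases he (y - P j (col (i + 1))) with h' | h'
      · exact ⟨.inr (j, false), Or.inr ⟨by simp only [facs, Pi.neg_apply, h'],
          by simp only [facs]; linear_combination -h⟩⟩
      · exact ⟨.inr (j, true), Or.inr ⟨h', by simp only [facs]; linear_combination -h⟩⟩
    · refine ⟨Sum.inl 0, Or.inl ⟨rfl, ?_⟩⟩
      simp only [F, S, Sum.elim_inl, if_true]
      linear_combination h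
    · refine ⟨Sum.inl 1, Or.inl ⟨rfl, ?_⟩⟩
      simp only [F, S, Sum.elim_inl, one_ne_zero, if_false]
      linear_combination h

theorem assembleZ (m n : ℕ) (hm : Odd m) (hn : Odd n) (h3 : 3 ≤ m) (hmn : m ≤ n)
    (G : Fin 3 → ℤ) (u : ℕ) (hu : Nat.Coprime u n) {J : Type} [Fintype J]
    (P : J → Fin 3 → ℤ) (D : J → ℕ) (hD : ∀ j, Nat.Coprime (D j) n)
    (A B : Fin 3 → ℤ) (hcard : 7 + 2 * Fintype.card J = n)
    (cov : ∀ c : Fin 3, ∀ s : ZMod n, ∃ z : ℤ, (z : ZMod n) = s ∧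
      ((∃ j ∈ ([-2, -1, 0, 1, 2] : List ℤ), z = G (c + 1) - G c + j * u) ∨
      (∃ j, z = P j (c + 1) - P j c + D j ∨ z = P j (c + 1) - P j c - D j) ∨
      z = A (c + 1) - A c ∨ z = B (c + 1) - B c)) :
    HW (lexCycle m n) m n 2 (n - 2) := by
  apply assemble m n hm hn h3 hmn (fun c => (G c : ZMod n)) (u : ZMod n)
    ((ZMod.isUnit_iff_coprime _ _).2 hu) (fun j c => (P j c : ZMod n)) (fun j => (D j : ZMod n))
    (fun j => (ZMod.isUnit_iff_coprime _ _).2 (hD j)) (fun c => (A c : ZMod n))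
    (fun c => (B c : ZMod n)) hcard
  intro c s
  obtain ⟨z, rfl, h⟩ := cov c s
  rcases h with ⟨j, hj, h⟩ | ⟨j, h | h⟩ | h | h
  · exact Or.inl ⟨j, hj, by rw [h]; push_cast; ring⟩
  · exact Or.inr (Or.inl ⟨j, Or.inl (by rw [h]; push_cast; ring)⟩)
  · exact Or.inr (Or.inl ⟨j, Or.inr (by rw [h]; push_cast; ring)⟩)
  · exact Or.inr (Or.inr (Or.inl (by rw [h]; push_cast; ring)))
  · exact Or.inr (Or.inr (Or.inr (by rw [h]; push_cast; ring)))

theorem rep (n k L : ℕ) (hn : n = 2 * k + 1 + 2 * L) (s : ZMod n) :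
    ∃ z : ℤ, (z : ZMod n) = s ∧
      ((∃ w : ℤ, z = 2 * w ∧ -(k : ℤ) ≤ w ∧ w ≤ k) ∨
       (∃ w : ℤ, z = 2 * w + 1 ∧ -(L : ℤ) ≤ w ∧ w < L)) := by
  haveI : NeZero n := ⟨by omega⟩
  have hs := ZMod.val_lt s
  have hv : ((s.val : ℕ) : ZMod n) = s := ZMod.natCast_zmod_val s
  have e1 : (((s.val : ℤ)) : ZMod n) = s := by rw [← hv]; simp
  have e2 : (((s.val : ℤ) - (n : ℤ) : ℤ) : ZMod n) = s := by
    push_cast; rw [hv]; simp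
  generalize s.val = a at *
  rcases Nat.even_or_odd' a with ⟨b, rfl | rfl⟩
  · by_cases h : b ≤ k
    · exact ⟨_, e1, Or.inl ⟨b, by push_cast; ring, by omega, by omega⟩⟩
    · exact ⟨_, e2, Or.inr ⟨(b : ℤ) - k - L - 1, by rw [hn]; push_cast; ring, by omega, by omega⟩⟩
  · by_cases h : b < L
    · exact ⟨_, e1, Or.inr ⟨b, by push_cast; ring, by omega, by omega⟩⟩
    · exact ⟨_, e2, Or.inl ⟨(b : ℤ) - k - L, by rw [hn]; push_cast; ring, by omega, by omega⟩⟩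

/-- centre of a run pair, first row (halved) -/
def pc (K : ℕ) (j : ℤ) : ℤ := 2 * j + 1 - 2 * K

/-- centre of a run pair, second row (halved) -/
def qc (K : ℕ) (j : ℤ) : ℤ :=
  if 0 < pc K j then 2 * K + 1 - 2 * pc K j else -2 * K - 1 - 2 * pc K j

theorem run1 (K : ℕ) (w : ℤ) (h1 : -((2 * K : ℕ) : ℤ) ≤ w) (h2 : w < ((2 * K : ℕ) : ℤ)) :
    ∃ j : Fin (2 * K), 2 * w + 1 = 2 * pc K (j : ℕ) + 1 ∨ 2 * w + 1 = 2 * pc K (j : ℕ) - 1 := by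
  refine ⟨⟨((w + 2 * K) / 2).toNat, by omega⟩, ?_⟩
  simp only [pc]
  omega

theorem run2 (K : ℕ) (w : ℤ) (h1 : -((2 * K : ℕ) : ℤ) ≤ w) (h2 : w < ((2 * K : ℕ) : ℤ)) :
    ∃ j : Fin (2 * K), 2 * w + 1 = 2 * qc K (j : ℕ) + 1 ∨ 2 * w + 1 = 2 * qc K (j : ℕ) - 1 := by
  obtain ⟨q, hq, hq1, hq2, hq3⟩ : ∃ q : ℤ, (w = q ∨ w = q - 1) ∧ q % 2 = 1 ∧ -(2 * K) < q ∧ q < 2 * K := by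
    by_cases h : w % 2 = 1
    · exact ⟨w, by omega, by omega, by omega, by omega⟩
    · exact ⟨w + 1, by omega, by omega, by omega, by omega⟩
  obtain ⟨p, hp1, hp2, hp3, hp⟩ : ∃ p : ℤ, p % 2 = 1 ∧ -(2 * K) < p ∧ p < 2 * K ∧
      ((0 < p ∧ q = 2 * K + 1 - 2 * p) ∨ (p < 0 ∧ q = -2 * K - 1 - 2 * p)) := by
    by_cases h : ((2 * K + 1 - q) / 2) % 2 = 1
    · exact ⟨(2 * K + 1 - q) / 2, by omega, by omega, by omega, by omega⟩
    · exact ⟨(-2 * K - 1 - q) / 2, by omega, by omega, by omega, by omega⟩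
  refine ⟨⟨((p + 2 * K - 1) / 2).toNat, by omega⟩, ?_⟩
  have : pc K ((((p + 2 * K - 1) / 2).toNat : ℕ) : ℤ) = p := by
    simp only [pc]; omega
  simp only [qc, this]
  split_ifs <;> omega

theorem run3 (K : ℕ) (w : ℤ) (h1 : -((2 * K + 1 : ℕ) : ℤ) ≤ w) (h2 : w < ((2 * K + 1 : ℕ) : ℤ))
    (h3 : w ≠ 0) (h4 : w ≠ -1) :
    ∃ j : Fin (2 * K), 2 * w + 1 = -(2 * pc K (j : ℕ) + 2 * qc K (j : ℕ)) + 1 ∨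
      2 * w + 1 = -(2 * pc K (j : ℕ) + 2 * qc K (j : ℕ)) - 1 := by
  obtain ⟨q, hq, hq1, hq2, hq3, hq0⟩ : ∃ q : ℤ, (w = q ∨ w = q - 1) ∧ q % 2 = 0 ∧
      -(2 * K) ≤ q ∧ q ≤ 2 * K ∧ q ≠ 0 := by
    by_cases h : w % 2 = 0
    · exact ⟨w, by omega, by omega, by omega, by omega, by omega⟩
    · exact ⟨w + 1, by omega, by omega, by omega, by omega, by omega⟩
  obtain ⟨p, hp1, hp2, hp3, hp⟩ : ∃ p : ℤ, p % 2 = 1 ∧ -(2 * K) < p ∧ p < 2 * K ∧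
      ((0 < p ∧ -q = 2 * K + 1 - p) ∨ (p < 0 ∧ -q = -2 * K - 1 - p)) := by
    by_cases h : q < 0
    · exact ⟨2 * K + 1 + q, by omega, by omega, by omega, by omega⟩
    · exact ⟨-2 * K - 1 + q, by omega, by omega, by omega, by omega⟩
  refine ⟨⟨((p + 2 * K - 1) / 2).toNat, by omega⟩, ?_⟩
  have : pc K ((((p + 2 * K - 1) / 2).toNat : ℕ) : ℤ) = p := by
    simp only [pc]; omega
  simp only [qc, this]
  split_ifs <;> omega

/-- run potentials -/
def runP (K : ℕ) (j : Fin (2 * K)) : Fin 3 → ℤ :=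
  ![0, 2 * pc K (j : ℕ), 2 * pc K (j : ℕ) + 2 * qc K (j : ℕ)]

/-- core potentials, first case -/
def coreP1 : Fin 1 → Fin 3 → ℤ := ![![0, 5, 0]]

/-- core potentials, second case -/
def coreP2 : Fin 4 → Fin 3 → ℤ := ![![0, 9, 0], ![0, 2, 10], ![0, -10, -10], ![0, 10, 0]]

/-- core half-differences, second case -/
def coreD2 : Fin 4 → ℕ := ![1, 2, 2, 4]

theorem run_cov (K : ℕ) (c : Fin 3) (w : ℤ) (k : ℕ)
    (hk : if c = 2 then k = 2 * K + 1 else k = 2 * K) (h1 : -(k : ℤ) ≤ w) (h2 : w < k)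
    (h3 : c = 2 → w ≠ 0 ∧ w ≠ -1) :
    ∃ j : Fin (2 * K), 2 * w + 1 = runP K j (c + 1) - runP K j c + (1 : ℕ) ∨
      2 * w + 1 = runP K j (c + 1) - runP K j c - (1 : ℕ) := by
  fin_cases c
  · simp at hk
    subst hk
    obtain ⟨j, h⟩ := run1 K w h1 h2
    exact ⟨j, by simpa [runP] using h⟩
  · simp at hk
    subst hk
    obtain ⟨j, h⟩ := run2 K w h1 h2
    exact ⟨j, by simpa [runP] using h⟩
  · simp at hk h3
    subst hk
    obtain ⟨j, h⟩ := run3 K w h1 h2 h3.1 h3.2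
    refine ⟨j, ?_⟩
    have e : ((2 : Fin 3) + 1) = 0 := rfl
    simp only [Fin.reduceFinMk, e, runP]
    simp only [Matrix.cons_val]
    push_cast
    omega

theorem case1 (m n K : ℕ) (hm : Odd m) (hn : Odd n) (h3 : 3 ≤ m) (hmn : m ≤ n)
    (hK : n = 4 * K + 9) : HW (lexCycle m n) m n 2 (n - 2) := by
  have c2 : Nat.Coprime 2 n := (Nat.coprime_two_left).2 hn
  apply assembleZ m n hm hn h3 hmn ![0, -4, 0] 2 c2 (J := Fin 1 ⊕ Fin (2 * K))
    (Sum.elim coreP1 (runP K)) (fun _ => 1) (fun _ => Nat.coprime_one_left n)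
    ![0, 2, -6] ![0, 8, 6] (by simp; omega)
  have hrun : ∀ (c : Fin 3) (w : ℤ) (k : ℕ)
    (_ : if c = 2 then k = 2 * K + 1 else k = 2 * K) (_ : -(k : ℤ) ≤ w) (_ : w < k)
    (_ : c = 2 → w ≠ 0 ∧ w ≠ -1),
      (∃ j, 2 * w + 1 = Sum.elim coreP1 (runP K) j (c + 1) - Sum.elim coreP1 (runP K) j c + (1 : ℕ)
        ∨ 2 * w + 1 = Sum.elim coreP1 (runP K) j (c + 1) - Sum.elim coreP1 (runP K) j c
          - (1 : ℕ)) := by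
    intro c w k a1 a2 a3 a4
    obtain ⟨j, h⟩ := run_cov K c w k a1 a2 a3 a4
    exact ⟨Sum.inr j, h⟩
  intro c s
  fin_cases c
  · obtain ⟨z, hz, ⟨w, rfl, hw1, hw2⟩ | ⟨w, rfl, hw1, hw2⟩⟩ := rep n 4 (2 * K) (by omega) s
    · refine ⟨_, hz, ?_⟩
      clear hz
      simp only [Sum.exists]
      rw [or_assoc]
      push_cast at hw1 hw2
      interval_cases w <;> simp [coreP1]
    · exact ⟨_, hz, Or.inr (Or.inl (hrun 0 w _ (by simp) hw1 hw2 (by simp)))⟩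
  · obtain ⟨z, hz, ⟨w, rfl, hw1, hw2⟩ | ⟨w, rfl, hw1, hw2⟩⟩ := rep n 4 (2 * K) (by omega) s
    · refine ⟨_, hz, ?_⟩
      clear hz
      simp only [Sum.exists]
      rw [or_assoc]
      push_cast at hw1 hw2
      interval_cases w <;> simp [coreP1]
    · exact ⟨_, hz, Or.inr (Or.inl (hrun 1 w _ (by simp) hw1 hw2 (by simp)))⟩
  · obtain ⟨z, hz, ⟨w, rfl, hw1, hw2⟩ | ⟨w, rfl, hw1, hw2⟩⟩ := rep n 3 (2 * K + 1) (by omega) s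
    · refine ⟨_, hz, ?_⟩
      clear hz
      simp only [Sum.exists]
      rw [or_assoc]
      push_cast at hw1 hw2
      interval_cases w <;> simp [coreP1]
    · by_cases h : w = 0 ∨ w = -1
      · refine ⟨_, hz, Or.inr (Or.inl ⟨Sum.inl 0, ?_⟩)⟩
        rcases h with rfl | rfl <;> simp [coreP1]
      · exact ⟨_, hz, Or.inr (Or.inl (hrun 2 w _ (by simp) hw1 hw2 (by simp; omega)))⟩

theorem case2 (m n K : ℕ) (hm : Odd m) (hn : Odd n) (h3 : 3 ≤ m) (hmn : m ≤ n)
    (hK : n = 4 * K + 15) : HW (lexCycle m n) m n 2 (n - 2) := by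
  have c2 : Nat.Coprime 2 n := (Nat.coprime_two_left).2 hn
  have c4 : Nat.Coprime 4 n := Nat.Coprime.pow_left 2 c2
  have hD : ∀ j : Fin 4 ⊕ Fin (2 * K), Nat.Coprime (Sum.elim coreD2 (fun _ => 1) j) n := by
    rintro (j | j)
    · fin_cases j
      · exact Nat.coprime_one_left n
      · exact c2
      · exact c2
      · exact c4
    · exact Nat.coprime_one_left n
  apply assembleZ m n hm hn h3 hmn ![0, -6, -2] 4 c4 (J := Fin 4 ⊕ Fin (2 * K))
    (Sum.elim coreP2 (runP K)) (Sum.elim coreD2 (fun _ => 1)) hD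
    ![0, -4, 10] ![0, 12, 0] (by simp; omega)
  have hrun : ∀ (c : Fin 3) (w : ℤ) (k : ℕ)
    (_ : if c = 2 then k = 2 * K + 1 else k = 2 * K) (_ : -(k : ℤ) ≤ w) (_ : w < k)
    (_ : c = 2 → w ≠ 0 ∧ w ≠ -1),
      (∃ j, 2 * w + 1 = Sum.elim coreP2 (runP K) j (c + 1) - Sum.elim coreP2 (runP K) j c + (Sum.elim coreD2 (fun _ => 1) j : ℕ)
        ∨ 2 * w + 1 = Sum.elim coreP2 (runP K) j (c + 1) - Sum.elim coreP2 (runP K) j c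
          - (Sum.elim coreD2 (fun _ => 1) j : ℕ)) := by
    intro c w k a1 a2 a3 a4
    obtain ⟨j, h⟩ := run_cov K c w k a1 a2 a3 a4
    exact ⟨Sum.inr j, h⟩
  intro c s
  fin_cases c
  · obtain ⟨z, hz, ⟨w, rfl, hw1, hw2⟩ | ⟨w, rfl, hw1, hw2⟩⟩ := rep n 7 (2 * K) (by omega) s
    · refine ⟨_, hz, ?_⟩
      clear hz
      simp only [Sum.exists]
      rw [or_assoc]
      push_cast at hw1 hw2
      interval_cases w <;> simp [coreP2, coreD2, Fin.exists_fin_succ]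
    · exact ⟨_, hz, Or.inr (Or.inl (hrun 0 w _ (by simp) hw1 hw2 (by simp)))⟩
  · obtain ⟨z, hz, ⟨w, rfl, hw1, hw2⟩ | ⟨w, rfl, hw1, hw2⟩⟩ := rep n 7 (2 * K) (by omega) s
    · refine ⟨_, hz, ?_⟩
      clear hz
      simp only [Sum.exists]
      rw [or_assoc]
      push_cast at hw1 hw2
      interval_cases w <;> simp [coreP2, coreD2, Fin.exists_fin_succ]
    · exact ⟨_, hz, Or.inr (Or.inl (hrun 1 w _ (by simp) hw1 hw2 (by simp)))⟩
  · obtain ⟨z, hz, ⟨w, rfl, hw1, hw2⟩ | ⟨w, rfl, hw1, hw2⟩⟩ := rep n 6 (2 * K + 1) (by omega) s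
    · refine ⟨_, hz, ?_⟩
      clear hz
      simp only [Sum.exists]
      rw [or_assoc]
      push_cast at hw1 hw2
      interval_cases w <;> simp [coreP2, coreD2, Fin.exists_fin_succ]
    · by_cases h : w = 0 ∨ w = -1
      · refine ⟨_, hz, Or.inr (Or.inl ⟨Sum.inl 0, ?_⟩)⟩
        rcases h with rfl | rfl <;> simp [coreP2, coreD2, Fin.exists_fin_succ]
      · exact ⟨_, hz, Or.inr (Or.inl (hrun 2 w _ (by simp) hw1 hw2 (by simp; omega)))⟩

theorem stmt9 (m n : ℕ) (hm : Odd m) (hn : Odd n) (h3 : 3 ≤ m) (hmn : m ≤ n)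
    (h9 : 9 ≤ n) (h6 : n % 6 = 3) :
    HW (lexCycle m n) m n 2 (n - 2) := by
  obtain ⟨b, hb⟩ := id hn
  by_cases h : n % 4 = 1
  · exact case1 m n ((n - 9) / 4) hm hn h3 hmn (by omega)
  · exact case2 m n ((n - 15) / 4) hm hn h3 hmn (by omega)
end

section
/- Let k ≥ 3 and t ≥ 1. If a k-ARCS(2kt+1) exists, then the Cayley graph Cay(Z_k × Z_{2kt+1}, ({0} × (Z_{2kt+1} \ {0})) ∪ ({1, −1} × {0})) can be decomposed into kt+1 C_k-factors. -/
open SimpleGraph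

def liftG (k : ℕ) {W : Type*} (G : SimpleGraph W) : SimpleGraph (ZMod k × W) where
  Adj a b := (a.1 = b.1 ∧ G.Adj a.2 b.2) ∨
    (a.2 = b.2 ∧ a.2 ∉ G.support ∧ a.1 ≠ b.1 ∧ (a.1 - b.1 = 1 ∨ b.1 - a.1 = 1))
  symm := ⟨by
    rintro a b (⟨h1, h2⟩ | ⟨h1, h2, h3, h4⟩)
    · exact Or.inl ⟨h1.symm, h2.symm⟩
    · exact Or.inr ⟨h1.symm, h1 ▸ h2, h3.symm, h4.symm⟩⟩
  loopless := ⟨by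
    rintro a (⟨_, h2⟩ | ⟨_, _, h3, _⟩)
    · exact G.loopless.irrefl _ h2
    · exact h3 rfl⟩

theorem liftG_adj (k : ℕ) {W : Type*} (G : SimpleGraph W) (a b : ZMod k × W) :
    (liftG k G).Adj a b ↔ (a.1 = b.1 ∧ G.Adj a.2 b.2) ∨
    (a.2 = b.2 ∧ a.2 ∉ G.support ∧ a.1 ≠ b.1 ∧ (a.1 - b.1 = 1 ∨ b.1 - a.1 = 1)) := Iff.rfl

theorem liftG_reach_inv (k : ℕ) {W : Type*} (G : SimpleGraph W) {a b : ZMod k × W}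
    (h : (liftG k G).Reachable a b) (ha : a.2 ∈ G.support) :
    a.1 = b.1 ∧ G.Reachable a.2 b.2 := by
  obtain ⟨p⟩ := h
  induction p with
  | nil => exact ⟨rfl, Reachable.refl _⟩
  | cons hadj p ih =>
    rcases hadj with ⟨h1, h2⟩ | ⟨h1, h2, h3, h4⟩
    · have := ih ⟨_, h2.symm⟩
      exact ⟨h1.trans this.1, h2.reachable.trans this.2⟩
    · exact absurd ha h2

theorem liftG_reach_inv2 (k : ℕ) {W : Type*} (G : SimpleGraph W) {a b : ZMod k × W}
    (h : (liftG k G).Reachable a b) (ha : a.2 ∉ G.support) :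
    a.2 = b.2 := by
  obtain ⟨p⟩ := h
  induction p with
  | nil => rfl
  | cons hadj p ih =>
    rcases hadj with ⟨h1, h2⟩ | ⟨h1, h2, h3, h4⟩
    · exact absurd ⟨_, h2⟩ ha
    · rw [h1]; exact ih (h1 ▸ ha)

theorem one_ne_zero_zmod (k : ℕ) (hk : 3 ≤ k) : (1 : ZMod k) ≠ 0 := by
  have : Fact (1 < k) := ⟨by omega⟩
  exact one_ne_zero

theorem two_ne_zero_zmod (k : ℕ) (hk : 3 ≤ k) : (2 : ZMod k) ≠ 0 := by
  intro h
  have : ((2 : ℕ) : ZMod k) = 0 := by exact_mod_cast h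
  rw [ZMod.natCast_eq_zero_iff] at this
  have := Nat.le_of_dvd (by norm_num) this
  omega

theorem liftG_factor (k : ℕ) (hk : 3 ≤ k) {W : Type*} (G : SimpleGraph W)
    (h2 : ∀ v ∈ G.support, (G.neighborSet v).ncard = 2)
    (hc : ∀ v ∈ G.support, {w | G.Reachable v w}.ncard = k) :
    (∀ v, ((liftG k G).neighborSet v).ncard = 2) ∧
    ∀ v, {w | (liftG k G).Reachable v w}.ncard = k := by
  have h10 := one_ne_zero_zmod k hk
  have h20 := two_ne_zero_zmod k hk
  have : NeZero k := ⟨by omega⟩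
  constructor
  · rintro ⟨i, x⟩
    by_cases hx : x ∈ G.support
    · rw [← h2 x hx, ← Set.ncard_image_of_injective (G.neighborSet x) (Prod.mk_right_injective i)]
      congr 1
      ext ⟨j, y⟩
      simp only [mem_neighborSet, liftG_adj, Set.mem_image, Prod.mk.injEq]
      constructor
      · rintro (⟨a, b⟩ | ⟨_, b, _⟩)
        · exact ⟨y, b, a, rfl⟩
        · exact absurd hx b
      · rintro ⟨z, b, a, rfl⟩
        exact Or.inl ⟨a, b⟩
    · have : (liftG k G).neighborSet (i, x) = {(i + 1, x), (i - 1, x)} := by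
        ext ⟨j, y⟩
        simp only [mem_neighborSet, liftG_adj, Set.mem_insert_iff, Set.mem_singleton_iff,
          Prod.mk.injEq]
        constructor
        · rintro (⟨_, b⟩ | ⟨a, _, _, c | c⟩)
          · exact absurd ⟨_, b⟩ hx
          · exact Or.inr ⟨by rw [← c]; ring, a.symm⟩
          · exact Or.inl ⟨by rw [← c]; ring, a.symm⟩
        · rintro (⟨rfl, rfl⟩ | ⟨rfl, rfl⟩)
          · exact Or.inr ⟨rfl, hx, by simpa using h10, Or.inr (by ring)⟩
          · refine Or.inr ⟨rfl, hx, ?_, Or.inl (by ring)⟩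
            intro h
            exact h10 (by linear_combination h)
      rw [this, Set.ncard_pair]
      intro h
      have := (Prod.mk.inj h).1
      exact h20 (by linear_combination this)
  · rintro ⟨i, x⟩
    by_cases hx : x ∈ G.support
    · refine Eq.trans ?_ (hc x hx)
      rw [← Set.ncard_image_of_injective {w | G.Reachable x w} (Prod.mk_right_injective i)]
      congr 1
      ext ⟨j, y⟩
      simp only [Set.mem_ofPred_eq, Set.mem_image, Prod.mk.injEq]
      constructor
      · intro h
        have := liftG_reach_inv k G h hx
        exact ⟨y, this.2, this.1, rfl⟩
      · rintro ⟨z, b, rfl, rfl⟩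
        let f : G →g liftG k G := ⟨fun y => (i, y), fun h => Or.inl ⟨rfl, h⟩⟩
        exact b.map f
    · have hn : ∀ n : ℕ, (liftG k G).Reachable (i, x) (i + n, x) := by
        intro n
        induction n with
        | zero => simp
        | succ n ih =>
          refine ih.trans (Adj.reachable (Or.inr ⟨rfl, hx, ?_, Or.inr ?_⟩))
          · intro h
            push_cast at h
            exact h10 (by linear_combination -h)
          · push_cast; ring
      have : {w | (liftG k G).Reachable (i, x) w} = (fun j => (j, x)) '' (Set.univ : Set (ZMod k)) := by
        ext ⟨j, y⟩
        simp only [Set.mem_ofPred_eq, Set.mem_image, Prod.mk.injEq, Set.mem_univ, true_and]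
        constructor
        · intro h
          exact ⟨j, rfl, liftG_reach_inv2 k G h hx⟩
        · rintro ⟨j, rfl, rfl⟩
          have := hn (j - i).val
          rw [ZMod.natCast_zmod_val] at this
          simpa using this
      rw [this, Set.ncard_image_of_injective _ (Prod.mk_left_injective x), Set.ncard_univ]
      simp

theorem unique_missing {W ι : Type*} [Fintype W] [Fintype ι] (G : ι → SimpleGraph W)
    (hd : IsDecomp ⊤ G) (h2 : ∀ i, ∀ v ∈ (G i).support, ((G i).neighborSet v).ncard = 2)
    (hcard : Fintype.card W + 1 = 2 * Fintype.card ι) (x : W) :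
    ∃! i, x ∉ (G i).support := by
  classical
  have e1 : (Finset.univ.erase x) = Finset.univ.biUnion (fun i => (G i).neighborFinset x) := by
    ext y
    have := hd.2 s(x, y)
    simp only [mem_edgeSet, top_adj] at this
    simp [← this, eq_comm]
  have e2 := congrArg Finset.card e1
  rw [Finset.card_biUnion, Finset.card_erase_of_mem (Finset.mem_univ _), Finset.card_univ] at e2
  · have e3 : ∀ i, ((G i).neighborFinset x).card = if x ∈ (G i).support then 2 else 0 := by
      intro i
      split_ifs with h
      · rw [← h2 i x h, ← Set.ncard_coe_finset, coe_neighborFinset]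
      · rw [Finset.card_eq_zero, Finset.eq_empty_iff_forall_notMem]
        intro y hy
        exact h ⟨y, by simpa using hy⟩
    simp only [e3] at e2
    rw [← Finset.sum_filter, Finset.sum_const, smul_eq_mul] at e2
    have e4 := Finset.card_filter_add_card_filter_not (s := (Finset.univ : Finset ι)) (fun i => x ∈ (G i).support)
    rw [Finset.card_univ] at e4
    have hpos : 0 < Fintype.card W := Fintype.card_pos_iff.2 ⟨x⟩
    have e5 : (Finset.univ.filter (fun i => x ∉ (G i).support)).card = 1 := by omega
    obtain ⟨i, hi⟩ := Finset.card_eq_one.1 e5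
    refine ⟨i, ?_, fun j hj => ?_⟩
    · have : i ∈ (Finset.univ.filter (fun i => x ∉ (G i).support)) := hi ▸ Finset.mem_singleton_self i
      exact (Finset.mem_filter.1 this).2
    · have : j ∈ (Finset.univ.filter (fun i => x ∉ (G i).support)) := Finset.mem_filter.2 ⟨Finset.mem_univ _, hj⟩
      rw [hi] at this
      exact Finset.mem_singleton.1 this
  · intro i _ j _ hij
    rw [Function.onFun, Finset.disjoint_left]
    intro y h1 h2
    exact (Set.disjoint_left.1 (hd.1 hij)) (show s(x, y) ∈ (G i).edgeSet by simpa using h1) (by simpa using h2)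

theorem lift_decomp (k : ℕ) {W ι : Type*} (G : ι → SimpleGraph W)
    (hd : IsDecomp ⊤ G) (hu : ∀ x, ∃! i, x ∉ (G i).support)
    (H : SimpleGraph (ZMod k × W))
    (hH : ∀ a b, H.Adj a b ↔ (a.1 = b.1 ∧ a.2 ≠ b.2) ∨
      (a.2 = b.2 ∧ a.1 ≠ b.1 ∧ (a.1 - b.1 = 1 ∨ b.1 - a.1 = 1))) :
    IsDecomp H (fun i => liftG k (G i)) := by
  constructor
  · intro i j hij
    rw [Set.disjoint_left]
    intro e
    induction e using Sym2.ind with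
    | _ a b =>
    rintro (⟨h1, h2⟩ | ⟨h1, h2, h3, h4⟩) (⟨g1, g2⟩ | ⟨g1, g2, g3, g4⟩)
    · exact (Set.disjoint_left.1 (hd.1 hij)) (show s(a.2, b.2) ∈ (G i).edgeSet from h2) g2
    · exact g3 h1
    · exact h3 g1
    · exact hij ((hu _).unique h2 g2)
  · intro e
    induction e using Sym2.ind with
    | _ a b =>
    simp only [mem_edgeSet, hH, liftG_adj]
    constructor
    · rintro (⟨h1, h2⟩ | ⟨h1, h3, h4⟩)
      · obtain ⟨i, hi⟩ := (hd.2 s(a.2, b.2)).1 h2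
        exact ⟨i, Or.inl ⟨h1, hi⟩⟩
      · obtain ⟨i, hi, _⟩ := hu a.2
        exact ⟨i, Or.inr ⟨h1, hi, h3, h4⟩⟩
    · rintro ⟨i, ⟨h1, h2⟩ | ⟨h1, h2, h3, h4⟩⟩
      · exact Or.inl ⟨h1, h2.ne⟩
      · exact Or.inr ⟨h1, h3, h4⟩

theorem cayley_adj_iff (k : ℕ) {W : Type*} [AddCommGroup W] (a b : ZMod k × W) :
    (cayley {p : ZMod k × W |
          (p.1 = 0 ∧ p.2 ≠ 0) ∨ ((p.1 = 1 ∨ p.1 = -1) ∧ p.2 = 0)}).Adj a b ↔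
    (a.1 = b.1 ∧ a.2 ≠ b.2) ∨
      (a.2 = b.2 ∧ a.1 ≠ b.1 ∧ (a.1 - b.1 = 1 ∨ b.1 - a.1 = 1)) := by
  obtain ⟨i, x⟩ := a
  obtain ⟨j, y⟩ := b
  have e1 : i - j = -1 ↔ j - i = 1 := by rw [← neg_sub j i, neg_inj]
  have e2 : j - i = -1 ↔ i - j = 1 := by rw [← neg_sub i j, neg_inj]
  simp only [cayley, fromRel_adj, Set.mem_ofPred_eq, Prod.fst_sub, Prod.snd_sub, sub_eq_zero,
    e1, e2, ne_eq, Prod.mk.injEq, eq_comm (a := j) (b := i), eq_comm (a := y) (b := x)]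
  tauto

theorem stmt11 (k t : ℕ) (hk : 3 ≤ k) (ht : 1 ≤ t)
    (h : IsARCS k (2 * k * t + 1)) :
    ∃ F : Fin (k * t + 1) → SimpleGraph (ZMod k × ZMod (2 * k * t + 1)),
      (∀ i, IsCycleFactor
        (cayley {p : ZMod k × ZMod (2 * k * t + 1) |
          (p.1 = 0 ∧ p.2 ≠ 0) ∨ ((p.1 = 1 ∨ p.1 = -1) ∧ p.2 = 0)}) (F i) k) ∧
      IsDecomp
        (cayley {p : ZMod k × ZMod (2 * k * t + 1) |
          (p.1 = 0 ∧ p.2 ≠ 0) ∨ ((p.1 = 1 ∨ p.1 = -1) ∧ p.2 = 0)}) F := by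
  obtain ⟨G, hG1, hG2, hd⟩ := h
  have hdiv : (2 * k * t + 1 - 1) / 2 = k * t := by
    rw [Nat.add_sub_cancel, mul_assoc, Nat.mul_div_cancel_left _ (by norm_num)]
  have hcl : ∀ s, (∀ v ∈ (G s).support, ((G s).neighborSet v).ncard = 2) ∧
      (∀ v ∈ (G s).support, {w | (G s).Reachable v w}.ncard = k) := by
    rintro (i | j)
    · exact ⟨(hG1 i).2.1, (hG1 i).2.2.1⟩
    · exact ⟨(hG2 j).2.1, (hG2 j).2.2.1⟩
  have hu := unique_missing G hd (fun i => (hcl i).1) (by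
    simp only [Fintype.card_fin, Fintype.card_sum, Fintype.card_unit, hdiv]; ring)
  let e : Fin (k * t + 1) ≃ Fin ((2 * k * t + 1 - 1) / 2) ⊕ Unit :=
    Fintype.equivOfCardEq (by
      simp only [Fintype.card_fin, Fintype.card_sum, Fintype.card_unit, hdiv])
  have key := lift_decomp k (W := ZMod (2 * k * t + 1)) G hd hu _ (cayley_adj_iff k)
  refine ⟨fun i => liftG k (W := ZMod (2 * k * t + 1)) (G (e i)), fun i => ?_, ?_, ?_⟩
  · refine ⟨?_, liftG_factor k hk (W := ZMod (2 * k * t + 1)) (G (e i)) (hcl _).1 (hcl _).2⟩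
    rw [← edgeSet_subset_edgeSet]
    intro s hs
    exact (key.2 s).2 ⟨e i, hs⟩
  · intro i j hij
    exact key.1 (e.injective.ne hij)
  · intro s
    rw [key.2 s]
    exact (e.surjective.exists (p := fun i => s ∈ (liftG k (W := ZMod (2 * k * t + 1)) (G i)).edgeSet))
end
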